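/- arXiv:2006.00240 — 2 statements merged into one kernel-verified Lean document; each statement's English description precedes it below -/
import Mathlib

section
/- Let n ≥ 1, β ∈ (0,n) ∪ (n,∞), and let φ be a Young function satisfying C_β := sup_{t>0} (t^β/φ(t)) ∫_0^t φ(s) s^{-β-1} ds < ∞. If Ω ⊂ ℝⁿ is an Ahlfors n-regular domain, then Ω is a Ẇ^{β,φ}-extension domain: there exist a constant C > 0 and a linear operator E from Ẇ^{β,φ}(Ω) to Ẇ^{β,φ}(ℝⁿ) such that Eu = u almost everywhere on Ω and ‖Eu‖_{Ẇ^{β,φ}(ℝⁿ)} ≤ C ‖u‖_{Ẇ^{β,φ}(Ω)} for all u ∈ Ẇ^{β,φ}(Ω). -/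
/-!
The extension of `u` is `u` itself on `Ω`, whose boundary is a null set by Ahlfors regularity and
the Lebesgue density theorem. At a point `y` at distance `d(y) > 0` from `Ω` it is an average of `u`
over points `z ∈ Ω` with `|y - z| < 3 d(y)`, with respect to a kernel `p(y, z)` that takes the role
of the Whitney cubes and their reflected quasi-cubes of bounded overlap.

To obtain bounded overlap, `z` carries a load: the integral of `d(y)^{-n}` over the points `y` at
scale up to `r` that could use `z`. The kernel is cut off where the load of `z` at scale `d(y)`
exceeds a large constant.
* The load is bounded on average, so by Chebyshev's inequality and Ahlfors regularity the cut-off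
  leaves a mass of at least `c d(y)^n`.
* The cut-off itself gives the overlap bound `∫ p(y, z) dy ≤ C`.
* The load is Lipschitz in `log r`, so `p` is Lipschitz at Whitney scale.
* At distances beyond the diameter of `Ω` the kernel, hence the extension, is constant.

The modular of the extension is estimated separately over different kinds of pairs of points. Over
pairs in `Ω` it is the modular of `u`. For a pair with one point in `Ω`, and for two points off the
closure whose distance is at least comparable to their distances to `Ω`, Jensen's inequality moves
`φ` inside the averages, `|x - y|` is comparable from below to the distance of the points averaged
over, and the overlap bound integrates the kernel. For two points `x`, `y` with `|x - y| < d(x) / 2`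
the extension has a Lipschitz bound `|x - y| / d(x)` times the mean oscillation of `u` on
`B(x, 5 d(x)) ∩ Ω`; the condition `C_β < ∞` says exactly that such a profile has modular at most
`C d(x)^{-β}` times `φ` of the oscillation.

Finally, `φ(t / B) ≤ φ(t) / B` for `B ≥ 1` turns the modular bound into the bound of the seminorms.
-/

open MeasureTheory Metric Set Filter
open scoped ENNReal NNReal Topology Classical

noncomputable section

/-- `φ` is a Young function: convex, continuous on `[0,∞)`, `φ(0)=0`, `φ(t)>0` for `t>0`. -/
def IsYoung (φ : ℝ → ℝ) : Prop :=
  ContinuousOn φ (Set.Ici 0) ∧ ConvexOn ℝ (Set.Ici 0) φ ∧ φ 0 = 0 ∧ ∀ t > 0, 0 < φ t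

/-- `φ` is doubling with constant `K > 1`: `φ(2t) ≤ K φ(t)` for all `t > 0`. -/
def IsDoubling (φ : ℝ → ℝ) (K : ℝ) : Prop :=
  1 < K ∧ ∀ t > 0, φ (2 * t) ≤ K * φ t

/-- The (generalized) inverse of a Young function. -/
def yInv (φ : ℝ → ℝ) (y : ℝ) : ℝ :=
  sInf {t : ℝ | 0 ≤ t ∧ y ≤ φ t}

/-- `sup_{t>0} (t^β/φ(t)) ∫_0^t φ(s) s^{-β-1} ds ≤ M`. -/
def CbetaLE (β : ℝ) (φ : ℝ → ℝ) (M : ℝ) : Prop :=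
  ∀ t > 0,
    ENNReal.ofReal (t ^ β / φ t) *
        (∫⁻ s in Set.Ioc (0 : ℝ) t, ENNReal.ofReal (φ s / s ^ (β + 1))) ≤
      ENNReal.ofReal M

/-- The condition `C_β := sup_{t>0} (t^β/φ(t)) ∫_0^t φ(s) s^{-β-1} ds < ∞`. -/
def CbetaFinite (β : ℝ) (φ : ℝ → ℝ) : Prop :=
  ∃ M : ℝ, CbetaLE β φ M

/-- The double integral `∫_Ω ∫_Ω φ(|u(x)-u(y)|/λ) |x-y|^{-n-β} dx dy`. -/
def fracIntegral (n : ℕ) (β : ℝ) (φ : ℝ → ℝ) (Ω : Set (EuclideanSpace ℝ (Fin n)))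
    (u : EuclideanSpace ℝ (Fin n) → ℝ) (lam : ℝ) : ℝ≥0∞ :=
  ∫⁻ x in Ω, ∫⁻ y in Ω,
    ENNReal.ofReal (φ (|u x - u y| / lam) / dist x y ^ ((n : ℝ) + β))

/-- The fractional Orlicz–Sobolev (Luxemburg-type) seminorm `‖u‖_{Ẇ^{β,φ}(Ω)}`,
valued in `[0,∞]` (it is `∞` iff no admissible `λ` exists). -/
def fracNorm (n : ℕ) (β : ℝ) (φ : ℝ → ℝ) (Ω : Set (EuclideanSpace ℝ (Fin n)))
    (u : EuclideanSpace ℝ (Fin n) → ℝ) : ℝ≥0∞ :=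
  sInf {lam : ℝ≥0∞ | 0 < lam ∧ lam ≠ ∞ ∧ fracIntegral n β φ Ω u lam.toReal ≤ 1}

/-- `u ∈ Ẇ^{β,φ}(Ω)` : locally integrable on `Ω` with finite seminorm. -/
def MemW (n : ℕ) (β : ℝ) (φ : ℝ → ℝ) (Ω : Set (EuclideanSpace ℝ (Fin n)))
    (u : EuclideanSpace ℝ (Fin n) → ℝ) : Prop :=
  LocallyIntegrableOn u Ω ∧ fracNorm n β φ Ω u ≠ ∞

/-- The Orlicz (Luxemburg) norm `‖u‖_{L^ψ(Ω)}`, valued in `[0,∞]`. -/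
def luxNorm (n : ℕ) (ψ : ℝ → ℝ) (Ω : Set (EuclideanSpace ℝ (Fin n)))
    (u : EuclideanSpace ℝ (Fin n) → ℝ) : ℝ≥0∞ :=
  sInf {lam : ℝ≥0∞ | 0 < lam ∧ lam ≠ ∞ ∧
    (∫⁻ x in Ω, ENNReal.ofReal (ψ (|u x| / lam.toReal))) ≤ 1}

/-- `Ω` is Ahlfors `n`-regular: `|B(x,r) ∩ Ω| ≥ θ rⁿ` for all `x ∈ Ω`, `0 < r < 2 diam Ω`. -/
def AhlforsRegular (n : ℕ) (Ω : Set (EuclideanSpace ℝ (Fin n))) : Prop :=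
  ∃ θ > (0 : ℝ), ∀ x ∈ Ω, ∀ r : ℝ, 0 < r → ENNReal.ofReal r < 2 * EMetric.diam Ω →
    ENNReal.ofReal (θ * r ^ n) ≤ volume (Metric.ball x r ∩ Ω)

/-- `Ω` is a `Ẇ^{β,φ}`-extension domain: there are `C > 0` and a linear operator `E`
from `Ẇ^{β,φ}(Ω)` to `Ẇ^{β,φ}(ℝⁿ)` with `Eu = u` a.e. on `Ω` and
`‖Eu‖_{Ẇ^{β,φ}(ℝⁿ)} ≤ C ‖u‖_{Ẇ^{β,φ}(Ω)}`. -/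
def IsExtensionDomain (n : ℕ) (β : ℝ) (φ : ℝ → ℝ)
    (Ω : Set (EuclideanSpace ℝ (Fin n))) : Prop :=
  ∃ C > (0 : ℝ), ∃ E : (EuclideanSpace ℝ (Fin n) → ℝ) → (EuclideanSpace ℝ (Fin n) → ℝ),
    (∀ u v, MemW n β φ Ω u → MemW n β φ Ω v → E (u + v) = E u + E v) ∧
    (∀ (c : ℝ) (u), MemW n β φ Ω u → E (c • u) = c • E u) ∧
    (∀ u, MemW n β φ Ω u →
      MemW n β φ Set.univ (E u) ∧
      (∀ᵐ x ∂(volume.restrict Ω), E u x = u x) ∧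
      fracNorm n β φ Set.univ (E u) ≤ ENNReal.ofReal C * fracNorm n β φ Ω u)

end

/-! ### Young functions -/

namespace IsYoung

variable {φ : ℝ → ℝ}

lemma apply_nonneg (hφ : IsYoung φ) {t : ℝ} (ht : 0 ≤ t) : 0 ≤ φ t := by
  rcases ht.eq_or_lt with rfl | ht
  · exact hφ.2.2.1.ge
  · exact (hφ.2.2.2 t ht).le

lemma apply_mul_le (hφ : IsYoung φ) {a t : ℝ} (ha₀ : 0 ≤ a) (ha₁ : a ≤ 1) (ht : 0 ≤ t) :
    φ (a * t) ≤ a * φ t := by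
  have := hφ.2.1.2 (x := t) ht (y := 0) (by simp) ha₀ (sub_nonneg.2 ha₁) (by ring)
  simpa [hφ.2.2.1] using this

lemma monotoneOn (hφ : IsYoung φ) : MonotoneOn φ (Ici 0) := by
  intro s (hs : 0 ≤ s) t (ht : 0 ≤ t) hst
  rcases ht.eq_or_lt with rfl | ht'
  · rw [le_antisymm hst hs]
  have hst' : s / t ≤ 1 := (div_le_one ht').2 hst
  calc φ s = φ (s / t * t) := by rw [div_mul_cancel₀ _ ht'.ne']
    _ ≤ s / t * φ t := hφ.apply_mul_le (by positivity) hst' ht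
    _ ≤ φ t := mul_le_of_le_one_left (hφ.apply_nonneg ht) hst'

lemma convexOn_comp_abs (hφ : IsYoung φ) : ConvexOn ℝ univ fun t => φ |t| := by
  refine ⟨convex_univ, fun x _ y _ a b ha hb hab => ?_⟩
  have habs : |a • x + b • y| ≤ a • |x| + b • |y| := by
    simpa [abs_mul, abs_of_nonneg, ha, hb] using abs_add_le (a * x) (b * y)
  exact (hφ.monotoneOn (mem_Ici.2 (abs_nonneg _)) ((abs_nonneg _).trans habs) habs).trans
    (hφ.2.1.2 (mem_Ici.2 (abs_nonneg x)) (mem_Ici.2 (abs_nonneg y)) ha hb hab)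

lemma continuous_comp_abs (hφ : IsYoung φ) : Continuous fun t => φ |t| :=
  hφ.1.comp_continuous continuous_abs fun _ => mem_Ici.2 (abs_nonneg _)

lemma le_one_add_div (hφ : IsYoung φ) {t : ℝ} (ht : 0 ≤ t) : t ≤ 1 + φ t / φ 1 := by
  have hφ₁ : 0 < φ 1 := hφ.2.2.2 1 one_pos
  rcases le_total t 1 with h | h
  · have := div_nonneg (hφ.apply_nonneg ht) hφ₁.le
    linarith
  · have ht₀ : 0 < t := by linarith
    have h1 := hφ.apply_mul_le (by positivity) (inv_le_one_of_one_le₀ h) ht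
    rw [inv_mul_cancel₀ ht₀.ne', inv_mul_eq_div, le_div_iff₀ ht₀, mul_comm] at h1
    linarith [(le_div_iff₀ hφ₁).2 h1]

end IsYoung

namespace AhlforsExt

section EvenYoung

variable {φ : ℝ → ℝ}

/-- The even extension `t ↦ φ(|t|)` of a Young function, with values in `[0, ∞]`. -/
noncomputable def evenYoung (φ : ℝ → ℝ) (t : ℝ) : ℝ≥0∞ :=
  ENNReal.ofReal (φ |t|)

lemma evenYoung_zero (hφ : IsYoung φ) : evenYoung φ 0 = 0 := by
  simp [evenYoung, hφ.2.2.1]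

lemma evenYoung_neg (t : ℝ) : evenYoung φ (-t) = evenYoung φ t := by
  rw [evenYoung, abs_neg, evenYoung]

lemma evenYoung_sub_comm (s t : ℝ) : evenYoung φ (s - t) = evenYoung φ (t - s) := by
  rw [← evenYoung_neg, neg_sub]

lemma evenYoung_mono (hφ : IsYoung φ) {s t : ℝ} (h : |s| ≤ |t|) :
    evenYoung φ s ≤ evenYoung φ t :=
  ENNReal.ofReal_le_ofReal (hφ.monotoneOn (abs_nonneg s) (abs_nonneg t) h)

lemma evenYoung_mul_le (hφ : IsYoung φ) {a : ℝ} (ha₀ : 0 ≤ a) (ha₁ : a ≤ 1) (t : ℝ) :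
    evenYoung φ (a * t) ≤ ENNReal.ofReal a * evenYoung φ t := by
  rw [evenYoung, evenYoung, ← ENNReal.ofReal_mul ha₀, abs_mul, abs_of_nonneg ha₀]
  exact ENNReal.ofReal_le_ofReal (hφ.apply_mul_le ha₀ ha₁ (abs_nonneg t))

lemma evenYoung_div_sub_div_le (hφ : IsYoung φ) {b c : ℝ} (hb : 0 < b) (hbc : b ≤ c) (s t : ℝ) :
    evenYoung φ (s / c - t / c) ≤ evenYoung φ ((s - t) / b) := by
  refine evenYoung_mono hφ ?_
  rw [← sub_div, abs_div, abs_div, abs_of_pos hb, abs_of_pos (hb.trans_le hbc)]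
  gcongr

lemma measurable_evenYoung (hφ : IsYoung φ) : Measurable (evenYoung φ) :=
  hφ.continuous_comp_abs.measurable.ennreal_ofReal

end EvenYoung

section Jensen

variable {X : Type*} [MeasurableSpace X] {φ : ℝ → ℝ}

lemma evenYoung_average_le (hφ : IsYoung φ) {ν : Measure X} [IsFiniteMeasure ν] [NeZero ν]
    {g : X → ℝ} (hg : Integrable g ν) :
    ENNReal.ofReal (ν.real univ) * evenYoung φ (⨍ x, g x ∂ν) ≤ ∫⁻ x, evenYoung φ (g x) ∂ν := by
  have hpos : 0 ≤ᵐ[ν] fun x => φ |g x| := ae_of_all _ fun x => hφ.apply_nonneg (abs_nonneg _)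
  by_cases hφg : Integrable (fun x => φ |g x|) ν
  · have h := hφ.convexOn_comp_abs.map_average_le hφ.continuous_comp_abs.continuousOn isClosed_univ
      (ae_of_all _ fun _ => mem_univ _) hg hφg
    calc ENNReal.ofReal (ν.real univ) * evenYoung φ (⨍ x, g x ∂ν)
        ≤ ENNReal.ofReal (ν.real univ) * ENNReal.ofReal (⨍ x, φ |g x| ∂ν) := by
          gcongr; exact ENNReal.ofReal_le_ofReal h
      _ = ENNReal.ofReal (∫ x, φ |g x| ∂ν) := by
          rw [← ENNReal.ofReal_mul measureReal_nonneg, ← smul_eq_mul, measure_smul_average]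
      _ = ∫⁻ x, evenYoung φ (g x) ∂ν := ofReal_integral_eq_lintegral_ofReal hφg hpos
  · have hm : AEStronglyMeasurable (fun x => φ |g x|) ν :=
      hφ.continuous_comp_abs.comp_aestronglyMeasurable hg.1
    have htop : ∫⁻ x, evenYoung φ (g x) ∂ν = ∞ := by
      by_contra hne
      exact hφg ⟨hm, (hasFiniteIntegral_iff_ofReal hpos).2 (lt_top_iff_ne_top.2 hne)⟩
    exact htop ▸ le_top

/-- Jensen's inequality. A total mass below `1` is allowed because `φ 0 = 0`, and integrability of
`g` is not required because the left-hand side is `0` without it. -/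
lemma evenYoung_integral_le (hφ : IsYoung φ) {ν : Measure X} (hν : ν univ ≤ 1) (g : X → ℝ) :
    evenYoung φ (∫ x, g x ∂ν) ≤ ∫⁻ x, evenYoung φ (g x) ∂ν := by
  by_cases hg : Integrable g ν
  swap
  · simp [integral_undef hg, evenYoung_zero hφ]
  rcases eq_zero_or_neZero ν with rfl | _
  · simp [evenYoung_zero hφ]
  have : IsFiniteMeasure ν := ⟨hν.trans_lt ENNReal.one_lt_top⟩
  have hν' : ν.real univ ≤ 1 := ENNReal.toReal_le_of_le_ofReal zero_le_one (by simpa using hν)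
  rw [← measure_smul_average]
  exact (evenYoung_mul_le hφ measureReal_nonneg hν' _).trans (evenYoung_average_le hφ hg)

lemma evenYoung_integral_mul_le (hφ : IsYoung φ) {μ : Measure X} {p : X → ℝ} (hp : Measurable p)
    (hp₀ : ∀ x, 0 ≤ p x) (hp₁ : ∫⁻ x, ENNReal.ofReal (p x) ∂μ ≤ 1) (g : X → ℝ) :
    evenYoung φ (∫ x, p x * g x ∂μ) ≤ ∫⁻ x, ENNReal.ofReal (p x) * evenYoung φ (g x) ∂μ := by
  have hν : (μ.withDensity fun x => ENNReal.ofReal (p x)) univ ≤ 1 := by simpa using hp₁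
  have hintegral : ∫ x, g x ∂(μ.withDensity fun x => ENNReal.ofReal (p x)) = ∫ x, p x * g x ∂μ := by
    rw [integral_withDensity_eq_integral_toReal_smul hp.ennreal_ofReal (by simp)]
    simp [ENNReal.toReal_ofReal (hp₀ _)]
  rw [← hintegral]
  exact (evenYoung_integral_le hφ hν g).trans
    (lintegral_withDensity_le_lintegral_mul μ hp.ennreal_ofReal _)

end Jensen

/-! ### Upper regular measures -/

lemma setLIntegral_indicator_mul {X : Type*} [MeasurableSpace X] {μ : Measure X} {s t : Set X}
    (hs : MeasurableSet s) (hst : s ⊆ t) (f g : X → ℝ≥0∞) :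
    ∫⁻ x in t, s.indicator f x * g x ∂μ = ∫⁻ x in s, f x * g x ∂μ := by
  simp_rw [← indicator_mul_left s f g]
  rw [setLIntegral_indicator hs, inter_eq_self_of_subset_left hst]

lemma lintegral_Ioi_rpow_of_lt {a c : ℝ} (ha : a < -1) (hc : 0 < c) :
    ∫⁻ t in Ioi c, ENNReal.ofReal (t ^ a) = ENNReal.ofReal (c ^ (a + 1) / -(a + 1)) := by
  rw [← ofReal_integral_eq_lintegral_ofReal (integrableOn_Ioi_rpow_of_lt ha hc),
    integral_Ioi_rpow_of_lt ha hc, neg_div, div_neg]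
  filter_upwards [ae_restrict_mem measurableSet_Ioi] with t ht
  exact Real.rpow_nonneg (hc.trans ht).le _

lemma setLIntegral_Ioc_comp_mul_left (f : ℝ → ℝ≥0∞) {c r : ℝ} (hc : 0 < c) :
    ∫⁻ t in Ioc 0 r, f (c * t) = ENNReal.ofReal c⁻¹ * ∫⁻ s in Ioc 0 (c * r), f s := by
  have hemb : MeasurableEmbedding (c * · : ℝ → ℝ) := measurableEmbedding_mulLeft₀ hc.ne'
  have hpre : Ioc 0 r = (c * ·) ⁻¹' Ioc 0 (c * r) := by
    ext t; simp [hc, mul_div_cancel_left₀ _ hc.ne']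
  rw [hpre, ← hemb.lintegral_map, ← hemb.restrict_map, Real.map_volume_mul_left hc.ne',
    abs_of_pos (inv_pos.2 hc), Measure.restrict_smul, lintegral_smul_measure, smul_eq_mul]

lemma setLIntegral_young_div_rpow_le {φ : ℝ → ℝ} (hφ : IsYoung φ) {β M : ℝ} (hM : CbetaLE β φ M)
    {d S : ℝ} (hd : 0 < d) (hS : 0 < S) :
    ∫⁻ t in Ioc 0 d, ENNReal.ofReal (φ (t / d * S) / t ^ (β + 1)) ≤
      ENNReal.ofReal (d ^ (-β) * M) * ENNReal.ofReal (φ S) := by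
  have hφS : 0 < φ S := hφ.2.2.2 S hS
  have hc : 0 < S / d := by positivity
  set f : ℝ → ℝ≥0∞ := fun s => ENNReal.ofReal (φ s / s ^ (β + 1)) with hf
  have hscale : ∀ t ∈ Ioc 0 d, ENNReal.ofReal (φ (t / d * S) / t ^ (β + 1)) =
      ENNReal.ofReal ((S / d) ^ (β + 1)) * f (S / d * t) := by
    intro t ht
    have ht₀ : 0 < t := ht.1
    rw [hf, ← ENNReal.ofReal_mul (by positivity), Real.mul_rpow hc.le ht₀.le,
      show t / d * S = S / d * t by ring]
    congr 1
    field_simp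
  have hM' : ENNReal.ofReal (S ^ β) * ∫⁻ s in Ioc 0 S, f s ≤
      ENNReal.ofReal M * ENNReal.ofReal (φ S) := by
    have h := hM S hS
    rw [ENNReal.ofReal_div_of_pos hφS, div_eq_mul_inv, mul_right_comm, ← div_eq_mul_inv] at h
    exact (ENNReal.div_le_iff (by simpa using hφS) ENNReal.ofReal_ne_top).1 h
  calc ∫⁻ t in Ioc 0 d, ENNReal.ofReal (φ (t / d * S) / t ^ (β + 1))
      = ENNReal.ofReal ((S / d) ^ (β + 1)) * (ENNReal.ofReal (S / d)⁻¹ * ∫⁻ s in Ioc 0 S, f s) := by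
        rw [setLIntegral_congr_fun measurableSet_Ioc hscale,
          lintegral_const_mul' _ _ ENNReal.ofReal_ne_top, setLIntegral_Ioc_comp_mul_left f hc,
          div_mul_cancel₀ _ hd.ne']
    _ = ENNReal.ofReal (d ^ (-β)) * (ENNReal.ofReal (S ^ β) * ∫⁻ s in Ioc 0 S, f s) := by
        rw [← mul_assoc, ← mul_assoc, ← ENNReal.ofReal_mul (by positivity),
          ← ENNReal.ofReal_mul (by positivity), Real.rpow_add_one hc.ne', mul_assoc,
          mul_inv_cancel₀ hc.ne', mul_one, Real.div_rpow hS.le hd.le, Real.rpow_neg hd.le,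
          div_eq_inv_mul]
    _ ≤ ENNReal.ofReal (d ^ (-β)) * (ENNReal.ofReal M * ENNReal.ofReal (φ S)) := by gcongr
    _ = _ := by rw [← mul_assoc, ← ENNReal.ofReal_mul (by positivity)]

lemma mul_rpow_inv_le_setLIntegral_Ioc {f : ℝ → ℝ≥0∞} {γ ρ : ℝ} (hρ : 0 < ρ) (hγ : 0 ≤ γ + 1)
    (hf : ∀ t, ρ ≤ t → f ρ ≤ f t) :
    f ρ * ENNReal.ofReal (ρ ^ γ)⁻¹ ≤
      ∫⁻ t in Ioc ρ (2 * ρ), f t * ENNReal.ofReal (2 ^ (γ + 1) * (t ^ (γ + 1))⁻¹) := by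
  calc f ρ * ENNReal.ofReal (ρ ^ γ)⁻¹
      = ∫⁻ _ in Ioc ρ (2 * ρ), f ρ * ENNReal.ofReal (2 ^ (γ + 1) * ((2 * ρ) ^ (γ + 1))⁻¹) := by
        rw [setLIntegral_const, Real.volume_Ioc, mul_assoc, ← ENNReal.ofReal_mul (by positivity),
          Real.mul_rpow zero_le_two hρ.le, Real.rpow_add_one hρ.ne']
        congr 2
        field_simp
        ring
    _ ≤ _ := by
        refine setLIntegral_mono' measurableSet_Ioc fun t ht => ?_
        have ht₀ : 0 < t := hρ.trans ht.1
        gcongr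
        · exact hf t ht.1.le
        · exact ht.2

section Riesz

variable {X : Type*} [PseudoMetricSpace X]

/-- The kernel `|x - y|^{-γ}` of the seminorm, with value `0` on the diagonal when `γ ≠ 0`. -/
noncomputable def riesz (γ : ℝ) (x y : X) : ℝ≥0∞ :=
  ENNReal.ofReal (dist x y ^ γ)⁻¹

lemma riesz_comm (γ : ℝ) (x y : X) : riesz γ x y = riesz γ y x := by
  rw [riesz, dist_comm, riesz]

lemma riesz_le_of_dist_le {γ K : ℝ} (hγ : 0 ≤ γ) (hK : 0 ≤ K) {x y z w : X} (hzw : 0 < dist z w)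
    (h : dist z w ≤ K * dist x y) :
    riesz γ x y ≤ ENNReal.ofReal (K ^ γ) * riesz γ z w := by
  have hxy : 0 < dist x y := by
    by_contra hxy
    nlinarith [dist_nonneg (x := x) (y := y)]
  rw [riesz, riesz, ← ENNReal.ofReal_mul (by positivity)]
  refine ENNReal.ofReal_le_ofReal ?_
  rw [← div_eq_mul_inv, le_div_iff₀ (by positivity), inv_mul_le_iff₀ (by positivity), mul_comm,
    ← Real.mul_rpow hK dist_nonneg]
  gcongr

lemma measurable_riesz [MeasurableSpace X] [OpensMeasurableSpace X] [SecondCountableTopology X]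
    (γ : ℝ) : Measurable fun q : X × X => riesz γ q.1 q.2 := by
  unfold riesz
  fun_prop

end Riesz

section UpperRegular

variable {X : Type*} [PseudoMetricSpace X] [MeasurableSpace X] {μ : Measure X} {Q V : ℝ}

/-- Upper Ahlfors regularity of dimension `Q` with constant `V > 0`. -/
structure UpperRegular (μ : Measure X) (Q V : ℝ) : Prop where
  const_pos : 0 < V
  measure_ball_le : ∀ (x : X) {r : ℝ}, 0 < r → μ (ball x r) ≤ ENNReal.ofReal (V * r ^ Q)

lemma UpperRegular.lintegral_comp_dist_le [OpensMeasurableSpace X] [SFinite μ]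
    (hμ : UpperRegular μ Q V) {g h : ℝ → ℝ≥0∞} (hh : Measurable h)
    (hgh : ∀ ρ, 0 ≤ ρ → g ρ ≤ ∫⁻ t in Ioi ρ, h t) (x : X) :
    ∫⁻ y, g (dist x y) ∂μ ≤ ∫⁻ t in Ioi (0 : ℝ), h t * ENNReal.ofReal (V * t ^ Q) := by
  have hm : Measurable fun q : X × ℝ => (Ioi (dist x q.1)).indicator h q.2 :=
    (hh.comp measurable_snd).indicator (measurableSet_lt (by fun_prop) measurable_snd)
  calc ∫⁻ y, g (dist x y) ∂μ
      ≤ ∫⁻ y, (∫⁻ t in Ioi 0, (Ioi (dist x y)).indicator h t) ∂μ := by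
        refine lintegral_mono fun y => (hgh _ dist_nonneg).trans_eq ?_
        rw [setLIntegral_indicator measurableSet_Ioi,
          inter_eq_self_of_subset_left (Ioi_subset_Ioi dist_nonneg)]
    _ = ∫⁻ t in Ioi 0, ∫⁻ y, (Ioi (dist x y)).indicator h t ∂μ :=
        lintegral_lintegral_swap hm.aemeasurable
    _ = ∫⁻ t in Ioi 0, h t * μ (ball x t) := by
        refine lintegral_congr fun t => ?_
        rw [← lintegral_indicator_const measurableSet_ball]
        simp only [indicator, mem_ball', mem_Ioi]
    _ ≤ ∫⁻ t in Ioi 0, h t * ENNReal.ofReal (V * t ^ Q) := by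
        refine setLIntegral_mono' measurableSet_Ioi fun t ht => ?_
        gcongr
        exact hμ.measure_ball_le x ht

lemma UpperRegular.lintegral_riesz_tail_le [OpensMeasurableSpace X] [SFinite μ]
    (hμ : UpperRegular μ Q V) (hQ : 0 ≤ Q) {β a : ℝ} (hβ : 0 < β) (ha : 0 < a) (x : X) :
    ∫⁻ y in {y | a ≤ dist x y}, riesz (Q + β) x y ∂μ ≤
      ENNReal.ofReal ((Q + β) * V / β * a ^ (-β)) := by
  have hV := hμ.const_pos
  have hset : MeasurableSet {y | a ≤ dist x y} := measurableSet_le (by fun_prop) (by fun_prop)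
  set h : ℝ → ℝ≥0∞ := (Ioi a).indicator fun t => ENNReal.ofReal ((Q + β) * t ^ (-(Q + β) - 1))
  have hh : Measurable h := Measurable.indicator (by fun_prop) measurableSet_Ioi
  have hgh : ∀ ρ, 0 ≤ ρ →
      (Ici a).indicator (fun ρ => ENNReal.ofReal (ρ ^ (Q + β))⁻¹) ρ ≤ ∫⁻ t in Ioi ρ, h t := by
    intro ρ _
    refine indicator_apply_le' (fun (hρ : a ≤ ρ) => ?_) fun _ => zero_le
    have hρ₀ : 0 < ρ := ha.trans_le hρ
    rw [setLIntegral_indicator measurableSet_Ioi,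
      inter_eq_self_of_subset_right (Ioi_subset_Ioi hρ)]
    simp_rw [ENNReal.ofReal_mul (show 0 ≤ Q + β by linarith)]
    rw [lintegral_const_mul' _ _ ENNReal.ofReal_ne_top,
      lintegral_Ioi_rpow_of_lt (by linarith) hρ₀, ← ENNReal.ofReal_mul (by linarith)]
    rw [sub_add_cancel, neg_neg, mul_div_cancel₀ _ (by linarith : Q + β ≠ 0), Real.rpow_neg hρ₀.le]
  calc ∫⁻ y in {y | a ≤ dist x y}, riesz (Q + β) x y ∂μ
      = ∫⁻ y, (Ici a).indicator (fun ρ => ENNReal.ofReal (ρ ^ (Q + β))⁻¹) (dist x y) ∂μ := by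
        rw [← lintegral_indicator hset]; rfl
    _ ≤ ∫⁻ t in Ioi (0 : ℝ), h t * ENNReal.ofReal (V * t ^ Q) :=
        hμ.lintegral_comp_dist_le hh hgh x
    _ = ∫⁻ t in Ioi a, ENNReal.ofReal ((Q + β) * V) * ENNReal.ofReal (t ^ (-β - 1)) := by
        rw [setLIntegral_indicator_mul measurableSet_Ioi (Ioi_subset_Ioi ha.le)]
        refine setLIntegral_congr_fun measurableSet_Ioi fun t (ht : a < t) => ?_
        have ht₀ : 0 < t := ha.trans ht
        rw [← ENNReal.ofReal_mul (by positivity), ← ENNReal.ofReal_mul (by positivity),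
          show -β - 1 = -(Q + β) - 1 + Q by ring, Real.rpow_add ht₀]
        ring_nf
    _ = ENNReal.ofReal ((Q + β) * V / β * a ^ (-β)) := by
        rw [lintegral_const_mul' _ _ ENNReal.ofReal_ne_top,
          lintegral_Ioi_rpow_of_lt (by linarith) ha, ← ENNReal.ofReal_mul (by positivity)]
        congr 1
        rw [sub_add_cancel, neg_neg]
        field_simp

lemma evenYoung_mul_rpow_inv_le_lintegral_Ioi {φ : ℝ → ℝ} (hφ : IsYoung φ) {γ : ℝ} (hγ : 0 ≤ γ + 1)
    {ρ d S : ℝ} (hρ : 0 ≤ ρ) (hρd : ρ < d / 2) (hS : 0 ≤ S) :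
    evenYoung φ (ρ / d * S) * ENNReal.ofReal (ρ ^ γ)⁻¹ ≤
      ∫⁻ t in Ioi ρ, (Ioc 0 d).indicator (fun t => evenYoung φ (t / d * S) *
        ENNReal.ofReal (2 ^ (γ + 1) * (t ^ (γ + 1))⁻¹)) t := by
  have hd : 0 < d := by linarith
  rcases hρ.eq_or_lt with rfl | hρ₀
  · simp [evenYoung_zero hφ]
  have hmono : ∀ t, ρ ≤ t → evenYoung φ (ρ / d * S) ≤ evenYoung φ (t / d * S) := fun t ht =>
    evenYoung_mono hφ <| by
      rw [abs_of_nonneg (by positivity), abs_of_nonneg (by have := hρ.trans ht; positivity)]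
      gcongr
  refine (mul_rpow_inv_le_setLIntegral_Ioc (f := fun t => evenYoung φ (t / d * S)) hρ₀ hγ
    hmono).trans ?_
  rw [setLIntegral_indicator measurableSet_Ioc]
  exact lintegral_mono_set fun t ht => ⟨⟨hρ₀.trans ht.1, by linarith [ht.2]⟩, ht.1⟩

/-- The function `y ↦ ρ S / d`, `ρ = dist x y`, models an extension that is Lipschitz at scale `d`;
the condition `C_β < ∞` is what controls its modular. -/
lemma UpperRegular.lintegral_young_dist_div_le [OpensMeasurableSpace X] [SFinite μ]
    (hμ : UpperRegular μ Q V) {φ : ℝ → ℝ} (hφ : IsYoung φ) {β M : ℝ} (hQβ : 0 ≤ Q + β)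
    (hM : CbetaLE β φ M) {d : ℝ} (hd : 0 < d) (x : X) {S : ℝ} (hS : 0 < S) :
    ∫⁻ y in ball x (d / 2), evenYoung φ (dist x y / d * S) * riesz (Q + β) x y ∂μ ≤
      ENNReal.ofReal (2 ^ (Q + β + 1) * V * d ^ (-β) * M) * evenYoung φ S := by
  have hV := hμ.const_pos
  set f : ℝ → ℝ≥0∞ := fun t => evenYoung φ (t / d * S) with hf
  set k : ℝ → ℝ≥0∞ := fun t => f t * ENNReal.ofReal (2 ^ (Q + β + 1) * (t ^ (Q + β + 1))⁻¹)
  have hh : Measurable ((Ioc 0 d).indicator k) := by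
    have := measurable_evenYoung hφ
    exact Measurable.indicator (by fun_prop) measurableSet_Ioc
  have hgh : ∀ ρ, 0 ≤ ρ → (Iio (d / 2)).indicator (fun ρ => f ρ * ENNReal.ofReal (ρ ^ (Q + β))⁻¹) ρ
      ≤ ∫⁻ t in Ioi ρ, (Ioc 0 d).indicator k t :=
    fun ρ hρ => indicator_apply_le' (fun hρd =>
      evenYoung_mul_rpow_inv_le_lintegral_Ioi hφ (by linarith) hρ hρd hS.le) fun _ => zero_le
  calc ∫⁻ y in ball x (d / 2), evenYoung φ (dist x y / d * S) * riesz (Q + β) x y ∂μ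
      = ∫⁻ y, (Iio (d / 2)).indicator (fun ρ => f ρ * ENNReal.ofReal (ρ ^ (Q + β))⁻¹)
          (dist x y) ∂μ := by
        rw [← lintegral_indicator measurableSet_ball]
        simp only [indicator, mem_ball', mem_Iio, hf, riesz]
    _ ≤ ∫⁻ t in Ioi 0, (Ioc 0 d).indicator k t * ENNReal.ofReal (V * t ^ Q) :=
        hμ.lintegral_comp_dist_le hh hgh x
    _ = ENNReal.ofReal (2 ^ (Q + β + 1) * V) *
          ∫⁻ t in Ioc 0 d, ENNReal.ofReal (φ (t / d * S) / t ^ (β + 1)) := by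
        rw [setLIntegral_indicator_mul measurableSet_Ioc Ioc_subset_Ioi_self,
          ← lintegral_const_mul' _ _ ENNReal.ofReal_ne_top]
        refine setLIntegral_congr_fun measurableSet_Ioc fun t ht => ?_
        have ht₀ : 0 < t := ht.1
        have htS : 0 ≤ t / d * S := by positivity
        simp only [k, hf, evenYoung, abs_of_nonneg htS]
        rw [mul_assoc, ← ENNReal.ofReal_mul (by positivity),
          ← ENNReal.ofReal_mul (hφ.apply_nonneg htS), ← ENNReal.ofReal_mul (by positivity),
          show Q + β + 1 = Q + (β + 1) by ring, Real.rpow_add ht₀]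
        field_simp
    _ ≤ ENNReal.ofReal (2 ^ (Q + β + 1) * V) *
          (ENNReal.ofReal (d ^ (-β) * M) * ENNReal.ofReal (φ S)) := by
        gcongr; exact setLIntegral_young_div_rpow_le hφ hM hd hS
    _ = _ := by
        rw [← mul_assoc, ← ENNReal.ofReal_mul (by positivity), evenYoung, abs_of_pos hS]
        ring_nf

end UpperRegular

/-! ### Distance to `Ω`, capped at the diameter -/

section Scale

variable {X : Type*} [MetricSpace X] {Ω : Set X} {x y z : X}

/-- The scale of a point: its distance to `Ω`, capped at the diameter of `Ω` if that is finite. -/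
noncomputable def scale (Ω : Set X) (y : X) : ℝ :=
  if Bornology.IsBounded Ω then min (infDist y Ω) (diam Ω) else infDist y Ω

/-- The points off the closure of `Ω` whose distance to `Ω` is less than twice the diameter. -/
def nearSet (Ω : Set X) : Set X := {y | infDist y Ω < 2 * scale Ω y}

/-- The points whose distance to `Ω` is at least the (finite) diameter. -/
def farSet (Ω : Set X) : Set X := {y | Bornology.IsBounded Ω ∧ diam Ω ≤ infDist y Ω}

lemma scale_nonneg (Ω : Set X) (y : X) : 0 ≤ scale Ω y := by
  unfold scale
  split_ifs
  · exact le_min infDist_nonneg diam_nonneg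
  · exact infDist_nonneg

lemma scale_le_infDist (Ω : Set X) (y : X) : scale Ω y ≤ infDist y Ω := by
  unfold scale
  split_ifs
  · exact min_le_left _ _
  · exact le_rfl

lemma scale_le_diam (hb : Bornology.IsBounded Ω) (y : X) : scale Ω y ≤ diam Ω := by
  rw [scale, if_pos hb]
  exact min_le_right _ _

lemma scale_pos (hΩ : Ω.Nontrivial) (hy : 0 < infDist y Ω) : 0 < scale Ω y := by
  unfold scale
  split_ifs with hb
  · exact lt_min hy (diam_pos hΩ hb)
  · exact hy

lemma scale_of_mem_farSet (hy : y ∈ farSet Ω) : scale Ω y = diam Ω := by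
  rw [scale, if_pos hy.1, min_eq_right hy.2]

lemma infDist_pos_of_mem_nearSet (hy : y ∈ nearSet Ω) : 0 < infDist y Ω := by
  have hy' : infDist y Ω < 2 * scale Ω y := hy
  linarith [scale_le_infDist Ω y]

lemma scale_pos_of_mem_nearSet (hy : y ∈ nearSet Ω) : 0 < scale Ω y := by
  have hy' : infDist y Ω < 2 * scale Ω y := hy
  linarith [infDist_nonneg (x := y) (s := Ω)]

lemma two_mul_diam_le_of_notMem_nearSet (hy : 0 < infDist y Ω) (hy' : y ∉ nearSet Ω) :
    Bornology.IsBounded Ω ∧ 2 * diam Ω ≤ infDist y Ω := by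
  rw [nearSet, mem_ofPred_eq, not_lt, scale] at hy'
  split_ifs at hy' with hb
  · rcases min_choice (infDist y Ω) (diam Ω) with h | h <;> rw [h] at hy'
    · linarith
    · exact ⟨hb, hy'⟩
  · linarith

lemma mem_farSet_of_notMem_nearSet (hy : 0 < infDist y Ω) (hy' : y ∉ nearSet Ω) :
    y ∈ farSet Ω := by
  obtain ⟨hb, h⟩ := two_mul_diam_le_of_notMem_nearSet hy hy'
  exact ⟨hb, by linarith [diam_nonneg (s := Ω)]⟩

lemma abs_infDist_sub_le (Ω : Set X) (x y : X) : |infDist x Ω - infDist y Ω| ≤ dist x y := by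
  simpa [Real.dist_eq] using (lipschitz_infDist_pt Ω).dist_le_mul x y

lemma abs_min_sub_min_le {a b D : ℝ} (ha : 0 < a) (hb : 0 ≤ b) (hD : 0 ≤ D) :
    |min a D - min b D| ≤ min a D * (|a - b| / a) := by
  rcases le_total a D with haD | hDa
  · rw [min_eq_left haD, mul_div_cancel₀ _ ha.ne']
    simpa [min_eq_left haD] using abs_min_sub_min_le_max a D b D
  rw [min_eq_right hDa]
  rcases le_total b D with hbD | hDb
  · have hba : b ≤ a := hbD.trans hDa
    rw [min_eq_left hbD, abs_of_nonneg (sub_nonneg.2 hbD), abs_of_nonneg (sub_nonneg.2 hba),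
      mul_div_assoc', le_div_iff₀ ha]
    nlinarith
  · rw [min_eq_right hDb, sub_self, abs_zero]
    positivity

lemma abs_scale_sub_le (hx : 0 < infDist x Ω) :
    |scale Ω x - scale Ω y| ≤ scale Ω x * (dist x y / infDist x Ω) := by
  have hd := abs_infDist_sub_le Ω x y
  refine le_trans ?_ (mul_le_mul_of_nonneg_left
    (div_le_div_of_nonneg_right hd infDist_nonneg) (scale_nonneg Ω x))
  unfold scale
  split_ifs
  · exact abs_min_sub_min_le hx infDist_nonneg diam_nonneg
  · rw [mul_div_cancel₀ _ hx.ne']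

lemma abs_scale_sub_le_half (hx : 0 < infDist x Ω) (hxy : dist x y < infDist x Ω / 2) :
    |scale Ω x - scale Ω y| ≤ scale Ω x / 2 := by
  refine (abs_scale_sub_le hx).trans ?_
  rw [div_eq_mul_inv (scale Ω x)]
  refine mul_le_mul_of_nonneg_left ?_ (scale_nonneg Ω x)
  rw [div_le_iff₀ hx]
  linarith

lemma infDist_pos_of_dist_lt (hxy : dist x y < infDist x Ω / 2) : 0 < infDist y Ω := by
  linarith [infDist_le_infDist_add_dist (s := Ω) (x := x) (y := y), dist_nonneg (x := x) (y := y)]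

lemma dist_le_two_mul_infDist_of_mem_farSet (hy : y ∈ farSet Ω) (hz : z ∈ Ω) :
    dist y z ≤ 2 * infDist y Ω := by
  linarith [dist_le_infDist_add_diam (x := y) hy.1 hz, hy.2]

lemma exists_mem_dist_lt_mul_infDist (hΩ : Ω.Nonempty) {a : ℝ} (ha : 1 < a)
    (hy : 0 < infDist y Ω) : ∃ w ∈ Ω, dist y w < a * infDist y Ω :=
  (infDist_lt_iff hΩ).1 (by nlinarith)

lemma measurable_scale [MeasurableSpace X] [OpensMeasurableSpace X] (Ω : Set X) :
    Measurable (scale Ω) := by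
  unfold scale
  split_ifs <;> fun_prop

lemma measurableSet_nearSet [MeasurableSpace X] [OpensMeasurableSpace X] (Ω : Set X) :
    MeasurableSet (nearSet Ω) :=
  measurableSet_lt (by fun_prop) ((measurable_scale Ω).const_mul 2)

variable [MeasurableSpace X] {μ : Measure X} {Q V : ℝ}

lemma UpperRegular.measure_inter_ball_le (hμ : UpperRegular μ Q V) (hΩ : Ω.Nontrivial)
    (hx : 0 < infDist x Ω) :
    μ (Ω ∩ ball x (5 * infDist x Ω)) ≤ ENNReal.ofReal (V * 5 ^ Q * scale Ω x ^ Q) := by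
  have hs := scale_pos hΩ hx
  rw [mul_assoc, ← Real.mul_rpow (by norm_num) hs.le]
  by_cases h : x ∈ farSet Ω
  · obtain ⟨w, hw⟩ := hΩ.nonempty
    rw [scale_of_mem_farSet h] at hs ⊢
    have hsub : Ω ⊆ ball w (5 * diam Ω) := fun z hz =>
      mem_ball.2 (by linarith [dist_le_diam_of_mem h.1 hz hw])
    exact (measure_mono (inter_subset_left.trans hsub)).trans
      (hμ.measure_ball_le w (by linarith))
  · have : scale Ω x = infDist x Ω := by
      rw [farSet, mem_ofPred_eq, not_and, not_le] at h
      unfold scale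
      split_ifs with hb
      · exact min_eq_left (h hb).le
      · rfl
    rw [this]
    exact (measure_mono inter_subset_right).trans (hμ.measure_ball_le x (by linarith))

end Scale

/-! ### The load of a point of `Ω` -/

section Clip

/-- The truncation of a real number to `[0, 1]`, used for Lipschitz cut-offs. -/
def clip (t : ℝ) : ℝ := max 0 (min 1 t)

lemma clip_nonneg (t : ℝ) : 0 ≤ clip t := le_max_left _ _

lemma clip_le_one (t : ℝ) : clip t ≤ 1 := max_le zero_le_one (min_le_left _ _)

lemma clip_of_nonpos {t : ℝ} (ht : t ≤ 0) : clip t = 0 :=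
  max_eq_left ((min_le_right _ _).trans ht)

lemma clip_of_one_le {t : ℝ} (ht : 1 ≤ t) : clip t = 1 := by
  rw [clip, min_eq_left ht, max_eq_right zero_le_one]

lemma pos_of_clip_ne_zero {t : ℝ} (ht : clip t ≠ 0) : 0 < t :=
  not_le.1 fun h => ht (clip_of_nonpos h)

lemma abs_clip_sub_le (s t : ℝ) : |clip s - clip t| ≤ |s - t| := by
  unfold clip
  simpa using (abs_max_sub_max_le_max 0 (min 1 s) 0 (min 1 t)).trans
    (max_le_max le_rfl (abs_min_sub_min_le_max 1 s 1 t))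

@[fun_prop]
lemma continuous_clip : Continuous clip := by
  unfold clip
  fun_prop

lemma abs_clip_mul_clip_sub_le (a b a' b' : ℝ) :
    |clip a * clip b - clip a' * clip b'| ≤ |clip a - clip a'| + |clip b - clip b'| := by
  calc |clip a * clip b - clip a' * clip b'|
      = |(clip a - clip a') * clip b + clip a' * (clip b - clip b')| := by ring_nf
    _ ≤ |clip a - clip a'| * clip b + clip a' * |clip b - clip b'| := by
        simpa [abs_mul, abs_of_nonneg (clip_nonneg _)] using
          abs_add_le ((clip a - clip a') * clip b) (clip a' * (clip b - clip b'))
    _ ≤ |clip a - clip a'| + |clip b - clip b'| :=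
        add_le_add (mul_le_of_le_one_right (abs_nonneg _) (clip_le_one _))
          (mul_le_of_le_one_left (abs_nonneg _) (clip_le_one _))

lemma clip_div_le_add {a b d e δ : ℝ} (ha : 0 ≤ a) (hd : 0 < d) (he : 0 < e) (hab : |a - b| ≤ δ)
    (hde : |d - e| ≤ δ) : clip ((3 * d - a) / d) ≤ clip ((3 * e - b) / e) + 4 * δ / e := by
  have hδ : 0 ≤ δ := (abs_nonneg _).trans hab
  by_cases hclip : clip ((3 * d - a) / d) = 0
  · rw [hclip]
    exact add_nonneg (clip_nonneg _) (by positivity)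
  have had : a / d ≤ 3 := by
    have := (div_pos_iff_of_pos_right hd).1 (pos_of_clip_ne_zero hclip)
    exact (div_le_iff₀ hd).2 (by linarith)
  have hsub : (3 * d - a) / d - (3 * e - b) / e = (a / d * (d - e) - (a - b)) / e := by
    field_simp
    ring
  have hmul : |a / d * (d - e)| ≤ 3 * δ := by
    rw [abs_mul, abs_of_nonneg (by positivity)]
    gcongr
  have hdiff : |(3 * d - a) / d - (3 * e - b) / e| ≤ 4 * δ / e := by
    rw [hsub, abs_div, abs_of_pos he]
    gcongr
    rw [abs_le]
    constructor <;> linarith [abs_le.1 hab, abs_le.1 hmul]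
  linarith [le_abs_self (clip ((3 * d - a) / d) - clip ((3 * e - b) / e)),
    abs_clip_sub_le ((3 * d - a) / d) ((3 * e - b) / e)]

lemma clip_sub_div_le {d r t ρ : ℝ} (hd : d ≤ 9 / 2 * ρ) (hd₀ : 0 ≤ d) (hρ : 0 < ρ)
    (hr : |r - ρ| ≤ ρ / 2) (ht : |t - ρ| ≤ ρ / 2) :
    clip (3 - d / r) ≤ clip (3 - d / t) + 18 * (|r - t| / ρ) := by
  have hr' : ρ / 2 ≤ r := by linarith [abs_le.1 hr]
  have ht' : ρ / 2 ≤ t := by linarith [abs_le.1 ht]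
  have hr₀ : 0 < r := by linarith
  have ht₀ : 0 < t := by linarith
  have hclip := (le_abs_self _).trans (abs_clip_sub_le (3 - d / r) (3 - d / t))
  have heq : 3 - d / r - (3 - d / t) = d * (r - t) / (r * t) := by
    field_simp
    ring
  have hdiv : |d * (r - t) / (r * t)| ≤ 9 / 2 * ρ * |r - t| / (ρ / 2 * (ρ / 2)) := by
    rw [abs_div, abs_mul, abs_of_nonneg hd₀, abs_of_pos (mul_pos hr₀ ht₀)]
    gcongr
  have hconst : 9 / 2 * ρ * |r - t| / (ρ / 2 * (ρ / 2)) = 18 * (|r - t| / ρ) := by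
    field_simp
    ring
  rw [heq] at hclip
  linarith

end Clip

section Load

variable {X : Type*} [MetricSpace X] {Ω : Set X} {Q : ℝ}

/-- The density with which `y` could use `z`: `d(y)^{-Q}` if `dist y z < 3 d(y)`, where `d` is the
distance to `Ω`. -/
noncomputable def loadDensity (Ω : Set X) (Q : ℝ) (y z : X) : ℝ≥0∞ :=
  if dist y z < 3 * infDist y Ω then ENNReal.ofReal (infDist y Ω ^ Q)⁻¹ else 0

lemma infDist_lt_and_dist_lt_of_mul_loadDensity_ne_zero {y z : X} {r : ℝ} (hr : 0 < r)
    (h : ENNReal.ofReal (clip (3 - infDist y Ω / r)) * loadDensity Ω Q y z ≠ 0) :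
    infDist y Ω < 3 * r ∧ dist y z < 3 * infDist y Ω := by
  have hclip := pos_of_clip_ne_zero fun h' => h (by rw [h']; simp)
  rw [sub_pos, div_lt_iff₀ hr] at hclip
  exact ⟨hclip, by_contra fun h' => h (by rw [loadDensity, if_neg h', mul_zero])⟩

/-- Where the two cut-offs differ, `ρ < d(y) < 9ρ/2`. -/
lemma mul_loadDensity_le_add (hQ : 0 ≤ Q) {ρ r t : ℝ} (hρ : 0 < ρ) (hr : |r - ρ| ≤ ρ / 2)
    (ht : |t - ρ| ≤ ρ / 2) (y z : X) :
    ENNReal.ofReal (clip (3 - infDist y Ω / r)) * loadDensity Ω Q y z ≤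
      ENNReal.ofReal (clip (3 - infDist y Ω / t)) * loadDensity Ω Q y z +
        (ball z (14 * ρ)).indicator
          (fun _ => ENNReal.ofReal (18 * (|r - t| / ρ) * (ρ ^ Q)⁻¹)) y := by
  by_cases h : ENNReal.ofReal (clip (3 - infDist y Ω / r)) * loadDensity Ω Q y z = 0
  · rw [h]
    exact zero_le
  have hr' : ρ / 2 ≤ r ∧ r ≤ 3 / 2 * ρ := by constructor <;> linarith [abs_le.1 hr]
  have ht' : ρ / 2 ≤ t := by linarith [abs_le.1 ht]
  obtain ⟨hd, hyz⟩ := infDist_lt_and_dist_lt_of_mul_loadDensity_ne_zero (by linarith) h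
  rcases le_total (infDist y Ω) ρ with hdρ | hdρ
  · have hone : clip (3 - infDist y Ω / t) = 1 := by
      refine clip_of_one_le ?_
      linarith [(div_le_iff₀ (by linarith : 0 < t)).2 (by linarith : infDist y Ω ≤ 2 * t)]
    rw [hone]
    refine le_add_right ?_
    gcongr
    exact clip_le_one _
  rw [indicator_of_mem (mem_ball.2 (by linarith)), ENNReal.ofReal_mul (by positivity)]
  have hdens : loadDensity Ω Q y z ≤ ENNReal.ofReal (ρ ^ Q)⁻¹ := by
    rw [loadDensity, if_pos hyz]
    gcongr
  calc _ ≤ ENNReal.ofReal (clip (3 - infDist y Ω / t) + 18 * (|r - t| / ρ)) *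
          loadDensity Ω Q y z := by
        gcongr
        exact clip_sub_div_le (by linarith) infDist_nonneg hρ hr ht
    _ ≤ _ := by
        rw [ENNReal.ofReal_add (clip_nonneg _) (by positivity), add_mul]
        gcongr

variable [MeasurableSpace X] {μ : Measure X} {V : ℝ}

/-- The load of `z` at scale `r`: the total density of the points at distance up to about `r` from
`Ω` that could use `z`. -/
noncomputable def load (μ : Measure X) (Ω : Set X) (Q : ℝ) (z : X) (r : ℝ) : ℝ≥0∞ :=
  ∫⁻ y, ENNReal.ofReal (clip (3 - infDist y Ω / r)) * loadDensity Ω Q y z ∂μ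

section Measurable

variable [OpensMeasurableSpace X] [SecondCountableTopology X]

lemma measurable_loadDensity (Ω : Set X) (Q : ℝ) :
    Measurable (Function.uncurry (loadDensity Ω Q)) :=
  Measurable.ite (measurableSet_lt (by fun_prop) (by fun_prop)) (by fun_prop) measurable_const

lemma measurable_load [SFinite μ] (Ω : Set X) (Q : ℝ) :
    Measurable (Function.uncurry (load μ Ω Q)) := by
  have := measurable_loadDensity Ω Q
  refine Measurable.lintegral_prod_right' (f := fun (q : (X × ℝ) × X) =>
    ENNReal.ofReal (clip (3 - infDist q.2 Ω / q.1.2)) * loadDensity Ω Q q.2 q.1.1) ?_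
  exact Measurable.mul (by fun_prop) (this.comp (measurable_snd.prodMk measurable_fst.fst))

end Measurable

lemma lintegral_loadDensity_le [OpensMeasurableSpace X] (hμ : UpperRegular μ Q V) (y : X) :
    ∫⁻ z, loadDensity Ω Q y z ∂μ ≤ ENNReal.ofReal (V * 3 ^ Q) := by
  have := hμ.const_pos
  have hind : (fun z => loadDensity Ω Q y z) =
      (ball y (3 * infDist y Ω)).indicator fun _ => ENNReal.ofReal (infDist y Ω ^ Q)⁻¹ := by
    ext z
    simp only [loadDensity, indicator, mem_ball']
  rw [hind, lintegral_indicator_const measurableSet_ball]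
  rcases infDist_nonneg.eq_or_lt' (a := infDist y Ω) with hy | hy
  · simp [hy]
  calc _ ≤ ENNReal.ofReal (infDist y Ω ^ Q)⁻¹ * ENNReal.ofReal (V * (3 * infDist y Ω) ^ Q) := by
        gcongr
        exact hμ.measure_ball_le y (by linarith)
    _ = ENNReal.ofReal (V * 3 ^ Q) := by
        rw [← ENNReal.ofReal_mul (by positivity), Real.mul_rpow (by norm_num) hy.le]
        field_simp

/-- Only points `y ∈ ball x (10 r)` contribute. -/
lemma UpperRegular.setLIntegral_load_le [OpensMeasurableSpace X] [SecondCountableTopology X]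
    [SFinite μ] (hμ : UpperRegular μ Q V) {r : ℝ} (hr : 0 < r) (x : X) :
    ∫⁻ z in ball x r, load μ Ω Q z r ∂μ ≤ ENNReal.ofReal (V * 3 ^ Q * (V * 10 ^ Q) * r ^ Q) := by
  have := hμ.const_pos
  have hm := measurable_loadDensity Ω Q
  calc ∫⁻ z in ball x r, load μ Ω Q z r ∂μ
      = ∫⁻ y, ∫⁻ z in ball x r,
          ENNReal.ofReal (clip (3 - infDist y Ω / r)) * loadDensity Ω Q y z ∂μ ∂μ := by
        refine lintegral_lintegral_swap (Measurable.aemeasurable ?_)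
        exact Measurable.mul (by fun_prop) (hm.comp measurable_swap)
    _ ≤ ∫⁻ y, (ball x (10 * r)).indicator (fun _ => ENNReal.ofReal (V * 3 ^ Q)) y ∂μ := by
        refine lintegral_mono fun y => ?_
        by_cases hy : y ∈ ball x (10 * r)
        · rw [indicator_of_mem hy]
          refine (setLIntegral_le_lintegral _ _).trans (le_trans ?_
            (lintegral_loadDensity_le (Ω := Ω) hμ y))
          exact lintegral_mono fun z => mul_le_of_le_one_left' (by simpa using clip_le_one _)
        · rw [indicator_of_notMem hy]
          refine (setLIntegral_eq_zero measurableSet_ball fun z hz => ?_).le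
          by_contra h
          obtain ⟨h₁, h₂⟩ := infDist_lt_and_dist_lt_of_mul_loadDensity_ne_zero hr h
          exact hy (mem_ball.2 (by linarith [dist_triangle y z x, mem_ball.1 hz]))
    _ ≤ ENNReal.ofReal (V * 3 ^ Q) * ENNReal.ofReal (V * (10 * r) ^ Q) := by
        rw [lintegral_indicator_const measurableSet_ball]
        gcongr
        exact hμ.measure_ball_le x (by linarith)
    _ = _ := by
        rw [← ENNReal.ofReal_mul (by positivity), Real.mul_rpow (by norm_num) hr.le]
        ring_nf

lemma UpperRegular.load_lt_top [OpensMeasurableSpace X] (hμ : UpperRegular μ Q V) (hQ : 0 ≤ Q)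
    (hΩ : IsOpen Ω) {z : X} (hz : z ∈ Ω) {r : ℝ} (hr : 0 < r) : load μ Ω Q z r < ∞ := by
  obtain ⟨δ, hδ, hball⟩ := Metric.isOpen_iff.1 hΩ z hz
  calc load μ Ω Q z r
      ≤ ∫⁻ y, (ball z (9 * r)).indicator (fun _ => ENNReal.ofReal ((δ / 3) ^ Q)⁻¹) y ∂μ := by
        refine lintegral_mono fun y => ?_
        by_cases h : ENNReal.ofReal (clip (3 - infDist y Ω / r)) * loadDensity Ω Q y z = 0
        · exact h.trans_le zero_le
        obtain ⟨h₁, h₂⟩ := infDist_lt_and_dist_lt_of_mul_loadDensity_ne_zero hr h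
        have hy : δ / 3 ≤ infDist y Ω := by
          have hyΩ : y ∉ Ω := fun hy => by
            linarith [infDist_zero_of_mem hy, dist_nonneg (x := y) (y := z)]
          linarith [not_lt.1 fun h => hyΩ (hball (mem_ball.2 h))]
        rw [indicator_of_mem (mem_ball.2 (by linarith)), loadDensity, if_pos h₂]
        refine (mul_le_of_le_one_left' (by simpa using clip_le_one _)).trans ?_
        gcongr
    _ = ENNReal.ofReal ((δ / 3) ^ Q)⁻¹ * μ (ball z (9 * r)) :=
        lintegral_indicator_const measurableSet_ball _
    _ < ∞ := ENNReal.mul_lt_top ENNReal.ofReal_lt_top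
        ((hμ.measure_ball_le z (by linarith)).trans_lt ENNReal.ofReal_lt_top)

lemma UpperRegular.load_le_load_add [OpensMeasurableSpace X] (hμ : UpperRegular μ Q V)
    (hQ : 0 ≤ Q) {ρ r t : ℝ} (hρ : 0 < ρ) (hr : |r - ρ| ≤ ρ / 2) (ht : |t - ρ| ≤ ρ / 2) (z : X) :
    load μ Ω Q z r ≤ load μ Ω Q z t + ENNReal.ofReal (18 * V * 14 ^ Q * (|r - t| / ρ)) := by
  have hind : ∫⁻ y, (ball z (14 * ρ)).indicator
      (fun _ => ENNReal.ofReal (18 * (|r - t| / ρ) * (ρ ^ Q)⁻¹)) y ∂μ ≤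
      ENNReal.ofReal (18 * V * 14 ^ Q * (|r - t| / ρ)) := by
    rw [lintegral_indicator_const measurableSet_ball]
    grw [hμ.measure_ball_le z (by linarith)]
    rw [← ENNReal.ofReal_mul (by positivity), Real.mul_rpow (by norm_num) hρ.le]
    refine ENNReal.ofReal_le_ofReal (le_of_eq ?_)
    field_simp
  refine (lintegral_mono fun y => mul_loadDensity_le_add hQ hρ hr ht y z).trans ?_
  rw [lintegral_add_right _ (measurable_const.indicator measurableSet_ball)]
  exact add_le_add_right hind _

end Load

/-! ### The reflection kernel -/

/-- `S` is a countable increasing union of such sublevels unless the supremum of `f` on it is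
attained. -/
lemma measure_le_of_forall_measure_inter_le {X L : Type*} [MeasurableSpace X] {μ : Measure X}
    [LinearOrder L] [TopologicalSpace L] [OrderTopology L] [SecondCountableTopology L]
    {f : X → L} {S : Set X} {c : ℝ≥0∞} (h : ∀ y ∈ S, μ (S ∩ {x | f x ≤ f y}) ≤ c) : μ S ≤ c := by
  by_cases hmax : ∃ y ∈ S, ∀ x ∈ S, f x ≤ f y
  · obtain ⟨y, hy, hy'⟩ := hmax
    exact (measure_mono fun x hx => mem_inter hx (hy' x hx)).trans (h y hy)
  push Not at hmax
  obtain ⟨T, hTS, hTc, hT⟩ := TopologicalSpace.isOpen_biUnion_countable S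
    (fun y => Iio (f y)) (fun _ _ => isOpen_Iio)
  have hsub : S ⊆ ⋃ y ∈ T, S ∩ {x | f x ≤ f y} := by
    intro x hx
    obtain ⟨y, hy, hlt⟩ := hmax x hx
    have : f x ∈ ⋃ i ∈ T, Iio (f i) := hT ▸ mem_biUnion hy hlt
    obtain ⟨i, hi, hlt⟩ := mem_iUnion₂.1 this
    exact mem_biUnion hi ⟨hx, le_of_lt hlt⟩
  have hdir : DirectedOn (Function.onFun (· ⊆ ·) fun y => S ∩ {x | f x ≤ f y}) T := by
    intro a ha b hb
    have hmono : ∀ {i j}, f i ≤ f j → S ∩ {x | f x ≤ f i} ⊆ S ∩ {x | f x ≤ f j} :=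
      fun hij x hx => ⟨hx.1, le_trans hx.2 hij⟩
    rcases le_total (f a) (f b) with hab | hab
    · exact ⟨b, hb, hmono hab, subset_rfl⟩
    · exact ⟨a, ha, subset_rfl, hmono hab⟩
  calc μ S ≤ μ (⋃ y ∈ T, S ∩ {x | f x ≤ f y}) := measure_mono hsub
    _ = ⨆ y ∈ T, μ (S ∩ {x | f x ≤ f y}) := measure_biUnion_eq_iSup hTc hdir
    _ ≤ c := iSup₂_le fun y hy => h y (hTS hy)

/-- Ahlfors regularity of `Ω` from below: balls centred in `Ω` of radius less than twice the
diameter meet `Ω` in measure at least `θ r ^ Q`. -/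
structure LowerRegularOn {X : Type*} [PseudoMetricSpace X] [MeasurableSpace X] (μ : Measure X)
    (Ω : Set X) (Q θ : ℝ) : Prop where
  const_pos : 0 < θ
  le_measure_ball_inter : ∀ x ∈ Ω, ∀ r, 0 < r → (Bornology.IsBounded Ω → r < 2 * diam Ω) →
    ENNReal.ofReal (θ * r ^ Q) ≤ μ (ball x r ∩ Ω)

section Kernel

variable {X : Type*} [MetricSpace X] {Ω : Set X} {x y z : X}

lemma abs_clip_dist_sub_le (hxy : dist x y < infDist x Ω / 2) (z : X) :
    |clip ((3 * infDist x Ω - dist x z) / infDist x Ω) -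
      clip ((3 * infDist y Ω - dist y z) / infDist y Ω)| ≤ 8 * (dist x y / infDist x Ω) := by
  have hx : 0 < infDist x Ω := by linarith [dist_nonneg (x := x) (y := y)]
  have hy := infDist_pos_of_dist_lt hxy
  have hdist : |dist x z - dist y z| ≤ dist x y := abs_dist_sub_le x y z
  have hinf := abs_infDist_sub_le Ω x y
  have h₁ := clip_div_le_add dist_nonneg hx hy hdist hinf
  have h₂ := clip_div_le_add dist_nonneg hy hx
    (abs_sub_comm (dist x z) _ ▸ hdist) (abs_sub_comm (infDist x Ω) _ ▸ hinf)
  have hle : 4 * dist x y / infDist y Ω ≤ 8 * (dist x y / infDist x Ω) := by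
    rw [← mul_div_assoc, div_le_div_iff₀ hy hx]
    nlinarith [dist_nonneg (x := x) (y := y), abs_le.1 hinf]
  have hle' : 4 * dist x y / infDist x Ω ≤ 8 * (dist x y / infDist x Ω) := by
    rw [← mul_div_assoc]
    gcongr
    norm_num
  rw [abs_le]
  constructor <;> linarith

variable [MeasurableSpace X] {μ : Measure X} {Q V θ A : ℝ}

/-- A family `p y` of probability densities on `Ω`, one for each point `y` off the closure of `Ω`,
such that `∫ p y z * u z` is an average of `u` over points of `Ω` at distance comparable to that
of `y`. -/
structure IsReflectionKernel (μ : Measure X) (Ω : Set X) (Q C : ℝ) (p : X → X → ℝ) : Prop where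
  const_pos : 0 < C
  measurable : Measurable (Function.uncurry p)
  nonneg : ∀ y z, 0 ≤ p y z
  lintegral_eq_one : ∀ y, 0 < infDist y Ω → ∫⁻ z, ENNReal.ofReal (p y z) ∂μ = 1
  mem_and_dist_lt : ∀ y z, p y z ≠ 0 → z ∈ Ω ∧ dist y z < 3 * infDist y Ω
  le_div : ∀ y z, 0 < infDist y Ω → p y z ≤ C / scale Ω y ^ Q
  overlap : ∀ z, ∫⁻ y in nearSet Ω, ENNReal.ofReal (p y z) ∂μ ≤ ENNReal.ofReal C
  abs_sub_le : ∀ x y z, dist x y < infDist x Ω / 2 →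
    |p x z - p y z| ≤ C * (dist x y / infDist x Ω) / scale Ω x ^ Q
  eq_of_mem_farSet : ∀ x ∈ farSet Ω, ∀ y ∈ farSet Ω, p x = p y

/-- The unnormalised reflection kernel: a Lipschitz cut-off to the points `z` of `Ω` with
`dist y z < 3 d(y)` whose load at the scale of `y` is less than `2 A`. It vanishes for `d(y) = 0`,
division by `0` being `0`. -/
noncomputable def bump (μ : Measure X) (Ω : Set X) (Q A : ℝ) (y z : X) : ℝ :=
  Ω.indicator (fun z => clip ((3 * infDist y Ω - dist y z) / infDist y Ω) *
    clip (2 - (load μ Ω Q z (scale Ω y)).toReal / A)) z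

lemma bump_nonneg (y z : X) : 0 ≤ bump μ Ω Q A y z :=
  indicator_nonneg (fun _ _ => mul_nonneg (clip_nonneg _) (clip_nonneg _)) z

lemma bump_le_one (y z : X) : bump μ Ω Q A y z ≤ 1 :=
  indicator_le' (fun _ _ => mul_le_one₀ (clip_le_one _) (clip_nonneg _) (clip_le_one _))
    (fun _ _ => zero_le_one) z

lemma mem_and_dist_lt_of_bump_ne_zero (h : bump μ Ω Q A y z ≠ 0) :
    z ∈ Ω ∧ dist y z < 3 * infDist y Ω := by
  have hz := mem_of_indicator_ne_zero h
  rw [bump, indicator_of_mem hz] at h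
  have hpos := pos_of_clip_ne_zero (left_ne_zero_of_mul h)
  have hd : 0 < infDist y Ω := infDist_nonneg.lt_of_ne' fun h₀ => by simp [h₀] at hpos
  exact ⟨hz, sub_pos.1 ((div_pos_iff_of_pos_right hd).1 hpos)⟩

lemma mem_inter_ball_of_bump_ne_zero (hxy : dist x y < infDist x Ω / 2)
    (h : bump μ Ω Q A y z ≠ 0) : z ∈ Ω ∩ ball x (5 * infDist x Ω) := by
  obtain ⟨hz, hyz⟩ := mem_and_dist_lt_of_bump_ne_zero h
  refine ⟨hz, mem_ball'.2 ?_⟩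
  linarith [dist_triangle x y z, abs_le.1 (abs_infDist_sub_le Ω x y)]

lemma load_lt_of_bump_ne_zero (hA : 0 < A) (h : bump μ Ω Q A y z ≠ 0) :
    (load μ Ω Q z (scale Ω y)).toReal < 2 * A := by
  rw [bump, indicator_of_mem (mem_of_indicator_ne_zero h)] at h
  exact (div_lt_iff₀ hA).1 (sub_pos.1 (pos_of_clip_ne_zero (right_ne_zero_of_mul h)))

lemma bump_eq_one (hy : 0 < infDist y Ω) (hz : z ∈ Ω) (hyz : dist y z ≤ 2 * infDist y Ω)
    (hA : 0 < A) (hload : (load μ Ω Q z (scale Ω y)).toReal ≤ A) : bump μ Ω Q A y z = 1 := by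
  rw [bump, indicator_of_mem hz, clip_of_one_le, clip_of_one_le, one_mul]
  · linarith [(div_le_one hA).2 hload]
  · rw [one_le_div hy]
    linarith

lemma bump_eq_of_mem_farSet (hΩ : Ω.Nontrivial) (hx : x ∈ farSet Ω) (hy : y ∈ farSet Ω) :
    bump μ Ω Q A x = bump μ Ω Q A y := by
  have hone : ∀ w ∈ farSet Ω, ∀ z ∈ Ω, clip ((3 * infDist w Ω - dist w z) / infDist w Ω) = 1 := by
    intro w hw z hz
    have hd : 0 < infDist w Ω := (diam_pos hΩ hw.1).trans_le hw.2
    refine clip_of_one_le ((one_le_div hd).2 ?_)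
    linarith [dist_le_two_mul_infDist_of_mem_farSet hw hz]
  ext z
  by_cases hz : z ∈ Ω
  · simp only [bump, indicator_of_mem hz, hone x hx z hz, hone y hy z hz, scale_of_mem_farSet hx,
      scale_of_mem_farSet hy]
  · simp only [bump, indicator_of_notMem hz]

lemma UpperRegular.abs_toReal_load_sub_le [OpensMeasurableSpace X] (hμ : UpperRegular μ Q V)
    (hQ : 0 ≤ Q) (hΩ : Ω.Nontrivial) (hΩo : IsOpen Ω) (hxy : dist x y < infDist x Ω / 2)
    (hz : z ∈ Ω) :
    |(load μ Ω Q z (scale Ω x)).toReal - (load μ Ω Q z (scale Ω y)).toReal| ≤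
      18 * V * 14 ^ Q * (dist x y / infDist x Ω) := by
  have := hμ.const_pos
  have hx : 0 < infDist x Ω := by linarith [dist_nonneg (x := x) (y := y)]
  have hsx := scale_pos hΩ hx
  have hsy := scale_pos hΩ (infDist_pos_of_dist_lt hxy)
  have hhalf : |scale Ω y - scale Ω x| ≤ scale Ω x / 2 :=
    abs_sub_comm (scale Ω x) _ ▸ abs_scale_sub_le_half hx hxy
  have hself : |scale Ω x - scale Ω x| ≤ scale Ω x / 2 := by
    rw [sub_self, abs_zero]
    positivity
  have hratio : |scale Ω x - scale Ω y| / scale Ω x ≤ dist x y / infDist x Ω :=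
    (div_le_iff₀' hsx).2 (abs_scale_sub_le hx)
  have htop : ∀ r, 0 < r → load μ Ω Q z r ≠ ∞ := fun r hr => (hμ.load_lt_top hQ hΩo hz hr).ne
  have hreal : ∀ r t, 0 < t → |r - scale Ω x| ≤ scale Ω x / 2 →
      |t - scale Ω x| ≤ scale Ω x / 2 → |r - t| = |scale Ω x - scale Ω y| →
      (load μ Ω Q z r).toReal ≤
        (load μ Ω Q z t).toReal + 18 * V * 14 ^ Q * (dist x y / infDist x Ω) := by
    intro r t ht hr' ht' hrt
    have h := ENNReal.toReal_mono (ENNReal.add_ne_top.2 ⟨htop t ht, ENNReal.ofReal_ne_top⟩)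
      (hμ.load_le_load_add (Ω := Ω) hQ hsx hr' ht' z)
    rw [ENNReal.toReal_add (htop t ht) ENNReal.ofReal_ne_top,
      ENNReal.toReal_ofReal (by positivity), hrt] at h
    exact h.trans (by gcongr)
  rw [abs_le]
  constructor <;> linarith [hreal _ _ hsy hself hhalf rfl,
    hreal _ _ hsx hhalf hself (abs_sub_comm _ _)]

lemma UpperRegular.abs_bump_sub_le [OpensMeasurableSpace X] (hμ : UpperRegular μ Q V)
    (hQ : 0 ≤ Q) (hΩ : Ω.Nontrivial) (hΩo : IsOpen Ω) (hA : 0 < A)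
    (hxy : dist x y < infDist x Ω / 2) (z : X) :
    |bump μ Ω Q A x z - bump μ Ω Q A y z| ≤
      (8 + 18 * V * 14 ^ Q / A) * (dist x y / infDist x Ω) := by
  have := hμ.const_pos
  by_cases hz : z ∈ Ω
  swap
  · simp only [bump, indicator_of_notMem hz, sub_self, abs_zero]
    have := infDist_nonneg (x := x) (s := Ω)
    positivity
  simp only [bump, indicator_of_mem hz]
  have hload : |clip (2 - (load μ Ω Q z (scale Ω x)).toReal / A) -
      clip (2 - (load μ Ω Q z (scale Ω y)).toReal / A)| ≤
      18 * V * 14 ^ Q / A * (dist x y / infDist x Ω) := by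
    refine (abs_clip_sub_le _ _).trans ?_
    rw [sub_sub_sub_cancel_left, ← sub_div, abs_div, abs_of_pos hA, abs_sub_comm,
      div_mul_eq_mul_div]
    gcongr
    exact hμ.abs_toReal_load_sub_le hQ hΩ hΩo hxy hz
  rw [add_mul]
  exact (abs_clip_mul_clip_sub_le _ _ _ _).trans (add_le_add (abs_clip_dist_sub_le hxy z) hload)

/-- The reflection kernel: the bump kernel normalised to total mass one. -/
noncomputable def reflectionKernel (μ : Measure X) (Ω : Set X) (Q A : ℝ) (y z : X) : ℝ :=
  bump μ Ω Q A y z / ∫ w, bump μ Ω Q A y w ∂μ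

lemma reflectionKernel_nonneg (y z : X) : 0 ≤ reflectionKernel μ Ω Q A y z :=
  div_nonneg (bump_nonneg y z) (integral_nonneg (bump_nonneg y))

lemma reflectionKernel_le (hΩ : Ω.Nontrivial) (hy : 0 < infDist y Ω) {c : ℝ} (hc : 0 < c)
    (hm : c * scale Ω y ^ Q ≤ ∫ w, bump μ Ω Q A y w ∂μ) (z : X) :
    reflectionKernel μ Ω Q A y z ≤ c⁻¹ * (bump μ Ω Q A y z / scale Ω y ^ Q) := by
  have hs := scale_pos hΩ hy
  calc reflectionKernel μ Ω Q A y z ≤ bump μ Ω Q A y z / (c * scale Ω y ^ Q) := by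
        unfold reflectionKernel
        gcongr
        exact bump_nonneg y z
    _ = c⁻¹ * (bump μ Ω Q A y z / scale Ω y ^ Q) := by
        field_simp

lemma ofReal_bump_div_scale_le (hQ : 0 ≤ Q) (hy : y ∈ nearSet Ω) (hb : bump μ Ω Q A y z ≠ 0) :
    ENNReal.ofReal (bump μ Ω Q A y z / scale Ω y ^ Q) ≤
      ENNReal.ofReal (2 ^ Q) * loadDensity Ω Q y z := by
  have hd := infDist_pos_of_mem_nearSet hy
  have hs := scale_pos_of_mem_nearSet hy
  have hy' : infDist y Ω < 2 * scale Ω y := hy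
  rw [loadDensity, if_pos (mem_and_dist_lt_of_bump_ne_zero hb).2,
    ← ENNReal.ofReal_mul (by positivity)]
  refine ENNReal.ofReal_le_ofReal ?_
  rw [← div_eq_mul_inv, div_le_div_iff₀ (by positivity) (by positivity),
    ← Real.mul_rpow (by norm_num) hs.le]
  exact (mul_le_of_le_one_left (by positivity) (bump_le_one y z)).trans
    (Real.rpow_le_rpow hd.le hy'.le hQ)

variable [OpensMeasurableSpace X]

/-- Points with `d(x) ≤ d(y)`, `y ∈ nearSet Ω`, have `d(x) ≤ 2 scale(y)` and contribute fully to
the load at the scale of `y`. -/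
lemma setLIntegral_loadDensity_le_load (hy : y ∈ nearSet Ω) (z : X) :
    ∫⁻ x in {x | infDist x Ω ≤ infDist y Ω}, loadDensity Ω Q x z ∂μ ≤
      load μ Ω Q z (scale Ω y) := by
  calc ∫⁻ x in {x | infDist x Ω ≤ infDist y Ω}, loadDensity Ω Q x z ∂μ
      ≤ ∫⁻ x in {x | infDist x Ω ≤ infDist y Ω},
          ENNReal.ofReal (clip (3 - infDist x Ω / scale Ω y)) * loadDensity Ω Q x z ∂μ := by
        refine setLIntegral_mono' (measurableSet_le (by fun_prop) (by fun_prop)) fun x hx => ?_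
        have hx' : infDist x Ω / scale Ω y ≤ 2 :=
          (div_le_iff₀ (scale_pos_of_mem_nearSet hy)).2 (le_trans hx (le_of_lt hy))
        rw [clip_of_one_le (by linarith), ENNReal.ofReal_one, one_mul]
    _ ≤ load μ Ω Q z (scale Ω y) := setLIntegral_le_lintegral _ _

variable [SFinite μ]

lemma lintegral_bump_div_scale_le (hQ : 0 ≤ Q) (hA : 0 < A) (hμ : UpperRegular μ Q V)
    (hΩo : IsOpen Ω) (z : X) :
    ∫⁻ y in nearSet Ω, ENNReal.ofReal (bump μ Ω Q A y z / scale Ω y ^ Q) ∂μ ≤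
      ENNReal.ofReal (2 ^ Q * (2 * A)) := by
  set ν := μ.withDensity fun y => loadDensity Ω Q y z
  set G := {y ∈ nearSet Ω | bump μ Ω Q A y z ≠ 0}
  have hpoint : ∀ y ∈ nearSet Ω, ENNReal.ofReal (bump μ Ω Q A y z / scale Ω y ^ Q) ≤
      ENNReal.ofReal (2 ^ Q) * G.indicator (fun y => loadDensity Ω Q y z) y := by
    intro y hy
    by_cases hb : bump μ Ω Q A y z = 0
    · simp [hb]
    rw [indicator_of_mem (show y ∈ G from ⟨hy, hb⟩)]
    exact ofReal_bump_div_scale_le hQ hy hb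
  have hsub : ν G ≤ ENNReal.ofReal (2 * A) := by
    refine measure_le_of_forall_measure_inter_le (f := fun y => infDist y Ω) fun y hy => ?_
    obtain ⟨hy, hb⟩ := hy
    have hs := scale_pos_of_mem_nearSet hy
    have hz := (mem_and_dist_lt_of_bump_ne_zero hb).1
    calc ν (G ∩ {x | infDist x Ω ≤ infDist y Ω}) ≤ ν {x | infDist x Ω ≤ infDist y Ω} :=
          measure_mono inter_subset_right
      _ = ∫⁻ x in {x | infDist x Ω ≤ infDist y Ω}, loadDensity Ω Q x z ∂μ := withDensity_apply' _ _
      _ ≤ load μ Ω Q z (scale Ω y) := setLIntegral_loadDensity_le_load hy z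
      _ ≤ ENNReal.ofReal (2 * A) := by
          rw [← ENNReal.ofReal_toReal (hμ.load_lt_top hQ hΩo hz hs).ne]
          exact ENNReal.ofReal_le_ofReal (load_lt_of_bump_ne_zero hA hb).le
  calc _ ≤ ∫⁻ y, ENNReal.ofReal (2 ^ Q) * G.indicator (fun y => loadDensity Ω Q y z) y ∂μ :=
        (setLIntegral_mono' (measurableSet_nearSet Ω) hpoint).trans (setLIntegral_le_lintegral _ _)
    _ ≤ ENNReal.ofReal (2 ^ Q) * ν G := by
        rw [lintegral_const_mul' _ _ ENNReal.ofReal_ne_top, withDensity_apply' _ G]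
        exact mul_le_mul_right (lintegral_indicator_le _ _) _
    _ ≤ ENNReal.ofReal (2 ^ Q * (2 * A)) := by
        rw [ENNReal.ofReal_mul (by positivity)]
        gcongr

lemma UpperRegular.lintegral_nearSet_reflectionKernel_le (hμ : UpperRegular μ Q V) (hQ : 0 ≤ Q)
    {c : ℝ} (hc : 0 < c)
    (hm : ∀ y, 0 < infDist y Ω → c * scale Ω y ^ Q ≤ ∫ w, bump μ Ω Q A y w ∂μ)
    (hΩ : Ω.Nontrivial) (hΩo : IsOpen Ω) (hA : 0 < A) (z : X) :
    ∫⁻ y in nearSet Ω, ENNReal.ofReal (reflectionKernel μ Ω Q A y z) ∂μ ≤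
      ENNReal.ofReal (c⁻¹ * (2 ^ Q * (2 * A))) := by
  have hc' : 0 ≤ c⁻¹ := (inv_pos.2 hc).le
  calc _ ≤ ∫⁻ y in nearSet Ω,
        ENNReal.ofReal c⁻¹ * ENNReal.ofReal (bump μ Ω Q A y z / scale Ω y ^ Q) ∂μ := by
        refine setLIntegral_mono' (measurableSet_nearSet Ω) fun y hy => ?_
        have hd := infDist_pos_of_mem_nearSet hy
        rw [← ENNReal.ofReal_mul hc']
        exact ENNReal.ofReal_le_ofReal (reflectionKernel_le hΩ hd hc (hm y hd) z)
    _ ≤ _ := by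
        rw [lintegral_const_mul' _ _ ENNReal.ofReal_ne_top, ENNReal.ofReal_mul hc']
        gcongr
        exact lintegral_bump_div_scale_le hQ hA hμ hΩo z

variable [SecondCountableTopology X]

lemma measurable_bump (hΩo : IsOpen Ω) : Measurable (Function.uncurry (bump μ Ω Q A)) := by
  have hload := (measurable_load (μ := μ) Ω Q).comp
    (measurable_snd.prodMk ((measurable_scale Ω).comp (measurable_fst (α := X) (β := X))))
  have hclip : Measurable fun q : X × X => clip ((3 * infDist q.1 Ω - dist q.1 q.2) /
      infDist q.1 Ω) * clip (2 - (load μ Ω Q q.2 (scale Ω q.1)).toReal / A) := by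
    fun_prop
  exact hclip.indicator (measurable_snd hΩo.measurableSet)

lemma UpperRegular.measure_load_ge_le (hμ : UpperRegular μ Q V) (hA : 0 < A) {r : ℝ} (hr : 0 < r)
    (w : X) : μ ({z | ENNReal.ofReal A ≤ load μ Ω Q z r} ∩ ball w r) ≤
      ENNReal.ofReal (V * 3 ^ Q * (V * 10 ^ Q) / A * r ^ Q) := by
  have hmeas : Measurable fun z => load μ Ω Q z r :=
    (measurable_load Ω Q).of_uncurry_right
  have hcheb := (mul_meas_ge_le_lintegral (μ := μ.restrict (ball w r)) hmeas
    (ENNReal.ofReal A)).trans (hμ.setLIntegral_load_le hr w)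
  rw [Measure.restrict_apply (measurableSet_le measurable_const hmeas), mul_comm,
    ← ENNReal.le_div_iff_mul_le (by simp [hA]) (by simp), ← ENNReal.ofReal_div_of_pos hA] at hcheb
  rwa [div_mul_eq_mul_div]

lemma LowerRegularOn.le_lintegral_bump (hθ : LowerRegularOn μ Ω Q θ) (hμ : UpperRegular μ Q V)
    (hΩ : Ω.Nontrivial) (hΩo : IsOpen Ω) (hA : 0 < A)
    (hA' : 2 * (V * 3 ^ Q * (V * 10 ^ Q) / A) = θ / 2 ^ Q) (hy : 0 < infDist y Ω) :
    ENNReal.ofReal (θ / 2 ^ Q / 2 * scale Ω y ^ Q) ≤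
      ∫⁻ z, ENNReal.ofReal (bump μ Ω Q A y z) ∂μ := by
  obtain ⟨w, hw, hyw⟩ := exists_mem_dist_lt_mul_infDist hΩ.nonempty
    (by norm_num : (1 : ℝ) < 3 / 2) hy
  have hs := scale_pos hΩ hy
  set B := {z | ENNReal.ofReal A ≤ load μ Ω Q z (scale Ω y)}
  set a := θ / 2 ^ Q / 2 * scale Ω y ^ Q
  have ha : 0 ≤ a := by
    have := hθ.const_pos
    positivity
  have hball : ENNReal.ofReal a + ENNReal.ofReal a ≤ μ (ball w (scale Ω y / 2) ∩ Ω) := by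
    have haa : a + a = θ * (scale Ω y / 2) ^ Q := by
      rw [Real.div_rpow hs.le (by norm_num)]
      ring
    rw [← ENNReal.ofReal_add ha ha, haa]
    exact hθ.le_measure_ball_inter w hw (scale Ω y / 2) (by positivity)
      fun hb => by linarith [scale_le_diam hb y, diam_pos hΩ hb]
  have hbad : μ (B ∩ ball w (scale Ω y)) ≤ ENNReal.ofReal a := by
    refine (hμ.measure_load_ge_le hA hs w).trans (ENNReal.ofReal_le_ofReal ?_)
    have : V * 3 ^ Q * (V * 10 ^ Q) / A = θ / 2 ^ Q / 2 := by linarith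
    rw [this]
  have hgood : (ball w (scale Ω y / 2) ∩ Ω) \ B ⊆
      {z | 1 ≤ ENNReal.ofReal (bump μ Ω Q A y z)} := by
    rintro z ⟨⟨hzw, hz⟩, hzB⟩
    have hyz : dist y z ≤ 2 * infDist y Ω := by
      linarith [dist_triangle_right y z w, mem_ball.1 hzw, scale_le_infDist Ω y]
    have hload := ENNReal.toReal_le_of_le_ofReal hA.le (not_le.1 hzB).le
    simp [bump_eq_one hy hz hyz hA hload]
  have hsplit : μ (ball w (scale Ω y / 2) ∩ Ω) ≤
      ∫⁻ z, ENNReal.ofReal (bump μ Ω Q A y z) ∂μ + ENNReal.ofReal a := by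
    refine (measure_le_inter_add_sdiff μ _ B).trans (add_comm (μ _) _ ▸ add_le_add ?_ ?_)
    · have := mul_meas_ge_le_lintegral (μ := μ)
        ((measurable_bump hΩo).of_uncurry_left (f := bump μ Ω Q A) (x := y)).ennreal_ofReal 1
      exact (measure_mono hgood).trans (by simpa using this)
    · refine le_trans (measure_mono ?_) hbad
      rintro z ⟨⟨hzw, -⟩, hzB⟩
      exact ⟨hzB, ball_subset_ball (by linarith) hzw⟩
  exact (ENNReal.add_le_add_iff_right ENNReal.ofReal_ne_top).1 (hball.trans hsplit)

lemma UpperRegular.integrable_bump (hμ : UpperRegular μ Q V) (hΩ : Ω.Nontrivial) (hΩo : IsOpen Ω)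
    (hy : 0 < infDist y Ω) : Integrable (bump μ Ω Q A y) μ := by
  have hsub : Function.support (bump μ Ω Q A y) ⊆ Ω ∩ ball y (5 * infDist y Ω) := fun z hz =>
    mem_inter_ball_of_bump_ne_zero (by rw [dist_self]; positivity) hz
  rw [← integrableOn_iff_integrable_of_support_subset hsub]
  refine Measure.integrableOn_of_bounded (M := 1)
    ((hμ.measure_inter_ball_le hΩ hy).trans_lt ENNReal.ofReal_lt_top).ne
    (measurable_bump hΩo).of_uncurry_left.aestronglyMeasurable (Eventually.of_forall fun z => ?_)
  rw [Real.norm_eq_abs, abs_of_nonneg (bump_nonneg y z)]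
  exact bump_le_one y z

lemma LowerRegularOn.le_integral_bump (hθ : LowerRegularOn μ Ω Q θ) (hμ : UpperRegular μ Q V)
    (hΩ : Ω.Nontrivial) (hΩo : IsOpen Ω) (hA : 0 < A)
    (hA' : 2 * (V * 3 ^ Q * (V * 10 ^ Q) / A) = θ / 2 ^ Q) (hy : 0 < infDist y Ω) :
    θ / 2 ^ Q / 2 * scale Ω y ^ Q ≤ ∫ z, bump μ Ω Q A y z ∂μ := by
  refine (ENNReal.ofReal_le_ofReal_iff (integral_nonneg (bump_nonneg y))).1 ?_
  rw [ofReal_integral_eq_lintegral_ofReal (hμ.integrable_bump hΩ hΩo hy)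
    (Eventually.of_forall (bump_nonneg y))]
  exact hθ.le_lintegral_bump hμ hΩ hΩo hA hA' hy

lemma UpperRegular.abs_integral_bump_sub_le (hμ : UpperRegular μ Q V) (hQ : 0 ≤ Q)
    (hΩ : Ω.Nontrivial) (hΩo : IsOpen Ω) (hA : 0 < A) (hxy : dist x y < infDist x Ω / 2) :
    |∫ z, bump μ Ω Q A x z ∂μ - ∫ z, bump μ Ω Q A y z ∂μ| ≤
      (8 + 18 * V * 14 ^ Q / A) * (dist x y / infDist x Ω) * (V * 5 ^ Q * scale Ω x ^ Q) := by
  have := hμ.const_pos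
  have hx : 0 < infDist x Ω := by linarith [dist_nonneg (x := x) (y := y)]
  have hs := scale_pos hΩ hx
  have hball := hμ.measure_inter_ball_le hΩ hx
  have hzero : ∀ z, z ∉ Ω ∩ ball x (5 * infDist x Ω) →
      bump μ Ω Q A x z - bump μ Ω Q A y z = 0 := by
    intro z hz
    have hxz := mt (mem_inter_ball_of_bump_ne_zero (μ := μ) (Q := Q) (A := A) (x := x) (y := x)
      (by rw [dist_self]; positivity)) hz
    have hyz := mt (mem_inter_ball_of_bump_ne_zero (μ := μ) (Q := Q) (A := A) hxy) hz
    rw [not_not.1 hxz, not_not.1 hyz, sub_zero]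
  rw [← integral_sub (hμ.integrable_bump hΩ hΩo hx)
      (hμ.integrable_bump hΩ hΩo (infDist_pos_of_dist_lt hxy)),
    ← setIntegral_eq_integral_of_forall_compl_eq_zero hzero]
  refine (norm_setIntegral_le_of_norm_le_const (f := fun z => bump μ Ω Q A x z - bump μ Ω Q A y z)
    (hball.trans_lt ENNReal.ofReal_lt_top)
    fun z _ => hμ.abs_bump_sub_le hQ hΩ hΩo hA hxy z).trans ?_
  gcongr
  exact ENNReal.toReal_le_of_le_ofReal (by positivity) hball

lemma abs_div_sub_div_le {b b' m m' c ε η : ℝ} (hc : 0 < c) (hb' : 0 ≤ b') (hb'₁ : b' ≤ 1)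
    (hm : c ≤ m) (hm' : c ≤ m') (hbb' : |b - b'| ≤ ε) (hmm' : |m - m'| ≤ η) :
    |b / m - b' / m'| ≤ ε / c + η / c ^ 2 := by
  have hm₀ : 0 < m := by linarith
  have hm'₀ : 0 < m' := by linarith
  have heq : b / m - b' / m' = (b - b') / m - b' * (m - m') / (m * m') := by
    field_simp
    ring
  calc |b / m - b' / m'| ≤ |b - b'| / m + b' * |m - m'| / (m * m') := by
        rw [heq]
        refine (abs_sub _ _).trans_eq ?_
        rw [abs_div, abs_div, abs_mul, abs_of_pos hm₀, abs_of_nonneg hb',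
          abs_of_pos (mul_pos hm₀ hm'₀)]
    _ ≤ ε / c + 1 * η / (c * c) := by
        have := (abs_nonneg _).trans hbb'
        have := (abs_nonneg _).trans hmm'
        gcongr
    _ = ε / c + η / c ^ 2 := by rw [one_mul, sq]

lemma measurable_reflectionKernel (hΩo : IsOpen Ω) :
    Measurable (Function.uncurry (reflectionKernel μ Ω Q A)) :=
  (measurable_bump hΩo).div
    ((measurable_bump hΩo).stronglyMeasurable.integral_prod_right.measurable.comp measurable_fst)

lemma UpperRegular.lintegral_reflectionKernel (hμ : UpperRegular μ Q V) (hΩ : Ω.Nontrivial)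
    (hΩo : IsOpen Ω) (hy : 0 < infDist y Ω) (hpos : 0 < ∫ w, bump μ Ω Q A y w ∂μ) :
    ∫⁻ z, ENNReal.ofReal (reflectionKernel μ Ω Q A y z) ∂μ = 1 := by
  simp only [reflectionKernel]
  rw [← ofReal_integral_eq_lintegral_ofReal ((hμ.integrable_bump hΩ hΩo hy).div_const _)
    (Eventually.of_forall (reflectionKernel_nonneg y)), integral_div, div_self hpos.ne',
    ENNReal.ofReal_one]

lemma UpperRegular.abs_reflectionKernel_sub_le (hμ : UpperRegular μ Q V) (hQ : 0 ≤ Q)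
    {c : ℝ} (hc : 0 < c)
    (hm : ∀ y, 0 < infDist y Ω → c * scale Ω y ^ Q ≤ ∫ w, bump μ Ω Q A y w ∂μ)
    (hΩ : Ω.Nontrivial) (hΩo : IsOpen Ω) (hA : 0 < A) (hxy : dist x y < infDist x Ω / 2) (z : X) :
    |reflectionKernel μ Ω Q A x z - reflectionKernel μ Ω Q A y z| ≤
      (8 + 18 * V * 14 ^ Q / A) * (2 ^ Q / c + V * 5 ^ Q * (2 ^ Q) ^ 2 / c ^ 2) *
        (dist x y / infDist x Ω) / scale Ω x ^ Q := by
  have hx : 0 < infDist x Ω := by linarith [dist_nonneg (x := x) (y := y)]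
  have hy := infDist_pos_of_dist_lt hxy
  have hs := scale_pos hΩ hx
  have hsy : scale Ω x / 2 ≤ scale Ω y := by
    linarith [abs_le.1 (abs_scale_sub_le_half hx hxy)]
  have hmx : c * (scale Ω x / 2) ^ Q ≤ ∫ w, bump μ Ω Q A x w ∂μ := by
    refine le_trans ?_ (hm x hx)
    gcongr
    linarith
  have hmy : c * (scale Ω x / 2) ^ Q ≤ ∫ w, bump μ Ω Q A y w ∂μ := by
    refine le_trans ?_ (hm y hy)
    gcongr
  refine (abs_div_sub_div_le (by positivity) (bump_nonneg y z) (bump_le_one y z) hmx hmy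
    (hμ.abs_bump_sub_le hQ hΩ hΩo hA hxy z)
    (hμ.abs_integral_bump_sub_le hQ hΩ hΩo hA hxy)).trans_eq ?_
  rw [Real.div_rpow hs.le (by norm_num)]
  field_simp

theorem LowerRegularOn.exists_isReflectionKernel (hθ : LowerRegularOn μ Ω Q θ)
    (hμ : UpperRegular μ Q V) (hQ : 0 ≤ Q) (hΩ : Ω.Nontrivial) (hΩo : IsOpen Ω) :
    ∃ C p, IsReflectionKernel μ Ω Q C p := by
  have hV := hμ.const_pos
  have hθ₀ := hθ.const_pos
  set c := θ / 2 ^ Q / 2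
  set A := 2 * (V * 3 ^ Q * (V * 10 ^ Q)) / (θ / 2 ^ Q)
  have hc : 0 < c := by positivity
  have hA : 0 < A := by positivity
  have hm : ∀ y, 0 < infDist y Ω → c * scale Ω y ^ Q ≤ ∫ w, bump μ Ω Q A y w ∂μ := fun y hy =>
    hθ.le_integral_bump hμ hΩ hΩo hA (by simp only [A]; field_simp) hy
  set C₁ := c⁻¹
  set C₂ := c⁻¹ * (2 ^ Q * (2 * A))
  set C₃ := (8 + 18 * V * 14 ^ Q / A) * (2 ^ Q / c + V * 5 ^ Q * (2 ^ Q) ^ 2 / c ^ 2)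
  have hC₁ : 0 < C₁ := by positivity
  have hC₂ : 0 < C₂ := by positivity
  have hC₃ : 0 < C₃ := by positivity
  refine ⟨C₁ + C₂ + C₃, reflectionKernel μ Ω Q A, ⟨by positivity, measurable_reflectionKernel hΩo,
    reflectionKernel_nonneg, fun y hy => ?_, fun y z h => ?_, fun y z hy => ?_, fun z => ?_,
    fun x y z hxy => ?_, fun x hx y hy => ?_⟩⟩
  · have hs := scale_pos hΩ hy
    exact hμ.lintegral_reflectionKernel hΩ hΩo hy ((by positivity : _ < _).trans_le (hm y hy))
  · exact mem_and_dist_lt_of_bump_ne_zero (div_ne_zero_iff.1 h).1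
  · have hs := scale_pos hΩ hy
    refine (reflectionKernel_le hΩ hy hc (hm y hy) z).trans ?_
    rw [mul_div_assoc']
    gcongr
    nlinarith [bump_le_one (μ := μ) (Ω := Ω) (Q := Q) (A := A) y z]
  · exact (hμ.lintegral_nearSet_reflectionKernel_le hQ hc hm hΩ hΩo hA z).trans
      (ENNReal.ofReal_le_ofReal (by linarith))
  · have hd : 0 < infDist x Ω := by linarith [dist_nonneg (x := x) (y := y)]
    have hs := scale_pos hΩ hd
    refine (hμ.abs_reflectionKernel_sub_le hQ hc hm hΩ hΩo hA hxy z).trans ?_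
    gcongr
    linarith
  · ext z
    simp only [reflectionKernel, bump_eq_of_mem_farSet hΩ hx hy]

end Kernel

/-! ### Averages against a reflection kernel -/

section Reflect

variable {X : Type*} [MeasurableSpace X] {μ : Measure X} {p : X → X → ℝ} {u : X → ℝ}

/-- The average of `u` against the kernel `p y`: the value at `y` of the extension of `u`. -/
noncomputable def reflect (μ : Measure X) (p : X → X → ℝ) (u : X → ℝ) (y : X) : ℝ :=
  ∫ z, p y z * u z ∂μ

lemma measurable_reflect [SFinite μ] (hp : Measurable (Function.uncurry p)) (hu : Measurable u) :
    Measurable (reflect μ p u) :=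
  (StronglyMeasurable.integral_prod_right
    (f := fun y z => p y z * u z) (hp.mul (hu.comp measurable_snd)).stronglyMeasurable).measurable

variable [MetricSpace X] {Ω : Set X} {Q C : ℝ} {φ : ℝ → ℝ} {x y : X}

/-- Integrability on the bounded parts of `Ω`, right up to the boundary. -/
def BddIntegrableOn (u : X → ℝ) (Ω : Set X) (μ : Measure X) : Prop :=
  ∀ x R, IntegrableOn u (Ω ∩ ball x R) μ

namespace IsReflectionKernel

lemma measurable_right (hp : IsReflectionKernel μ Ω Q C p) (y : X) : Measurable (p y) :=
  hp.measurable.of_uncurry_left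

lemma eq_zero_of_infDist_eq_zero (hp : IsReflectionKernel μ Ω Q C p) (hy : infDist y Ω = 0)
    (z : X) : p y z = 0 := by
  by_contra h
  linarith [(hp.mem_and_dist_lt y z h).2, dist_nonneg (x := y) (y := z)]

lemma lintegral_ofReal_mul_eq_setLIntegral (hp : IsReflectionKernel μ Ω Q C p)
    (y : X) (F : X → ℝ≥0∞) :
    ∫⁻ z, ENNReal.ofReal (p y z) * F z ∂μ = ∫⁻ z in Ω, ENNReal.ofReal (p y z) * F z ∂μ := by
  refine (setLIntegral_eq_of_support_subset fun z hz => ?_).symm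
  have hpos := pos_of_ne_zero (left_ne_zero_of_mul hz)
  exact (hp.mem_and_dist_lt y z (ENNReal.ofReal_pos.1 hpos).ne').1

lemma integrable (hp : IsReflectionKernel μ Ω Q C p) (hy : 0 < infDist y Ω) :
    Integrable (p y) μ := by
  refine ⟨(hp.measurable_right y).aestronglyMeasurable, ?_⟩
  rw [hasFiniteIntegral_iff_ofReal (Eventually.of_forall (hp.nonneg y)), hp.lintegral_eq_one y hy]
  exact ENNReal.one_lt_top

lemma integrable_mul (hp : IsReflectionKernel μ Ω Q C p) (hu : BddIntegrableOn u Ω μ) (y : X) :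
    Integrable (fun z => p y z * u z) μ := by
  rcases (infDist_nonneg (x := y) (s := Ω)).eq_or_lt' with hy | hy
  · simp [hp.eq_zero_of_infDist_eq_zero hy]
  have hsub : Function.support (fun z => p y z * u z) ⊆ Ω ∩ ball y (3 * infDist y Ω) := by
    intro z hz
    have h := hp.mem_and_dist_lt y z (left_ne_zero_of_mul hz)
    exact ⟨h.1, mem_ball'.2 h.2⟩
  rw [← integrableOn_iff_integrable_of_support_subset hsub]
  refine (hu y _).bdd_mul (hp.measurable_right y).aestronglyMeasurable
    (Eventually.of_forall fun z => ?_) (c := C / scale Ω y ^ Q)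
  rw [Real.norm_eq_abs, abs_of_nonneg (hp.nonneg y z)]
  exact hp.le_div y z hy

lemma integral_mul_sub (hp : IsReflectionKernel μ Ω Q C p) (hu : BddIntegrableOn u Ω μ)
    (hy : 0 < infDist y Ω) (c : ℝ) :
    ∫ z, p y z * (c - u z) ∂μ = c - reflect μ p u y := by
  have hone : ∫ z, p y z ∂μ = 1 := by
    rw [integral_eq_lintegral_of_nonneg_ae (Eventually.of_forall (hp.nonneg y))
      (hp.measurable_right y).aestronglyMeasurable, hp.lintegral_eq_one y hy, ENNReal.toReal_one]
  simp only [mul_sub]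
  rw [integral_sub ((hp.integrable hy).mul_const c) (hp.integrable_mul hu y),
    integral_mul_const, hone, one_mul, reflect]

lemma evenYoung_sub_reflect_le (hp : IsReflectionKernel μ Ω Q C p) (hφ : IsYoung φ)
    (hu : BddIntegrableOn u Ω μ) (hy : 0 < infDist y Ω) (c : ℝ) :
    evenYoung φ (c - reflect μ p u y) ≤
      ∫⁻ z, ENNReal.ofReal (p y z) * evenYoung φ (c - u z) ∂μ := by
  rw [← hp.integral_mul_sub hu hy c]
  exact evenYoung_integral_mul_le hφ (hp.measurable_right y) (hp.nonneg y)
    (hp.lintegral_eq_one y hy).le _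

lemma reflect_eq_of_mem_farSet (hp : IsReflectionKernel μ Ω Q C p) (hx : x ∈ farSet Ω)
    (hy : y ∈ farSet Ω) : reflect μ p u x = reflect μ p u y := by
  rw [reflect, hp.eq_of_mem_farSet x hx y hy, reflect]

lemma lintegral_nearSet_lintegral_le [OpensMeasurableSpace X] [SFinite μ]
    (hp : IsReflectionKernel μ Ω Q C p) {F : X → ℝ≥0∞} (hF : Measurable F) :
    ∫⁻ y in nearSet Ω, (∫⁻ z, ENNReal.ofReal (p y z) * F z ∂μ) ∂μ ≤
      ENNReal.ofReal C * ∫⁻ z in Ω, F z ∂μ := by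
  have hm : Measurable (Function.uncurry fun y z => ENNReal.ofReal (p y z) * F z) :=
    hp.measurable.ennreal_ofReal.mul (hF.comp measurable_snd)
  simp only [hp.lintegral_ofReal_mul_eq_setLIntegral]
  rw [lintegral_lintegral_swap hm.aemeasurable, ← lintegral_const_mul _ hF]
  refine lintegral_mono fun z => ?_
  rw [lintegral_mul_const _ hp.measurable.of_uncurry_right.ennreal_ofReal]
  gcongr
  exact hp.overlap z

end IsReflectionKernel

end Reflect

/-! ### Modular estimates -/

/-- The modular `∫_Ω ∫_Ω φ(|u(x) - u(y)|) |x - y|^{-γ}` of the fractional seminorm. -/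
noncomputable def modular {X : Type*} [PseudoMetricSpace X] [MeasurableSpace X] (μ : Measure X)
    (φ : ℝ → ℝ) (γ : ℝ) (Ω : Set X) (u : X → ℝ) : ℝ≥0∞ :=
  ∫⁻ x in Ω, ∫⁻ y in Ω, evenYoung φ (u x - u y) * riesz γ x y ∂μ ∂μ

lemma modular_const_mul_le {X : Type*} [PseudoMetricSpace X] [MeasurableSpace X] {μ : Measure X}
    {φ : ℝ → ℝ} (hφ : IsYoung φ) {γ a : ℝ} {Ω : Set X} (ha₀ : 0 ≤ a) (ha₁ : a ≤ 1) (u : X → ℝ) :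
    modular μ φ γ Ω (fun x => a * u x) ≤ ENNReal.ofReal a * modular μ φ γ Ω u := by
  simp only [modular, ← lintegral_const_mul' _ _ ENNReal.ofReal_ne_top, ← mul_sub, ← mul_assoc]
  gcongr
  exact evenYoung_mul_le hφ ha₀ ha₁ _

lemma measurable_setLIntegral_evenYoung_mul_riesz {X : Type*} [PseudoMetricSpace X]
    [MeasurableSpace X] [OpensMeasurableSpace X] [SecondCountableTopology X] {μ : Measure X}
    [SFinite μ] {φ : ℝ → ℝ} {γ : ℝ} {Ω : Set X} {u : X → ℝ} (hφ : IsYoung φ) (hu : Measurable u) :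
    Measurable fun x => ∫⁻ y in Ω, evenYoung φ (u x - u y) * riesz γ x y ∂μ :=
  Measurable.lintegral_prod_right (((measurable_evenYoung hφ).comp
    ((hu.comp measurable_fst).sub (hu.comp measurable_snd))).mul (measurable_riesz γ))

section Separated

variable {X : Type*} [MetricSpace X] {Ω : Set X}

/-- The points `x` off the closure of `Ω` for which `x` and `y` are at least as far from each other
as half their distances to `Ω`. -/
def separatedSet (Ω : Set X) (y : X) : Set X :=
  {x | 0 < infDist x Ω ∧ infDist x Ω ≤ 2 * dist y x ∧ infDist y Ω ≤ 2 * dist y x}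

variable [MeasurableSpace X] [OpensMeasurableSpace X]

lemma measurableSet_setOf_infDist_pos (Ω : Set X) : MeasurableSet {x | 0 < infDist x Ω} :=
  measurableSet_lt measurable_const (by fun_prop)

lemma measurableSet_separatedSet (Ω : Set X) (y : X) : MeasurableSet (separatedSet Ω y) :=
  have hd : Measurable fun x => 2 * dist y x := by fun_prop
  (measurableSet_setOf_infDist_pos Ω).inter
    ((measurableSet_le measurable_infDist hd).inter (measurableSet_le measurable_const hd))

/-- The constant of the separated estimates: the first summand comes from the overlap of the
kernel, the second one from the tail of the Riesz kernel at the diameter of `Ω`. -/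
noncomputable def separatedConst (Q V C β : ℝ) : ℝ≥0∞ :=
  ENNReal.ofReal (13 ^ (Q + β) * C + C * ((Q + β) * V / β))

lemma separatedConst_ne_top {Q V C β : ℝ} : separatedConst Q V C β ≠ ∞ :=
  ENNReal.ofReal_ne_top

namespace IsReflectionKernel

variable {μ : Measure X} {Q V C β γ : ℝ} {p : X → X → ℝ} {φ : ℝ → ℝ} {u : X → ℝ} {y z w : X}

lemma lintegral_nearSet_riesz_mul_le (hp : IsReflectionKernel μ Ω Q C p) (hγ : 0 ≤ γ)
    (hyw : dist y w ≤ 3 * infDist y Ω) (hzw : z ≠ w) :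
    ∫⁻ x in separatedSet Ω y ∩ nearSet Ω, riesz γ y x * ENNReal.ofReal (p x z) ∂μ ≤
      ENNReal.ofReal (13 ^ γ * C) * riesz γ w z := by
  have hpoint : ∀ x ∈ separatedSet Ω y ∩ nearSet Ω, riesz γ y x * ENNReal.ofReal (p x z) ≤
      ENNReal.ofReal (13 ^ γ) * riesz γ w z * ENNReal.ofReal (p x z) := by
    rintro x ⟨⟨-, hx, hy⟩, -⟩
    rcases eq_or_ne (p x z) 0 with h | h
    · simp [h]
    gcongr
    refine riesz_le_of_dist_le hγ (by norm_num) (dist_pos.2 hzw.symm) ?_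
    linarith [(hp.mem_and_dist_lt x z h).2, dist_triangle w y x, dist_triangle w x z,
      dist_comm w y]
  calc _ ≤ ∫⁻ x in separatedSet Ω y ∩ nearSet Ω,
          ENNReal.ofReal (13 ^ γ) * riesz γ w z * ENNReal.ofReal (p x z) ∂μ :=
        setLIntegral_mono' ((measurableSet_separatedSet Ω y).inter (measurableSet_nearSet Ω)) hpoint
    _ = ENNReal.ofReal (13 ^ γ) * riesz γ w z *
          ∫⁻ x in separatedSet Ω y ∩ nearSet Ω, ENNReal.ofReal (p x z) ∂μ :=
        lintegral_const_mul _ hp.measurable.of_uncurry_right.ennreal_ofReal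
    _ ≤ ENNReal.ofReal (13 ^ γ) * riesz γ w z * ENNReal.ofReal C := by
        gcongr
        exact (lintegral_mono_set inter_subset_right).trans (hp.overlap z)
    _ = ENNReal.ofReal (13 ^ γ * C) * riesz γ w z := by
        rw [ENNReal.ofReal_mul (by positivity), mul_right_comm]

lemma lintegral_diff_nearSet_riesz_mul_le [SFinite μ] (hp : IsReflectionKernel μ Ω Q C p)
    (hμ : UpperRegular μ Q V) (hQ : 0 ≤ Q) (hβ : 0 < β) (hz : z ∈ Ω) (hw : w ∈ Ω) (hzw : z ≠ w) :
    ∫⁻ x in separatedSet Ω y \ nearSet Ω, riesz (Q + β) y x * ENNReal.ofReal (p x z) ∂μ ≤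
      ENNReal.ofReal (C * ((Q + β) * V / β)) * riesz (Q + β) w z := by
  rcases (separatedSet Ω y \ nearSet Ω).eq_empty_or_nonempty with h | ⟨x₀, hx₀, hx₀'⟩
  · simp [h]
  have hb := (two_mul_diam_le_of_notMem_nearSet hx₀.1 hx₀').1
  have hC := hp.const_pos
  have hV := hμ.const_pos
  have hdist : 0 < dist w z := dist_pos.2 hzw.symm
  have hD : dist w z ≤ diam Ω := dist_le_diam_of_mem hb hw hz
  have hD₀ : 0 < diam Ω := hdist.trans_le hD
  have hle : ∀ x ∈ separatedSet Ω y \ nearSet Ω, diam Ω ≤ dist y x ∧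
      p x z ≤ C / diam Ω ^ Q := by
    rintro x ⟨⟨hx, hxy, -⟩, hx'⟩
    refine ⟨by linarith [(two_mul_diam_le_of_notMem_nearSet hx hx').2], ?_⟩
    rw [← scale_of_mem_farSet (mem_farSet_of_notMem_nearSet hx hx')]
    exact hp.le_div x z hx
  calc _ ≤ ∫⁻ x in {x | diam Ω ≤ dist y x},
          riesz (Q + β) y x * ENNReal.ofReal (C / diam Ω ^ Q) ∂μ := by
        refine (setLIntegral_mono' ((measurableSet_separatedSet Ω y).diff
          (measurableSet_nearSet Ω)) fun x hx => ?_).trans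
          (lintegral_mono_set fun x hx => (hle x hx).1)
        gcongr
        exact (hle x hx).2
    _ ≤ ENNReal.ofReal ((Q + β) * V / β * diam Ω ^ (-β)) * ENNReal.ofReal (C / diam Ω ^ Q) := by
        rw [lintegral_mul_const' _ _ ENNReal.ofReal_ne_top]
        gcongr
        exact hμ.lintegral_riesz_tail_le hQ hβ hD₀ y
    _ ≤ ENNReal.ofReal (C * ((Q + β) * V / β)) * riesz (Q + β) w z := by
        rw [riesz, ← ENNReal.ofReal_mul (by positivity), ← ENNReal.ofReal_mul (by positivity)]
        refine ENNReal.ofReal_le_ofReal ?_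
        calc _ = C * ((Q + β) * V / β) * (diam Ω ^ (Q + β))⁻¹ := by
              rw [Real.rpow_neg hD₀.le, Real.rpow_add hD₀]
              field_simp
          _ ≤ _ := by gcongr

lemma lintegral_separatedSet_riesz_mul_le [SFinite μ] (hp : IsReflectionKernel μ Ω Q C p)
    (hμ : UpperRegular μ Q V) (hQ : 0 ≤ Q) (hβ : 0 < β) (hz : z ∈ Ω) (hw : w ∈ Ω)
    (hyw : dist y w ≤ 3 * infDist y Ω) (hzw : z ≠ w) :
    ∫⁻ x in separatedSet Ω y, riesz (Q + β) y x * ENNReal.ofReal (p x z) ∂μ ≤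
      separatedConst Q V C β * riesz (Q + β) w z := by
  have hC := hp.const_pos
  have hV := hμ.const_pos
  rw [← lintegral_inter_add_sdiff _ _ (measurableSet_nearSet Ω),
    separatedConst, ENNReal.ofReal_add (by positivity) (by positivity), add_mul]
  exact add_le_add (hp.lintegral_nearSet_riesz_mul_le (by positivity) hyw hzw)
    (hp.lintegral_diff_nearSet_riesz_mul_le hμ hQ hβ hz hw hzw)

variable [SecondCountableTopology X] [SFinite μ]

/-- Exchanging the integrals, the average of `|y - x|^{-Q-β}` over the points `x` that reflect to
`z` is at most a multiple of `|w - z|^{-Q-β}`. -/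
lemma lintegral_separatedSet_evenYoung_le (hp : IsReflectionKernel μ Ω Q C p)
    (hμ : UpperRegular μ Q V) (hQ : 0 ≤ Q) (hβ : 0 < β) (hφ : IsYoung φ) (hΩ : MeasurableSet Ω)
    (hum : Measurable u) (hu : BddIntegrableOn u Ω μ) (hw : w ∈ Ω)
    (hyw : dist y w ≤ 3 * infDist y Ω) :
    ∫⁻ x in separatedSet Ω y, evenYoung φ (u w - reflect μ p u x) * riesz (Q + β) y x ∂μ ≤
      separatedConst Q V C β *
        ∫⁻ z in Ω, evenYoung φ (u w - u z) * riesz (Q + β) w z ∂μ := by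
  have hφm := measurable_evenYoung hφ
  have hrm := measurable_riesz (X := X) (Q + β)
  have hpm := hp.measurable.ennreal_ofReal
  have hrpm : Measurable (Function.uncurry fun x z =>
      evenYoung φ (u w - u z) * (riesz (Q + β) y x * ENNReal.ofReal (p x z))) :=
    (hφm.comp (measurable_const.sub (hum.comp measurable_snd))).mul
      ((hrm.comp (measurable_const.prodMk measurable_fst)).mul hpm)
  calc _ ≤ ∫⁻ x in separatedSet Ω y, (∫⁻ z in Ω,
          evenYoung φ (u w - u z) * (riesz (Q + β) y x * ENNReal.ofReal (p x z)) ∂μ) ∂μ := by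
        refine setLIntegral_mono' (measurableSet_separatedSet Ω y) fun x hx => ?_
        refine (mul_le_mul_left (hp.evenYoung_sub_reflect_le hφ hu hx.1 (u w)) _).trans_eq ?_
        have hm : Measurable fun z => ENNReal.ofReal (p x z) * evenYoung φ (u w - u z) :=
          (hp.measurable_right x).ennreal_ofReal.mul (hφm.comp (measurable_const.sub hum))
        rw [hp.lintegral_ofReal_mul_eq_setLIntegral, ← lintegral_mul_const _ hm]
        refine lintegral_congr fun z => ?_
        ring
    _ = ∫⁻ z in Ω, evenYoung φ (u w - u z) *
          ∫⁻ x in separatedSet Ω y, riesz (Q + β) y x * ENNReal.ofReal (p x z) ∂μ ∂μ := by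
        rw [lintegral_lintegral_swap hrpm.aemeasurable]
        exact lintegral_congr fun z => lintegral_const_mul _
          ((hrm.comp measurable_prodMk_left).mul hp.measurable.of_uncurry_right.ennreal_ofReal)
    _ ≤ ∫⁻ z in Ω, separatedConst Q V C β * (evenYoung φ (u w - u z) * riesz (Q + β) w z) ∂μ := by
        refine setLIntegral_mono' hΩ fun z hz => ?_
        rcases eq_or_ne z w with rfl | hzw
        · simp [evenYoung_zero hφ]
        rw [mul_left_comm (separatedConst Q V C β)]
        gcongr
        exact hp.lintegral_separatedSet_riesz_mul_le hμ hQ hβ hz hw hyw hzw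
    _ = _ := lintegral_const_mul' _ _ separatedConst_ne_top

lemma setLIntegral_cross_le (hp : IsReflectionKernel μ Ω Q C p) (hμ : UpperRegular μ Q V)
    (hQ : 0 ≤ Q) (hβ : 0 < β) (hφ : IsYoung φ) (hΩ : MeasurableSet Ω) (hum : Measurable u)
    (hu : BddIntegrableOn u Ω μ) :
    ∫⁻ w in Ω, (∫⁻ x in {x | 0 < infDist x Ω},
        evenYoung φ (u w - reflect μ p u x) * riesz (Q + β) w x ∂μ) ∂μ ≤
      separatedConst Q V C β * modular μ φ (Q + β) Ω u := by
  rw [modular, ← lintegral_const_mul' _ _ separatedConst_ne_top]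
  refine setLIntegral_mono' hΩ fun w hw => ?_
  have hw₀ : infDist w Ω = 0 := infDist_zero_of_mem hw
  have hsub : {x | 0 < infDist x Ω} ⊆ separatedSet Ω w := fun x hx =>
    ⟨hx, by linarith [infDist_le_dist_of_mem (x := x) hw, dist_comm x w,
      dist_nonneg (x := x) (y := w)], by linarith [dist_nonneg (x := w) (y := x)]⟩
  exact (lintegral_mono_set hsub).trans
    (hp.lintegral_separatedSet_evenYoung_le hμ hQ hβ hφ hΩ hum hu hw (by simp [hw₀]))

lemma lintegral_separatedSet_reflect_le (hp : IsReflectionKernel μ Ω Q C p)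
    (hμ : UpperRegular μ Q V) (hQ : 0 ≤ Q) (hβ : 0 < β) (hφ : IsYoung φ) (hΩ : MeasurableSet Ω)
    (hum : Measurable u) (hu : BddIntegrableOn u Ω μ) (hy : 0 < infDist y Ω) :
    ∫⁻ x in separatedSet Ω y,
        evenYoung φ (reflect μ p u y - reflect μ p u x) * riesz (Q + β) y x ∂μ ≤
      ∫⁻ w, ENNReal.ofReal (p y w) * (separatedConst Q V C β *
        ∫⁻ z in Ω, evenYoung φ (u w - u z) * riesz (Q + β) w z ∂μ) ∂μ := by
  have hφm := measurable_evenYoung hφ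
  have hvm := measurable_reflect (μ := μ) hp.measurable hum
  have hm : Measurable (Function.uncurry fun x w => ENNReal.ofReal (p y w) *
      (evenYoung φ (u w - reflect μ p u x) * riesz (Q + β) y x)) :=
    ((hp.measurable_right y).ennreal_ofReal.comp measurable_snd).mul
      ((hφm.comp ((hum.comp measurable_snd).sub (hvm.comp measurable_fst))).mul
        ((measurable_riesz (Q + β)).comp (measurable_const.prodMk measurable_fst)))
  calc _ ≤ ∫⁻ x in separatedSet Ω y, (∫⁻ w, ENNReal.ofReal (p y w) *
          (evenYoung φ (u w - reflect μ p u x) * riesz (Q + β) y x) ∂μ) ∂μ := by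
        refine lintegral_mono fun x => ?_
        have hm' : Measurable fun w =>
            ENNReal.ofReal (p y w) * evenYoung φ (reflect μ p u x - u w) :=
          (hp.measurable_right y).ennreal_ofReal.mul (hφm.comp (measurable_const.sub hum))
        rw [evenYoung_sub_comm]
        refine (mul_le_mul_left (hp.evenYoung_sub_reflect_le hφ hu hy _) _).trans_eq ?_
        rw [← lintegral_mul_const _ hm']
        simp_rw [evenYoung_sub_comm (reflect μ p u x), mul_assoc]
    _ = ∫⁻ w, ENNReal.ofReal (p y w) * ∫⁻ x in separatedSet Ω y,
          evenYoung φ (u w - reflect μ p u x) * riesz (Q + β) y x ∂μ ∂μ := by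
        rw [lintegral_lintegral_swap hm.aemeasurable]
        exact lintegral_congr fun w => lintegral_const_mul' _ _ ENNReal.ofReal_ne_top
    _ ≤ _ := by
        refine lintegral_mono fun w => ?_
        rcases eq_or_ne (p y w) 0 with h | h
        · simp [h]
        obtain ⟨hw, hyw⟩ := hp.mem_and_dist_lt y w h
        gcongr
        exact hp.lintegral_separatedSet_evenYoung_le hμ hQ hβ hφ hΩ hum hu hw hyw.le

lemma setLIntegral_separated_le (hp : IsReflectionKernel μ Ω Q C p) (hμ : UpperRegular μ Q V)
    (hQ : 0 ≤ Q) (hβ : 0 < β) (hφ : IsYoung φ) (hΩ : MeasurableSet Ω) (hum : Measurable u)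
    (hu : BddIntegrableOn u Ω μ) :
    ∫⁻ y in nearSet Ω, (∫⁻ x in separatedSet Ω y,
        evenYoung φ (reflect μ p u y - reflect μ p u x) * riesz (Q + β) y x ∂μ) ∂μ ≤
      ENNReal.ofReal C * separatedConst Q V C β * modular μ φ (Q + β) Ω u := by
  have hF := measurable_setLIntegral_evenYoung_mul_riesz (μ := μ) (γ := Q + β) (Ω := Ω) hφ hum
  refine (setLIntegral_mono' (measurableSet_nearSet Ω) fun y hy =>
    hp.lintegral_separatedSet_reflect_le hμ hQ hβ hφ hΩ hum hu
      (infDist_pos_of_mem_nearSet hy)).trans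
    ((hp.lintegral_nearSet_lintegral_le (hF.const_mul _)).trans_eq ?_)
  rw [lintegral_const_mul _ hF, mul_assoc, modular]

end IsReflectionKernel

end Separated

section Local

variable {X : Type*} [MetricSpace X] [MeasurableSpace X] {Ω : Set X} {μ : Measure X}
  {Q V C β M : ℝ} {p : X → X → ℝ} {φ : ℝ → ℝ} {u : X → ℝ} {x y z w : X}

/-- The mean oscillation of `u` about the average `reflect μ p u x`, over the part of `Ω` that is
relevant for the averages at points near `x`. The integral is normalised by the upper bound of
`UpperRegular.measure_inter_ball_le` for the measure of that part. -/
noncomputable def meanOsc (μ : Measure X) (Ω : Set X) (Q V : ℝ) (p : X → X → ℝ) (u : X → ℝ)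
    (x : X) : ℝ :=
  (V * 5 ^ Q * scale Ω x ^ Q)⁻¹ *
    ∫ z in Ω ∩ ball x (5 * infDist x Ω), |u z - reflect μ p u x| ∂μ

lemma UpperRegular.meanOsc_nonneg (hμ : UpperRegular μ Q V) (x : X) :
    0 ≤ meanOsc μ Ω Q V p u x := by
  have hV := hμ.const_pos
  have hs := scale_nonneg Ω x
  exact mul_nonneg (by positivity) (integral_nonneg fun z => abs_nonneg _)

lemma UpperRegular.evenYoung_meanOsc_le (hμ : UpperRegular μ Q V) (hΩ : Ω.Nontrivial)
    (hφ : IsYoung φ) (hx : 0 < infDist x Ω) :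
    evenYoung φ (meanOsc μ Ω Q V p u x) ≤ ENNReal.ofReal (V * 5 ^ Q * scale Ω x ^ Q)⁻¹ *
      ∫⁻ z in Ω ∩ ball x (5 * infDist x Ω), evenYoung φ (u z - reflect μ p u x) ∂μ := by
  have hV := hμ.const_pos
  have hs := scale_pos hΩ hx
  set W := V * 5 ^ Q * scale Ω x ^ Q
  have hW₀ : 0 < W := by positivity
  set S := Ω ∩ ball x (5 * infDist x Ω)
  have hν : (ENNReal.ofReal W⁻¹ • μ.restrict S) univ ≤ 1 := by
    rw [Measure.smul_apply, Measure.restrict_apply_univ, smul_eq_mul]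
    calc ENNReal.ofReal W⁻¹ * μ S ≤ ENNReal.ofReal W⁻¹ * ENNReal.ofReal W := by
          gcongr
          exact hμ.measure_inter_ball_le hΩ hx
      _ = 1 := by
          rw [← ENNReal.ofReal_mul (by positivity), inv_mul_cancel₀ hW₀.ne', ENNReal.ofReal_one]
  have h := evenYoung_integral_le hφ hν fun z => |u z - reflect μ p u x|
  rw [integral_smul_measure, lintegral_smul_measure, ENNReal.toReal_ofReal (by positivity)] at h
  simpa only [evenYoung, abs_abs, smul_eq_mul, meanOsc] using h

/-- The constant of the estimate over pairs of points at distance less than half their distance to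
`Ω`. -/
noncomputable def localConst (Q V C β M : ℝ) : ℝ≥0∞ :=
  ENNReal.ofReal (2 ^ (Q + β + 1) * V * M) *
    (ENNReal.ofReal C * ENNReal.ofReal (2 ^ Q * 8 ^ (Q + β) / (V * 5 ^ Q)))

namespace IsReflectionKernel

lemma mem_inter_ball (hp : IsReflectionKernel μ Ω Q C p) (hxy : dist x y < infDist x Ω / 2)
    (h : p y z ≠ 0) : z ∈ Ω ∩ ball x (5 * infDist x Ω) := by
  obtain ⟨hz, hyz⟩ := hp.mem_and_dist_lt y z h
  refine ⟨hz, mem_ball'.2 ?_⟩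
  linarith [dist_triangle x y z, (abs_le.1 (abs_infDist_sub_le Ω x y)).1]

lemma norm_sub_mul_le_indicator (hp : IsReflectionKernel μ Ω Q C p)
    (hxy : dist x y < infDist x Ω / 2) (c : ℝ) (z : X) :
    ‖(p y z - p x z) * (c - u z)‖ ≤ (Ω ∩ ball x (5 * infDist x Ω)).indicator
      (fun z => C * (dist x y / infDist x Ω) / scale Ω x ^ Q * |u z - c|) z := by
  have hx : 0 < infDist x Ω := by linarith [dist_nonneg (x := x) (y := y)]
  rw [norm_mul, Real.norm_eq_abs, Real.norm_eq_abs, abs_sub_comm (p y z), abs_sub_comm c]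
  by_cases hz : z ∈ Ω ∩ ball x (5 * infDist x Ω)
  · rw [indicator_of_mem hz]
    gcongr
    exact hp.abs_sub_le x y z hxy
  · have hpx : p x z = 0 := by
      by_contra h
      exact hz (hp.mem_inter_ball (by simpa using half_pos hx) h)
    have hpy : p y z = 0 := by
      by_contra h
      exact hz (hp.mem_inter_ball hxy h)
    simp [hz, hpx, hpy]

lemma reflect_sub_reflect_eq_integral (hp : IsReflectionKernel μ Ω Q C p)
    (hu : BddIntegrableOn u Ω μ) (hx : 0 < infDist x Ω) (hy : 0 < infDist y Ω) :
    reflect μ p u x - reflect μ p u y = ∫ z, (p y z - p x z) * (reflect μ p u x - u z) ∂μ := by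
  have hintegrable : ∀ {a : X}, 0 < infDist a Ω →
      Integrable (fun z => p a z * (reflect μ p u x - u z)) μ := fun ha => by
    simp_rw [mul_sub]
    exact ((hp.integrable ha).mul_const _).sub (hp.integrable_mul hu _)
  simp_rw [sub_mul]
  rw [integral_sub (hintegrable hy) (hintegrable hx), hp.integral_mul_sub hu hy,
    hp.integral_mul_sub hu hx, sub_self, sub_zero]

lemma abs_reflect_sub_le [OpensMeasurableSpace X] (hp : IsReflectionKernel μ Ω Q C p)
    (hμ : UpperRegular μ Q V) (hΩ : MeasurableSet Ω) (hu : BddIntegrableOn u Ω μ)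
    (hxy : dist x y < infDist x Ω / 2) :
    |reflect μ p u x - reflect μ p u y| ≤
      C * V * 5 ^ Q * (dist x y / infDist x Ω * meanOsc μ Ω Q V p u x) := by
  have hx : 0 < infDist x Ω := by linarith [dist_nonneg (x := x) (y := y)]
  have hV := hμ.const_pos
  have hS : MeasurableSet (Ω ∩ ball x (5 * infDist x Ω)) := hΩ.inter measurableSet_ball
  have hSfin : μ (Ω ∩ ball x (5 * infDist x Ω)) ≠ ∞ := ((measure_mono inter_subset_right).trans
    (hμ.measure_ball_le x (by positivity))).trans_lt ENNReal.ofReal_lt_top |>.ne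
  have hosc : IntegrableOn (fun z => C * (dist x y / infDist x Ω) / scale Ω x ^ Q *
      |u z - reflect μ p u x|) (Ω ∩ ball x (5 * infDist x Ω)) μ :=
    ((hu x _).sub (integrableOn_const hSfin)).abs.const_mul _
  rw [hp.reflect_sub_reflect_eq_integral hu hx (infDist_pos_of_dist_lt hxy), ← Real.norm_eq_abs]
  refine (norm_integral_le_of_norm_le (hosc.integrable_indicator hS) (Eventually.of_forall
    (hp.norm_sub_mul_le_indicator hxy _))).trans_eq ?_
  rw [integral_indicator hS, integral_const_mul, meanOsc]
  field_simp

lemma lintegral_ball_reflect_le [OpensMeasurableSpace X] [SFinite μ]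
    (hp : IsReflectionKernel μ Ω Q C p) (hμ : UpperRegular μ Q V) (hΩ : MeasurableSet Ω)
    (hφ : IsYoung φ) (hQβ : 0 ≤ Q + β) (hM : CbetaLE β φ M) (hu : BddIntegrableOn u Ω μ)
    (hx : 0 < infDist x Ω) :
    ∫⁻ y in ball x (infDist x Ω / 2),
        evenYoung φ ((reflect μ p u x - reflect μ p u y) / (C * V * 5 ^ Q)) *
          riesz (Q + β) x y ∂μ ≤
      ENNReal.ofReal (2 ^ (Q + β + 1) * V * infDist x Ω ^ (-β) * M) *
        evenYoung φ (meanOsc μ Ω Q V p u x) := by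
  have hN : 0 < C * V * 5 ^ Q := mul_pos (mul_pos hp.const_pos hμ.const_pos) (by positivity)
  have hle : ∀ y ∈ ball x (infDist x Ω / 2),
      evenYoung φ ((reflect μ p u x - reflect μ p u y) / (C * V * 5 ^ Q)) * riesz (Q + β) x y ≤
        evenYoung φ (dist x y / infDist x Ω * meanOsc μ Ω Q V p u x) * riesz (Q + β) x y := by
    intro y hy
    gcongr
    refine evenYoung_mono hφ ?_
    rw [abs_div, abs_of_pos hN, div_le_iff₀' hN]
    exact (hp.abs_reflect_sub_le hμ hΩ hu (mem_ball'.1 hy)).trans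
      (mul_le_mul_of_nonneg_left (le_abs_self _) hN.le)
  refine (setLIntegral_mono' measurableSet_ball hle).trans ?_
  rcases (hμ.meanOsc_nonneg (Ω := Ω) (p := p) (u := u) x).eq_or_lt' with h | h
  · simp [h, evenYoung_zero hφ]
  · exact hμ.lintegral_young_dist_div_le hφ hQβ hM hx x h

/-- The constant comes from `|z - w| ≤ 8 d(x)` and `d(x) ≤ 2 s(x)`. -/
lemma rpow_mul_inv_le_riesz (hp : IsReflectionKernel μ Ω Q C p) (hμ : UpperRegular μ Q V)
    (hQ : 0 ≤ Q) (hβ : 0 < β) (hx : x ∈ nearSet Ω) (hz : z ∈ ball x (5 * infDist x Ω))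
    (hw : p x w ≠ 0) (hzw : z ≠ w) :
    ENNReal.ofReal (infDist x Ω ^ (-β)) * ENNReal.ofReal (V * 5 ^ Q * scale Ω x ^ Q)⁻¹ ≤
      ENNReal.ofReal (2 ^ Q * 8 ^ (Q + β) / (V * 5 ^ Q)) * riesz (Q + β) w z := by
  have hd := infDist_pos_of_mem_nearSet hx
  have hds : infDist x Ω < 2 * scale Ω x := hx
  have hV := hμ.const_pos
  have hdist : 0 < dist w z := dist_pos.2 hzw.symm
  have hwz : dist w z ≤ 8 * infDist x Ω := by
    linarith [dist_triangle w x z, (hp.mem_and_dist_lt x w hw).2, mem_ball'.1 hz, dist_comm w x]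
  rw [riesz, ← ENNReal.ofReal_mul (by positivity), ← ENNReal.ofReal_mul (by positivity)]
  refine ENNReal.ofReal_le_ofReal ?_
  calc infDist x Ω ^ (-β) * (V * 5 ^ Q * scale Ω x ^ Q)⁻¹
      ≤ infDist x Ω ^ (-β) * (V * 5 ^ Q * (infDist x Ω / 2) ^ Q)⁻¹ := by
        gcongr
        linarith
    _ = 2 ^ Q * 8 ^ (Q + β) / (V * 5 ^ Q) * ((8 * infDist x Ω) ^ (Q + β))⁻¹ := by
        rw [Real.mul_rpow (by norm_num) hd.le, Real.div_rpow hd.le (by norm_num),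
          Real.rpow_neg hd.le, Real.rpow_add hd]
        field_simp
    _ ≤ _ := by gcongr

variable [OpensMeasurableSpace X] [SFinite μ]

lemma rpow_mul_evenYoung_meanOsc_le (hp : IsReflectionKernel μ Ω Q C p) (hμ : UpperRegular μ Q V)
    (hQ : 0 ≤ Q) (hβ : 0 < β) (hφ : IsYoung φ) (hΩ : MeasurableSet Ω) (hΩ' : Ω.Nontrivial)
    (hum : Measurable u) (hu : BddIntegrableOn u Ω μ) (hx : x ∈ nearSet Ω) :
    ENNReal.ofReal (infDist x Ω ^ (-β)) * evenYoung φ (meanOsc μ Ω Q V p u x) ≤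
      ∫⁻ w, ENNReal.ofReal (p x w) * (ENNReal.ofReal (2 ^ Q * 8 ^ (Q + β) / (V * 5 ^ Q)) *
        ∫⁻ z in Ω, evenYoung φ (u w - u z) * riesz (Q + β) w z ∂μ) ∂μ := by
  have hd := infDist_pos_of_mem_nearSet hx
  have hφm := measurable_evenYoung hφ
  set S := Ω ∩ ball x (5 * infDist x Ω)
  have hS : MeasurableSet S := hΩ.inter measurableSet_ball
  set K := ENNReal.ofReal (infDist x Ω ^ (-β)) *
    ENNReal.ofReal (V * 5 ^ Q * scale Ω x ^ Q)⁻¹ with hK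
  have hK₀ : K ≠ ∞ := ENNReal.mul_ne_top ENNReal.ofReal_ne_top ENNReal.ofReal_ne_top
  have hm : Measurable (Function.uncurry fun z w =>
      ENNReal.ofReal (p x w) * evenYoung φ (u z - u w)) :=
    ((hp.measurable_right x).ennreal_ofReal.comp measurable_snd).mul
      (hφm.comp ((hum.comp measurable_fst).sub (hum.comp measurable_snd)))
  calc _ ≤ K * ∫⁻ z in S, evenYoung φ (u z - reflect μ p u x) ∂μ := by
        rw [hK, mul_assoc]
        gcongr
        exact hμ.evenYoung_meanOsc_le hΩ' hφ hd
    _ ≤ K * ∫⁻ z in S, (∫⁻ w, ENNReal.ofReal (p x w) * evenYoung φ (u z - u w) ∂μ) ∂μ := by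
        gcongr with z
        exact hp.evenYoung_sub_reflect_le hφ hu hd (u z)
    _ = ∫⁻ w, ENNReal.ofReal (p x w) * ∫⁻ z in S, K * evenYoung φ (u w - u z) ∂μ ∂μ := by
        rw [lintegral_lintegral_swap hm.aemeasurable, ← lintegral_const_mul' _ _ hK₀]
        refine lintegral_congr fun w => ?_
        rw [lintegral_const_mul' _ _ ENNReal.ofReal_ne_top, lintegral_const_mul' _ _ hK₀]
        simp_rw [mul_left_comm K, evenYoung_sub_comm (u w)]
    _ ≤ _ := by
        refine lintegral_mono fun w => ?_
        rcases eq_or_ne (p x w) 0 with h | h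
        · simp [h]
        gcongr ENNReal.ofReal (p x w) * ?_
        rw [← lintegral_const_mul' _ _ ENNReal.ofReal_ne_top]
        refine (setLIntegral_mono' hS fun z hz => ?_).trans (lintegral_mono_set inter_subset_left)
        rcases eq_or_ne z w with rfl | hzw
        · simp [evenYoung_zero hφ]
        rw [mul_comm K, mul_left_comm (ENNReal.ofReal (2 ^ Q * _ / _))]
        exact mul_le_mul_right (hp.rpow_mul_inv_le_riesz hμ hQ hβ hx hz.2 h hzw) _

lemma setLIntegral_local_le [SecondCountableTopology X] (hp : IsReflectionKernel μ Ω Q C p)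
    (hμ : UpperRegular μ Q V) (hQ : 0 ≤ Q) (hβ : 0 < β) (hφ : IsYoung φ) (hM : CbetaLE β φ M)
    (hΩ : MeasurableSet Ω) (hΩ' : Ω.Nontrivial) (hum : Measurable u) (hu : BddIntegrableOn u Ω μ) :
    ∫⁻ x in nearSet Ω, (∫⁻ y in ball x (infDist x Ω / 2),
        evenYoung φ ((reflect μ p u x - reflect μ p u y) / (C * V * 5 ^ Q)) *
          riesz (Q + β) x y ∂μ) ∂μ ≤
      localConst Q V C β M * modular μ φ (Q + β) Ω u := by
  have hF := measurable_setLIntegral_evenYoung_mul_riesz (μ := μ) (γ := Q + β) (Ω := Ω) hφ hum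
  calc _ ≤ ∫⁻ x in nearSet Ω, ENNReal.ofReal (2 ^ (Q + β + 1) * V * M) *
          (∫⁻ w, ENNReal.ofReal (p x w) * (ENNReal.ofReal (2 ^ Q * 8 ^ (Q + β) / (V * 5 ^ Q)) *
            ∫⁻ z in Ω, evenYoung φ (u w - u z) * riesz (Q + β) w z ∂μ) ∂μ) ∂μ := by
        refine setLIntegral_mono' (measurableSet_nearSet Ω) fun x hx => ?_
        refine (hp.lintegral_ball_reflect_le hμ hΩ hφ (by positivity) hM hu
          (infDist_pos_of_mem_nearSet hx)).trans ?_
        rw [mul_right_comm, ENNReal.ofReal_mul' (Real.rpow_nonneg infDist_nonneg _), mul_assoc]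
        gcongr
        exact hp.rpow_mul_evenYoung_meanOsc_le hμ hQ hβ hφ hΩ hΩ' hum hu hx
    _ ≤ _ := by
        rw [lintegral_const_mul' _ _ ENNReal.ofReal_ne_top, localConst,
          mul_assoc (ENNReal.ofReal _)]
        gcongr ENNReal.ofReal (2 ^ (Q + β + 1) * V * M) * ?_
        refine (hp.lintegral_nearSet_lintegral_le (hF.const_mul _)).trans_eq ?_
        rw [lintegral_const_mul _ hF, mul_assoc, modular]

end IsReflectionKernel

end Local

/-! ### The extension -/

section SymmetricIntegrals

variable {X : Type*} [MeasurableSpace X] {μ : Measure X} [SFinite μ]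

lemma lintegral_prod_self_le_two_mul_setLIntegral {f : X × X → ℝ≥0∞} {T : Set (X × X)}
    (hT : MeasurableSet T) (hf : ∀ q, f q.swap = f q)
    (h : ∀ᵐ q ∂μ.prod μ, f q ≠ 0 → q ∈ T ∨ q.swap ∈ T) :
    ∫⁻ q, f q ∂μ.prod μ ≤ 2 * ∫⁻ q in T, f q ∂μ.prod μ := by
  have hswap : ∫⁻ q in Prod.swap ⁻¹' T, f q ∂μ.prod μ = ∫⁻ q in T, f q ∂μ.prod μ := by
    rw [← Measure.measurePreserving_swap.setLIntegral_comp_preimage_emb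
      MeasurableEquiv.prodComm.measurableEmbedding f T]
    exact lintegral_congr fun q => (hf q).symm
  calc ∫⁻ q, f q ∂μ.prod μ ≤ ∫⁻ q, (T ∪ Prod.swap ⁻¹' T).indicator f q ∂μ.prod μ := by
        refine lintegral_mono_ae (h.mono fun q hq => ?_)
        by_cases hq' : q ∈ T ∪ Prod.swap ⁻¹' T
        · rw [indicator_of_mem hq']
        · rw [not_not.1 fun h₀ => hq' (hq h₀)]
          exact zero_le
    _ = ∫⁻ q in T ∪ Prod.swap ⁻¹' T, f q ∂μ.prod μ :=
        lintegral_indicator (hT.union (measurable_swap hT)) f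
    _ ≤ ∫⁻ q in T, f q ∂μ.prod μ + ∫⁻ q in Prod.swap ⁻¹' T, f q ∂μ.prod μ :=
        lintegral_union_le f _ _
    _ = 2 * ∫⁻ q in T, f q ∂μ.prod μ := by rw [hswap, two_mul]

lemma setLIntegral_prod_of_forall_mem {f : X × X → ℝ≥0∞} (hf : Measurable f) {A : Set X}
    {R : X → Set X} (hA : MeasurableSet A) (hR : MeasurableSet {q : X × X | q.2 ∈ R q.1}) :
    ∫⁻ q in {q | q.1 ∈ A ∧ q.2 ∈ R q.1}, f q ∂μ.prod μ =
      ∫⁻ x in A, (∫⁻ y in R x, f (x, y) ∂μ) ∂μ := by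
  have hT : MeasurableSet {q : X × X | q.1 ∈ A ∧ q.2 ∈ R q.1} := (measurable_fst hA).inter hR
  rw [← lintegral_indicator hT, lintegral_prod _ (hf.indicator hT).aemeasurable,
    ← lintegral_indicator hA]
  refine lintegral_congr fun x => ?_
  by_cases hx : x ∈ A
  · have hRx : MeasurableSet (R x) := measurable_prodMk_left hR
    rw [indicator_of_mem hx, ← lintegral_indicator hRx]
    refine lintegral_congr fun y => ?_
    simp [indicator, hx]
  · simp [indicator, hx]

end SymmetricIntegrals

section Extend

variable {X : Type*} [MeasurableSpace X] {Ω : Set X} {μ : Measure X}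
  {Q V C β M A : ℝ} {p : X → X → ℝ} {φ : ℝ → ℝ} {u v : X → ℝ} {x y : X}

/-- The extension of `u`: the function `u` itself on `Ω`, the average of `u` against `p` off the
closure of `Ω`, and `0` on the rest of the boundary. -/
noncomputable def extend (μ : Measure X) (Ω : Set X) (p : X → X → ℝ) (u : X → ℝ) (y : X) : ℝ :=
  Ω.indicator u y + reflect μ p u y

lemma extend_smul (c : ℝ) : extend μ Ω p (c • u) = c • extend μ Ω p u := by
  ext y
  simp only [extend, reflect, Pi.smul_apply, smul_eq_mul, mul_left_comm _ c, integral_const_mul,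
    mul_add]
  congr 1
  exact indicator_const_smul_apply Ω c u y

/-- The constant of the modular estimate for the extension, one summand for each kind of pairs of
points: both in `Ω`, one in `Ω`, far apart and close to each other. -/
noncomputable def extendConst (Q V C β M : ℝ) : ℝ≥0∞ :=
  2 * (1 + separatedConst Q V C β + ENNReal.ofReal C * separatedConst Q V C β +
    localConst Q V C β M)

lemma extendConst_ne_top : extendConst Q V C β M ≠ ∞ := by
  simp [extendConst, separatedConst, localConst, ENNReal.mul_eq_top]

variable [MetricSpace X]

/-- The pairs of points over which the modular of an extension is estimated: both in `Ω`, one in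
`Ω`, far apart and close to each other. -/
def coveringPairs (Ω : Set X) : Set (X × X) :=
  {q | q.1 ∈ Ω ∧ q.2 ∈ Ω} ∪ {q | q.1 ∈ Ω ∧ q.2 ∈ {y | 0 < infDist y Ω}} ∪
    {q | q.1 ∈ nearSet Ω ∧ q.2 ∈ separatedSet Ω q.1} ∪
    {q | q.1 ∈ nearSet Ω ∧ q.2 ∈ ball q.1 (infDist q.1 Ω / 2)}

section Measurability

variable [OpensMeasurableSpace X] [SecondCountableTopology X]

lemma measurableSet_setOf_mem_separatedSet (Ω : Set X) :
    MeasurableSet {q : X × X | q.2 ∈ separatedSet Ω q.1} := by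
  have hd : Measurable fun q : X × X => 2 * dist q.1 q.2 := by fun_prop
  have h₁ : Measurable fun q : X × X => infDist q.1 Ω := by fun_prop
  have h₂ : Measurable fun q : X × X => infDist q.2 Ω := by fun_prop
  exact (measurableSet_lt measurable_const h₂).inter
    ((measurableSet_le h₂ hd).inter (measurableSet_le h₁ hd))

lemma measurableSet_setOf_mem_ball_infDist (Ω : Set X) :
    MeasurableSet {q : X × X | q.2 ∈ ball q.1 (infDist q.1 Ω / 2)} :=
  measurableSet_lt (f := fun q : X × X => dist q.2 q.1) (g := fun q => infDist q.1 Ω / 2)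
    (by fun_prop) (by fun_prop)

lemma measurableSet_coveringPairs (hΩ : MeasurableSet Ω) : MeasurableSet (coveringPairs Ω) := by
  have hnear : MeasurableSet {q : X × X | q.1 ∈ nearSet Ω} :=
    measurable_fst (measurableSet_nearSet Ω)
  exact (((hΩ.prod hΩ).union (hΩ.prod (measurableSet_setOf_infDist_pos Ω))).union
    (hnear.inter (measurableSet_setOf_mem_separatedSet Ω))).union
    (hnear.inter (measurableSet_setOf_mem_ball_infDist Ω))

lemma modular_univ_le_two_mul [SFinite μ] (hφ : IsYoung φ) (hΩ : MeasurableSet Ω) (γ : ℝ)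
    (hv : Measurable v) (hcover : ∀ᵐ q ∂μ.prod μ,
      v q.1 ≠ v q.2 → q ∈ coveringPairs Ω ∨ q.swap ∈ coveringPairs Ω) :
    modular μ φ γ univ v ≤ 2 * (modular μ φ γ Ω v +
      (∫⁻ x in Ω, (∫⁻ y in {y | 0 < infDist y Ω}, evenYoung φ (v x - v y) * riesz γ x y ∂μ) ∂μ) +
      (∫⁻ x in nearSet Ω,
        (∫⁻ y in separatedSet Ω x, evenYoung φ (v x - v y) * riesz γ x y ∂μ) ∂μ) +
      (∫⁻ x in nearSet Ω,
        (∫⁻ y in ball x (infDist x Ω / 2), evenYoung φ (v x - v y) * riesz γ x y ∂μ) ∂μ)) := by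
  set f : X × X → ℝ≥0∞ := fun q => evenYoung φ (v q.1 - v q.2) * riesz γ q.1 q.2 with hf
  have hfm : Measurable f := ((measurable_evenYoung hφ).comp
    ((hv.comp measurable_fst).sub (hv.comp measurable_snd))).mul (measurable_riesz γ)
  have hsymm : ∀ q, f q.swap = f q := fun q => by
    simp only [hf, Prod.fst_swap, Prod.snd_swap]
    rw [evenYoung_sub_comm, riesz_comm]
  have hcover' : ∀ᵐ q ∂μ.prod μ, f q ≠ 0 → q ∈ coveringPairs Ω ∨ q.swap ∈ coveringPairs Ω :=
    hcover.mono fun q hq hfq => hq fun h => hfq (by simp [hf, h, evenYoung_zero hφ])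
  have hnear := measurableSet_nearSet Ω
  rw [modular, Measure.restrict_univ, ← lintegral_prod f hfm.aemeasurable, modular,
    ← setLIntegral_prod_of_forall_mem (R := fun _ => Ω) hfm hΩ (measurable_snd hΩ),
    ← setLIntegral_prod_of_forall_mem (R := fun _ => {y | 0 < infDist y Ω}) hfm hΩ
      (measurable_snd (measurableSet_setOf_infDist_pos Ω)),
    ← setLIntegral_prod_of_forall_mem hfm hnear (measurableSet_setOf_mem_separatedSet Ω),
    ← setLIntegral_prod_of_forall_mem hfm hnear (measurableSet_setOf_mem_ball_infDist Ω)]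
  refine (lintegral_prod_self_le_two_mul_setLIntegral (measurableSet_coveringPairs hΩ) hsymm
    hcover').trans ?_
  gcongr 2 * ?_
  refine (lintegral_union_le _ _ _).trans (add_le_add_left ?_ _)
  refine (lintegral_union_le _ _ _).trans (add_le_add_left ?_ _)
  exact lintegral_union_le _ _ _

end Measurability

lemma extend_of_infDist_pos (hy : 0 < infDist y Ω) : extend μ Ω p u y = reflect μ p u y := by
  rw [extend, indicator_of_notMem fun h => hy.ne' (infDist_zero_of_mem h), zero_add]

namespace IsReflectionKernel

lemma extend_of_mem (hp : IsReflectionKernel μ Ω Q C p) (hy : y ∈ Ω) : extend μ Ω p u y = u y := by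
  simp [extend, reflect, hy, hp.eq_zero_of_infDist_eq_zero (infDist_zero_of_mem hy)]

lemma measurable_extend [SFinite μ] (hp : IsReflectionKernel μ Ω Q C p) (hΩ : MeasurableSet Ω)
    (hu : Measurable u) : Measurable (extend μ Ω p u) :=
  (hu.indicator hΩ).add (measurable_reflect hp.measurable hu)

lemma extend_add (hp : IsReflectionKernel μ Ω Q C p) (hu : BddIntegrableOn u Ω μ)
    (hv : BddIntegrableOn v Ω μ) :
    extend μ Ω p (u + v) = extend μ Ω p u + extend μ Ω p v := by
  ext y
  simp only [extend, reflect, Pi.add_apply, indicator_add', mul_add]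
  rw [integral_add (hp.integrable_mul hu y) (hp.integrable_mul hv y)]
  ring

lemma extend_congr (hp : IsReflectionKernel μ Ω Q C p) (hΩ : MeasurableSet Ω)
    (huv : u =ᵐ[μ.restrict Ω] v) : extend μ Ω p u =ᵐ[μ] extend μ Ω p v := by
  have huv' := (ae_restrict_iff' hΩ).1 huv
  filter_upwards [huv'] with y hy
  have hind : Ω.indicator u y = Ω.indicator v y := by
    by_cases h : y ∈ Ω <;> simp [h, hy]
  rw [extend, extend, hind, reflect, reflect]
  congr 1
  refine integral_congr_ae (huv'.mono fun z hz => ?_)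
  by_cases h : p y z = 0
  · simp [h]
  · simp [hz (hp.mem_and_dist_lt y z h).1]

lemma aestronglyMeasurable_extend [SFinite μ] (hp : IsReflectionKernel μ Ω Q C p)
    (hΩ : MeasurableSet Ω) (hu : AEStronglyMeasurable u (μ.restrict Ω)) :
    AEStronglyMeasurable (extend μ Ω p u) μ :=
  (hp.measurable_extend hΩ hu.stronglyMeasurable_mk.measurable).aestronglyMeasurable.congr
    (hp.extend_congr hΩ hu.ae_eq_mk).symm

/-- Beyond twice the diameter the extension is constant, so two points with different values are
covered by the separated and the local estimates, at least up to their order. -/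
lemma mem_separatedSet_or_mem_ball (hp : IsReflectionKernel μ Ω Q C p) (hx : 0 < infDist x Ω)
    (hy : 0 < infDist y Ω) (hxy : reflect μ p u x ≠ reflect μ p u y) :
    (x ∈ nearSet Ω ∧ (y ∈ separatedSet Ω x ∨ y ∈ ball x (infDist x Ω / 2))) ∨
      (y ∈ nearSet Ω ∧ (x ∈ separatedSet Ω y ∨ x ∈ ball y (infDist y Ω / 2))) := by
  have hnotfar : ¬ (x ∈ farSet Ω ∧ y ∈ farSet Ω) := fun h =>
    hxy (hp.reflect_eq_of_mem_farSet h.1 h.2)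
  wlog hle : infDist y Ω ≤ infDist x Ω generalizing x y
  · exact (this hy hx hxy.symm (fun h => hnotfar h.symm) (le_of_not_ge hle)).symm
  rcases lt_or_ge (dist x y) (infDist x Ω / 2) with hd | hd
  · refine .inl ⟨?_, .inr (mem_ball'.2 hd)⟩
    by_contra hx'
    obtain ⟨hb, hx₂⟩ := two_mul_diam_le_of_notMem_nearSet hx hx'
    refine hnotfar ⟨mem_farSet_of_notMem_nearSet hx hx', hb, ?_⟩
    linarith [infDist_le_infDist_add_dist (s := Ω) (x := x) (y := y)]
  · by_cases hx' : x ∈ nearSet Ω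
    · exact .inl ⟨hx', .inl ⟨hy, by linarith, by linarith⟩⟩
    · refine .inr ⟨?_, .inl ⟨hx, by rw [dist_comm]; linarith, by rw [dist_comm]; linarith⟩⟩
      by_contra hy'
      exact hnotfar ⟨mem_farSet_of_notMem_nearSet hx hx', mem_farSet_of_notMem_nearSet hy hy'⟩

lemma mem_coveringPairs_or_swap_mem (hp : IsReflectionKernel μ Ω Q C p)
    (hx : x ∈ Ω ∨ 0 < infDist x Ω) (hy : y ∈ Ω ∨ 0 < infDist y Ω)
    (hxy : extend μ Ω p u x ≠ extend μ Ω p u y) :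
    (x, y) ∈ coveringPairs Ω ∨ (y, x) ∈ coveringPairs Ω := by
  rcases hx with hx | hx <;> rcases hy with hy | hy
  · exact .inl (.inl (.inl (.inl ⟨hx, hy⟩)))
  · exact .inl (.inl (.inl (.inr ⟨hx, hy⟩)))
  · exact .inr (.inl (.inl (.inr ⟨hy, hx⟩)))
  · rw [extend_of_infDist_pos hx, extend_of_infDist_pos hy] at hxy
    rcases hp.mem_separatedSet_or_mem_ball hx hy hxy with ⟨h, h' | h'⟩ | ⟨h, h' | h'⟩
    · exact .inl (.inl (.inr ⟨h, h'⟩))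
    · exact .inl (.inr ⟨h, h'⟩)
    · exact .inr (.inl (.inr ⟨h, h'⟩))
    · exact .inr (.inr ⟨h, h'⟩)

variable [OpensMeasurableSpace X] [SecondCountableTopology X] [SFinite μ]

lemma modular_extend_div_le (hp : IsReflectionKernel μ Ω Q C p) (hμ : UpperRegular μ Q V)
    (hQ : 0 ≤ Q) (hβ : 0 < β) (hφ : IsYoung φ) (hM : CbetaLE β φ M) (hΩ : MeasurableSet Ω)
    (hΩ' : Ω.Nontrivial) (hbd : ∀ᵐ x ∂μ, x ∈ Ω ∨ 0 < infDist x Ω) (hA : 1 ≤ A)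
    (hCA : C * V * 5 ^ Q ≤ A) (hum : Measurable u) (hu : BddIntegrableOn u Ω μ) :
    modular μ φ (Q + β) univ (fun x => extend μ Ω p u x / A) ≤
      extendConst Q V C β M * modular μ φ (Q + β) Ω u := by
  have hN : 0 < C * V * 5 ^ Q := mul_pos (mul_pos hp.const_pos hμ.const_pos) (by positivity)
  have hle₁ (a b : ℝ) : evenYoung φ (a / A - b / A) ≤ evenYoung φ (a - b) := by
    simpa using evenYoung_div_sub_div_le hφ one_pos hA a b
  have hle₂ := evenYoung_div_sub_div_le hφ hN hCA
  have hO := measurableSet_setOf_infDist_pos Ω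
  have hnear := measurableSet_nearSet Ω
  refine (modular_univ_le_two_mul hφ hΩ (Q + β) ((hp.measurable_extend hΩ hum).div_const A)
    ?_).trans ?_
  · filter_upwards [Measure.quasiMeasurePreserving_fst.ae hbd,
      Measure.quasiMeasurePreserving_snd.ae hbd] with q hx hy hq
    exact hp.mem_coveringPairs_or_swap_mem hx hy fun h => hq (by rw [h])
  rw [extendConst, mul_assoc, add_mul, add_mul, add_mul, one_mul]
  gcongr 2 * (?_ + ?_ + ?_ + ?_)
  · refine setLIntegral_mono' hΩ fun x hx => setLIntegral_mono' hΩ fun y hy => ?_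
    simp only [hp.extend_of_mem hx, hp.extend_of_mem hy]
    exact mul_le_mul_left (hle₁ _ _) _
  · refine le_trans (setLIntegral_mono' hΩ fun x hx => setLIntegral_mono' hO fun y hy => ?_)
      (hp.setLIntegral_cross_le hμ hQ hβ hφ hΩ hum hu)
    simp only [hp.extend_of_mem hx, extend_of_infDist_pos hy]
    exact mul_le_mul_left (hle₁ _ _) _
  · refine le_trans (setLIntegral_mono' hnear fun x hx =>
      setLIntegral_mono' (measurableSet_separatedSet Ω x) fun y hy => ?_)
      (hp.setLIntegral_separated_le hμ hQ hβ hφ hΩ hum hu)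
    simp only [extend_of_infDist_pos (infDist_pos_of_mem_nearSet hx), extend_of_infDist_pos hy.1]
    exact mul_le_mul_left (hle₁ _ _) _
  · refine le_trans (setLIntegral_mono' hnear fun x hx =>
      setLIntegral_mono' measurableSet_ball fun y hy => ?_)
      (hp.setLIntegral_local_le hμ hQ hβ hφ hM hΩ hΩ' hum hu)
    simp only [extend_of_infDist_pos (infDist_pos_of_mem_nearSet hx),
      extend_of_infDist_pos (infDist_pos_of_dist_lt (mem_ball'.1 hy))]
    exact mul_le_mul_left (hle₂ _ _) _

theorem exists_modular_extend_div_le (hp : IsReflectionKernel μ Ω Q C p) (hμ : UpperRegular μ Q V)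
    (hQ : 0 ≤ Q) (hβ : 0 < β) (hφ : IsYoung φ) (hM : CbetaLE β φ M) (hΩ : MeasurableSet Ω)
    (hΩ' : Ω.Nontrivial) (hbd : ∀ᵐ x ∂μ, x ∈ Ω ∨ 0 < infDist x Ω) :
    ∃ A : ℝ, 0 < A ∧ ∀ u : X → ℝ, Measurable u → BddIntegrableOn u Ω μ →
      modular μ φ (Q + β) univ (fun x => extend μ Ω p u x / A) ≤ modular μ φ (Q + β) Ω u := by
  set A := max 1 (C * V * 5 ^ Q)
  set B := max 1 (extendConst Q V C β M).toReal
  have hA : 1 ≤ A := le_max_left _ _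
  have hB : 1 ≤ B := le_max_left _ _
  have hB₀ : 0 < B := by positivity
  have hle : extendConst Q V C β M ≤ ENNReal.ofReal B :=
    ENNReal.le_ofReal_iff_toReal_le extendConst_ne_top hB₀.le |>.2 (le_max_right _ _)
  refine ⟨B * A, by positivity, fun u hum hu => ?_⟩
  calc modular μ φ (Q + β) univ (fun x => extend μ Ω p u x / (B * A))
      ≤ ENNReal.ofReal B⁻¹ * modular μ φ (Q + β) univ (fun x => extend μ Ω p u x / A) := by
        have hdiv (x : X) : extend μ Ω p u x / (B * A) = B⁻¹ * (extend μ Ω p u x / A) := by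
          field_simp
        simp only [hdiv]
        exact modular_const_mul_le hφ (by positivity) (inv_le_one_of_one_le₀ hB) _
    _ ≤ ENNReal.ofReal B⁻¹ * (ENNReal.ofReal B * modular μ φ (Q + β) Ω u) := by
        gcongr
        exact (hp.modular_extend_div_le hμ hQ hβ hφ hM hΩ hΩ' hbd hA (le_max_right _ _) hum
          hu).trans (mul_le_mul_left hle _)
    _ = modular μ φ (Q + β) Ω u := by
        rw [← mul_assoc, ← ENNReal.ofReal_mul (by positivity), inv_mul_cancel₀ hB₀.ne',
          ENNReal.ofReal_one, one_mul]

end IsReflectionKernel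

end Extend

/-! ### Integrability up to the boundary -/

section Integrability

variable {φ : ℝ → ℝ}

lemma enorm_le_add_evenYoung (hφ : IsYoung φ) (s t : ℝ) :
    ‖t‖ₑ ≤ ‖s‖ₑ + 1 + (ENNReal.ofReal (φ 1))⁻¹ * evenYoung φ (s - t) := by
  have hφ₁ : 0 < φ 1 := hφ.2.2.2 1 one_pos
  have hst : ‖s - t‖ₑ ≤ 1 + (ENNReal.ofReal (φ 1))⁻¹ * evenYoung φ (s - t) := by
    have hnn := hφ.apply_nonneg (abs_nonneg (s - t))
    rw [Real.enorm_eq_ofReal_abs, evenYoung, mul_comm, ← div_eq_mul_inv,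
      ← ENNReal.ofReal_div_of_pos hφ₁, ← ENNReal.ofReal_one,
      ← ENNReal.ofReal_add zero_le_one (by positivity)]
    exact ENNReal.ofReal_le_ofReal (hφ.le_one_add_div (abs_nonneg _))
  calc ‖t‖ₑ = ‖s - (s - t)‖ₑ := by rw [sub_sub_cancel]
    _ ≤ ‖s‖ₑ + ‖s - t‖ₑ := enorm_sub_le
    _ ≤ _ := by
      rw [add_assoc]
      gcongr

variable {X : Type*} [MetricSpace X] {γ : ℝ} {Ω : Set X} {u v : X → ℝ}

lemma evenYoung_sub_le_mul_riesz (hφ : IsYoung φ) (hγ : 0 ≤ γ) {y z : X} {R : ℝ}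
    (hR : dist z y ≤ R) :
    evenYoung φ (u z - u y) ≤
      ENNReal.ofReal (R ^ γ) * (evenYoung φ (u z - u y) * riesz γ z y) := by
  rcases eq_or_ne z y with rfl | hzy
  · simp [evenYoung_zero hφ]
  have hd : 0 < dist z y := dist_pos.2 hzy
  have hone : 1 ≤ ENNReal.ofReal (R ^ γ) * riesz γ z y := by
    rw [riesz, ← ENNReal.ofReal_mul (Real.rpow_nonneg (hd.le.trans hR) γ),
      ENNReal.one_le_ofReal, ← div_eq_mul_inv, one_le_div (by positivity)]
    gcongr
  rw [mul_left_comm]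
  exact le_mul_of_one_le_right' hone

variable [MeasurableSpace X] {μ : Measure X}

lemma bddIntegrableOn_of_modular_ne_top [OpensMeasurableSpace X] [SecondCountableTopology X]
    [ProperSpace X] [IsFiniteMeasureOnCompacts μ] (hφ : IsYoung φ) (hγ : 0 ≤ γ)
    (hΩ : μ Ω ≠ 0) (hu : Measurable u) (h : modular μ φ γ Ω u ≠ ∞) : BddIntegrableOn u Ω μ := by
  have : (ae (μ.restrict Ω)).NeBot := by
    rw [ae_neBot]
    exact fun h₀ => hΩ (Measure.restrict_eq_zero.1 h₀)
  obtain ⟨z, hz⟩ := (ae_lt_top (measurable_setLIntegral_evenYoung_mul_riesz hφ hu) h).exists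
  intro x R
  have hball : ∀ y ∈ ball x R, dist z y ≤ dist z x + R := fun y hy =>
    (dist_triangle z x y).trans (by linarith [mem_ball'.1 hy])
  have hφ₁ : (ENNReal.ofReal (φ 1))⁻¹ ≠ ∞ :=
    ENNReal.inv_ne_top.2 (ENNReal.ofReal_pos.2 (hφ.2.2.2 1 one_pos)).ne'
  set K := (ENNReal.ofReal (φ 1))⁻¹ * ENNReal.ofReal ((dist z x + R) ^ γ)
  have hK : K ≠ ∞ := ENNReal.mul_ne_top hφ₁ ENNReal.ofReal_ne_top
  refine ⟨hu.aestronglyMeasurable, ?_⟩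
  calc ∫⁻ y in Ω ∩ ball x R, ‖u y‖ₑ ∂μ
      ≤ ∫⁻ y in Ω ∩ ball x R, (‖u z‖ₑ + 1) + K * (evenYoung φ (u z - u y) * riesz γ z y) ∂μ := by
        refine lintegral_mono_ae ((ae_restrict_of_ae_restrict_of_subset inter_subset_right
          (ae_restrict_mem measurableSet_ball)).mono fun y hy => ?_)
        rw [mul_assoc]
        refine (enorm_le_add_evenYoung hφ (u z) (u y)).trans ?_
        gcongr
        exact evenYoung_sub_le_mul_riesz hφ hγ (hball y hy)
    _ ≤ (‖u z‖ₑ + 1) * μ (ball x R) +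
          K * ∫⁻ y in Ω, evenYoung φ (u z - u y) * riesz γ z y ∂μ := by
        rw [lintegral_add_left measurable_const, setLIntegral_const, lintegral_const_mul' _ _ hK]
        gcongr
        · exact inter_subset_right
        · exact inter_subset_left
    _ < ∞ := by
        refine ENNReal.add_lt_top.2 ⟨ENNReal.mul_lt_top ?_ measure_ball_lt_top,
          ENNReal.mul_lt_top hK.lt_top hz⟩
        simp

lemma BddIntegrableOn.congr (hu : BddIntegrableOn u Ω μ) (h : u =ᵐ[μ.restrict Ω] v) :
    BddIntegrableOn v Ω μ := fun x R =>
  (hu x R).congr_fun_ae (ae_restrict_of_ae_restrict_of_subset inter_subset_left h)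

lemma BddIntegrableOn.locallyIntegrable (hu : BddIntegrableOn u univ μ) :
    LocallyIntegrable u μ := fun x =>
  ⟨ball x 1, ball_mem_nhds x one_pos, by simpa using hu x 1⟩

lemma modular_congr (h : u =ᵐ[μ.restrict Ω] v) : modular μ φ γ Ω u = modular μ φ γ Ω v := by
  refine lintegral_congr_ae (h.mono fun x hx => lintegral_congr_ae (h.mono fun y hy => ?_))
  simp only [hx, hy]

end Integrability

/-! ### The boundary of a regular set -/

section Boundary

variable {X : Type*} [MetricSpace X] [MeasurableSpace X] {μ : Measure X} {Q V θ : ℝ} {Ω : Set X}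

lemma LowerRegularOn.le_measure_inter_closedBall_div (hθ : LowerRegularOn μ Ω Q θ)
    (hμ : UpperRegular μ Q V) (hne : Ω.Nonempty) {x : X} (hx : infDist x Ω = 0) {r : ℝ}
    (hr : 0 < r) (hdiam : Bornology.IsBounded Ω → r < diam Ω) :
    ENNReal.ofReal (θ / (V * 4 ^ Q)) ≤ μ (Ω ∩ closedBall x r) / μ (closedBall x r) := by
  have hV := hμ.const_pos
  obtain ⟨y, hy, hxy⟩ := (infDist_lt_iff hne).1 (hx.trans_lt (half_pos hr))
  have hlower : ENNReal.ofReal (θ * (r / 2) ^ Q) ≤ μ (Ω ∩ closedBall x r) := by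
    refine (hθ.le_measure_ball_inter y hy (r / 2) (half_pos hr) fun hb => ?_).trans
      (measure_mono fun z hz => ⟨hz.2, ?_⟩)
    · linarith [hdiam hb]
    · rw [mem_closedBall]
      linarith [dist_triangle z y x, mem_ball.1 hz.1, dist_comm x y]
  have hupper : μ (closedBall x r) ≤ ENNReal.ofReal (V * (2 * r) ^ Q) :=
    (measure_mono (closedBall_subset_ball (by linarith))).trans
      (hμ.measure_ball_le x (by positivity))
  refine le_trans (le_of_eq ?_) (ENNReal.div_le_div hlower hupper)
  rw [← ENNReal.ofReal_div_of_pos (by positivity)]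
  congr 1
  rw [show 2 * r = 4 * (r / 2) by ring, Real.mul_rpow (by norm_num) (by positivity)]
  field_simp

lemma LowerRegularOn.ae_mem_or_infDist_pos [BorelSpace X] [SecondCountableTopology X]
    [IsUnifLocDoublingMeasure μ] [IsLocallyFiniteMeasure μ] (hθ : LowerRegularOn μ Ω Q θ)
    (hμ : UpperRegular μ Q V) (hΩ : Ω.Nontrivial) (hΩm : MeasurableSet Ω) :
    ∀ᵐ x ∂μ, x ∈ Ω ∨ 0 < infDist x Ω := by
  let v := IsUnifLocDoublingMeasure.vitaliFamily μ 1
  filter_upwards [v.ae_tendsto_measure_inter_div_of_measurableSet hΩm] with x hx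
  by_contra! hx'
  have hx₀ : infDist x Ω = 0 := hx'.2.antisymm infDist_nonneg
  have hlim := hx.comp (IsUnifLocDoublingMeasure.tendsto_closedBall_filterAt μ (fun _ : ℝ => x) id
    tendsto_id (by
      filter_upwards [self_mem_nhdsWithin] with r hr
      simpa using (mem_Ioi.1 hr).le))
  rw [indicator_of_notMem hx'.1] at hlim
  have hsmall : ∀ᶠ r in 𝓝[>] (0 : ℝ), Bornology.IsBounded Ω → r < diam Ω := by
    by_cases hb : Bornology.IsBounded Ω
    · filter_upwards [Ioo_mem_nhdsGT (diam_pos hΩ hb)] with r hr _ using hr.2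
    · exact Eventually.of_forall fun r h => absurd h hb
  have hle := ge_of_tendsto hlim (hsmall.and self_mem_nhdsWithin |>.mono fun r hr =>
    hθ.le_measure_inter_closedBall_div hμ hΩ.nonempty hx₀ hr.2 hr.1)
  have hV := hμ.const_pos
  have hθ₀ := hθ.const_pos
  exact (ENNReal.ofReal_pos.2 (by positivity : 0 < θ / (V * 4 ^ Q))).not_ge hle

end Boundary

/-! ### Euclidean domains -/

lemma upperRegular_addHaar {E : Type*} [NormedAddCommGroup E] [NormedSpace ℝ E]
    [FiniteDimensional ℝ E] [MeasurableSpace E] [BorelSpace E] (μ : Measure E)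
    [μ.IsAddHaarMeasure] :
    UpperRegular μ (Module.finrank ℝ E) (μ.real (ball 0 1)) where
  const_pos := ENNReal.toReal_pos (measure_ball_pos μ _ one_pos).ne' measure_ball_lt_top.ne
  measure_ball_le x r hr := by
    rw [Measure.addHaar_ball_of_pos μ x hr, Real.rpow_natCast, mul_comm,
      ENNReal.ofReal_mul measureReal_nonneg, ofReal_measureReal measure_ball_lt_top.ne]

section Euclidean

variable {n : ℕ} {β : ℝ} {φ : ℝ → ℝ} {Ω : Set (EuclideanSpace ℝ (Fin n))}
  {u v : EuclideanSpace ℝ (Fin n) → ℝ}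

lemma upperRegular_volume (n : ℕ) : UpperRegular (volume : Measure (EuclideanSpace ℝ (Fin n))) n
    (volume.real (ball (0 : EuclideanSpace ℝ (Fin n)) 1)) := by
  simpa using upperRegular_addHaar (volume : Measure (EuclideanSpace ℝ (Fin n)))

lemma exists_lowerRegularOn (hA : AhlforsRegular n Ω) : ∃ θ, LowerRegularOn volume Ω n θ := by
  obtain ⟨θ, hθ, h⟩ := hA
  refine ⟨θ, hθ, fun x hx r hr hdiam => ?_⟩
  rw [Real.rpow_natCast]
  refine h x hx r hr ?_
  change ENNReal.ofReal r < 2 * ediam Ω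
  by_cases hb : Bornology.IsBounded Ω
  · have hlt := (ENNReal.ofReal_lt_ofReal_iff (hr.trans (hdiam hb))).2 (hdiam hb)
    rwa [ENNReal.ofReal_mul zero_le_two, ENNReal.ofReal_ofNat, diam,
      ENNReal.ofReal_toReal (isBounded_iff_ediam_ne_top.1 hb)] at hlt
  · rw [ediam_of_unbounded hb]
    simp

lemma fracIntegral_eq_modular (u : EuclideanSpace ℝ (Fin n) → ℝ) {lam : ℝ} (hlam : 0 < lam) :
    fracIntegral n β φ Ω u lam = modular volume φ (n + β) Ω (fun x => u x / lam) := by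
  simp only [fracIntegral, modular, evenYoung, riesz, ← sub_div, abs_div, abs_of_pos hlam,
    div_eq_mul_inv (φ _)]
  simp_rw [ENNReal.ofReal_mul' (inv_nonneg.2 (Real.rpow_nonneg dist_nonneg _))]

lemma exists_fracIntegral_le_one (h : fracNorm n β φ Ω u ≠ ∞) :
    ∃ lam : ℝ, 0 < lam ∧ fracIntegral n β φ Ω u lam ≤ 1 := by
  by_contra! h'
  refine h (sInf_eq_top.2 fun l hl => ?_)
  exact absurd hl.2.2 (h' _ (ENNReal.toReal_pos hl.1.ne' hl.2.1)).not_ge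

lemma fracNorm_le_mul {Ω' : Set (EuclideanSpace ℝ (Fin n))} {A : ℝ} (hA : 0 < A)
    (h : ∀ lam, 0 < lam → fracIntegral n β φ Ω' v (A * lam) ≤ fracIntegral n β φ Ω u lam) :
    fracNorm n β φ Ω' v ≤ ENNReal.ofReal A * fracNorm n β φ Ω u := by
  have hA₀ : ENNReal.ofReal A ≠ 0 := (ENNReal.ofReal_pos.2 hA).ne'
  rw [← ENNReal.div_le_iff' hA₀ ENNReal.ofReal_ne_top]
  refine le_sInf fun l hl => ?_
  rw [ENNReal.div_le_iff' hA₀ ENNReal.ofReal_ne_top]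
  refine sInf_le ⟨ENNReal.mul_pos hA₀ hl.1.ne', ENNReal.mul_ne_top ENNReal.ofReal_ne_top hl.2.1,
    ?_⟩
  rw [ENNReal.toReal_mul, ENNReal.toReal_ofReal hA.le]
  exact (h _ (ENNReal.toReal_pos hl.1.ne' hl.2.1)).trans hl.2.2

lemma bddIntegrableOn_of_fracNorm_ne_top (hβ : 0 ≤ β) (hφ : IsYoung φ) (hΩ : volume Ω ≠ 0)
    (hum : AEStronglyMeasurable u (volume.restrict Ω)) (hu : fracNorm n β φ Ω u ≠ ∞) :
    BddIntegrableOn u Ω volume := by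
  obtain ⟨lam, hlam, hle⟩ := exists_fracIntegral_le_one hu
  set g := hum.mk u
  have hgm : Measurable g := hum.stronglyMeasurable_mk.measurable
  have hug : u =ᵐ[volume.restrict Ω] g := hum.ae_eq_mk
  rw [fracIntegral_eq_modular u hlam,
    modular_congr (hug.mono fun x hx => show u x / lam = g x / lam by rw [hx])] at hle
  have hg := bddIntegrableOn_of_modular_ne_top hφ (by positivity) hΩ (hgm.div_const lam)
    (hle.trans_lt ENNReal.one_lt_top).ne
  refine BddIntegrableOn.congr (fun x R => ?_) hug.symm
  simpa [IntegrableOn, hlam.ne'] using (hg x R).mul_const lam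

lemma fracIntegral_mul_extend_le {p : EuclideanSpace ℝ (Fin n) → EuclideanSpace ℝ (Fin n) → ℝ}
    {C A : ℝ} (hp : IsReflectionKernel volume Ω n C p) (hΩ : MeasurableSet Ω) (hA : 0 < A)
    (hmod : ∀ g, Measurable g → BddIntegrableOn g Ω volume →
      modular volume φ (n + β) univ (fun x => extend volume Ω p g x / A) ≤
        modular volume φ (n + β) Ω g)
    (hum : AEStronglyMeasurable u (volume.restrict Ω)) (hu : BddIntegrableOn u Ω volume)
    {lam : ℝ} (hlam : 0 < lam) :
    fracIntegral n β φ univ (extend volume Ω p u) (A * lam) ≤ fracIntegral n β φ Ω u lam := by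
  set g := lam⁻¹ • hum.mk u
  have hgm : Measurable g := hum.stronglyMeasurable_mk.measurable.const_smul lam⁻¹
  have hg : BddIntegrableOn g Ω volume := fun x R => (hu.congr hum.ae_eq_mk x R).smul lam⁻¹
  have hext : (fun x => extend volume Ω p u x / (A * lam)) =ᵐ[volume.restrict univ]
      fun x => extend volume Ω p g x / A := by
    rw [Measure.restrict_univ]
    filter_upwards [hp.extend_congr hΩ hum.ae_eq_mk] with x hx
    rw [extend_smul, hx, Pi.smul_apply, smul_eq_mul]
    field_simp
  have hug : (fun x => u x / lam) =ᵐ[volume.restrict Ω] g :=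
    hum.ae_eq_mk.mono fun x hx => by
      simp only [g, Pi.smul_apply, smul_eq_mul, hx, div_eq_inv_mul]
  rw [fracIntegral_eq_modular _ (mul_pos hA hlam), fracIntegral_eq_modular _ hlam,
    modular_congr hext, modular_congr hug]
  exact hmod g hgm hg

lemma memW_univ_of_fracNorm_ne_top (hβ : 0 ≤ β) (hφ : IsYoung φ)
    (hum : AEStronglyMeasurable u volume) (hu : fracNorm n β φ univ u ≠ ∞) :
    MemW n β φ univ u := by
  refine ⟨?_, hu⟩
  rw [locallyIntegrableOn_univ]
  refine (bddIntegrableOn_of_fracNorm_ne_top hβ hφ ?_ hum.restrict hu).locallyIntegrable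
  exact (isOpen_univ.measure_pos volume univ_nonempty).ne'

end Euclidean

end AhlforsExt

open AhlforsExt in
theorem ahlfors_implies_extension_general {n : ℕ} (hn : 1 ≤ n) {β : ℝ} (hβ : 0 < β) {φ : ℝ → ℝ}
    (hφ : IsYoung φ) (hCβ : CbetaFinite β φ) {Ω : Set (EuclideanSpace ℝ (Fin n))}
    (hΩ : IsOpen Ω) (hne : Ω.Nonempty) (hA : AhlforsRegular n Ω) :
    IsExtensionDomain n β φ Ω := by
  obtain ⟨M, hM⟩ := hCβ
  obtain ⟨θ, hθ⟩ := exists_lowerRegularOn hA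
  have hμ := upperRegular_volume n
  have hQ : (0 : ℝ) ≤ n := n.cast_nonneg
  have : Nonempty (Fin n) := ⟨⟨0, hn⟩⟩
  have hΩ₂ : Ω.Nontrivial := (infinite_of_mem_nhds _ (hΩ.mem_nhds hne.some_mem)).nontrivial
  have hΩ₀ : volume Ω ≠ 0 := (hΩ.measure_pos volume hne).ne'
  have hΩm := hΩ.measurableSet
  obtain ⟨C, p, hp⟩ := hθ.exists_isReflectionKernel hμ hQ hΩ₂ hΩ
  obtain ⟨A, hA, hmod⟩ := hp.exists_modular_extend_div_le hμ hQ hβ hφ hM hΩm hΩ₂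
    (hθ.ae_mem_or_infDist_pos hμ hΩ₂ hΩm)
  have hbdd {u} (hu : MemW n β φ Ω u) : BddIntegrableOn u Ω volume :=
    bddIntegrableOn_of_fracNorm_ne_top hβ.le hφ hΩ₀ hu.1.aestronglyMeasurable hu.2
  refine ⟨A, hA, extend volume Ω p, fun u v hu hv => hp.extend_add (hbdd hu) (hbdd hv),
    fun c u _ => extend_smul c, fun u hu => ?_⟩
  have hum := hu.1.aestronglyMeasurable
  have hnorm := fracNorm_le_mul hA fun lam hlam =>
    fracIntegral_mul_extend_le hp hΩm hA hmod hum (hbdd hu) hlam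
  exact ⟨memW_univ_of_fracNorm_ne_top hβ.le hφ (hp.aestronglyMeasurable_extend hΩm hum)
      (ne_top_of_le_ne_top (ENNReal.mul_ne_top ENNReal.ofReal_ne_top hu.2) hnorm),
    (ae_restrict_mem hΩm).mono fun x hx => hp.extend_of_mem hx, hnorm⟩

/-- Ahlfors n-regular domains are `Ẇ^{β,φ}`-extension domains. -/
theorem ahlfors_implies_extension
    (n : ℕ) (hn : 1 ≤ n) (β : ℝ)
    (hβ : β ∈ Set.Ioo (0 : ℝ) (n : ℝ) ∪ Set.Ioi (n : ℝ))
    (φ : ℝ → ℝ) (hφ : IsYoung φ) (hCβ : CbetaFinite β φ)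
    (Ω : Set (EuclideanSpace ℝ (Fin n))) (hΩopen : IsOpen Ω) (hΩconn : IsConnected Ω)
    (hA : AhlforsRegular n Ω) :
    IsExtensionDomain n β φ Ω :=
  ahlfors_implies_extension_general hn
    (hβ.elim And.left fun h => n.cast_nonneg.trans_lt h) hφ hCβ hΩopen hΩconn.nonempty hA
end

section
/- Let n ≥ 1, β > n, and let φ be a doubling Young function satisfying C_β := sup_{t>0} (t^β/φ(t)) ∫_0^t φ(s) s^{-β-1} ds < ∞. If a domain Ω ⊂ ℝⁿ is a Ẇ^{β,φ}-extension domain, then there exists a constant C = C(β,n,φ) > 0 such that for every u ∈ Ẇ^{β,φ}(Ω) there is a function ũ on Ω with ũ = u almost everywhere and |ũ(x) − ũ(y)| ≤ C φ⁻¹(|x−y|^{β−n}) ‖u‖_{Ẇ^{β,φ}(Ω)} for all x, y ∈ Ω. -/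
open MeasureTheory Metric Set Filter
open scoped ENNReal NNReal Topology Classical

/-!
The extension operator reduces the claim to functions `w` on all of `ℝⁿ`.

If `∫∫ φ(|w(x) - w(y)| / λ) |x - y|^(-n-β) ≤ 1` and `B`, `B'` are balls of radius comparable to `R`
contained in a ball of radius comparable to `R`, then the mean of `φ(|w(x) - w(y)| / λ)` over
`B × B'` is at most a multiple of `R^(β-n)`, so Jensen's inequality gives
`|w_B - w_B'| ≤ c λ φ⁻¹(R^(β-n))`. Doubling says that `φ⁻¹` at least halves when its argument is
divided by `K`; along the radii `r ρᵏ` with `ρ^(β-n) = K⁻¹` these bounds therefore decay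
geometrically and telescope to `|w_B(x,r) - w(x)| ≤ c λ φ⁻¹(r^(β-n))` at every Lebesgue point `x`.
Comparing the balls of radius `r = |x - y|` around two Lebesgue points `x`, `y` and taking the
infimum over `λ` bounds `|w(x) - w(y)|`, and `w` extends with the same modulus of continuity from
the dense set of its Lebesgue points.
-/

/-! ### Young functions -/

section Young

variable {φ : ℝ → ℝ}

lemma IsYoung.map_zero (hφ : IsYoung φ) : φ 0 = 0 := hφ.2.2.1

lemma IsYoung.pos (hφ : IsYoung φ) {t : ℝ} (ht : 0 < t) : 0 < φ t := hφ.2.2.2 t ht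

lemma IsYoung.nonneg (hφ : IsYoung φ) {t : ℝ} (ht : 0 ≤ t) : 0 ≤ φ t := by
  rcases ht.eq_or_lt with rfl | ht
  · exact hφ.map_zero.ge
  · exact (hφ.pos ht).le

lemma IsYoung.map_mul_le (hφ : IsYoung φ) {c t : ℝ} (hc : 0 ≤ c) (hc1 : c ≤ 1) (ht : 0 ≤ t) :
    φ (c * t) ≤ c * φ t := by
  simpa [hφ.map_zero] using
    hφ.2.1.2 (mem_Ici.2 ht) (mem_Ici.2 le_rfl) hc (sub_nonneg.2 hc1) (add_sub_cancel c 1)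

lemma IsYoung.mul_map_le (hφ : IsYoung φ) {c t : ℝ} (hc : 1 ≤ c) (ht : 0 ≤ t) :
    c * φ t ≤ φ (c * t) := by
  have hc0 : 0 < c := one_pos.trans_le hc
  have h := hφ.map_mul_le (inv_nonneg.2 hc0.le) (inv_le_one_of_one_le₀ hc) (mul_nonneg hc0.le ht)
  rwa [inv_mul_cancel_left₀ hc0.ne', le_inv_mul_iff₀ hc0] at h

lemma IsYoung.strictMonoOn (hφ : IsYoung φ) : StrictMonoOn φ (Ici 0) := by
  intro s hs t _ hst
  have ht : 0 < t := (mem_Ici.1 hs).trans_lt hst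
  calc φ s = φ (s / t * t) := by rw [div_mul_cancel₀ s ht.ne']
    _ ≤ s / t * φ t := hφ.map_mul_le (div_nonneg hs ht.le) ((div_le_one ht).2 hst.le) ht.le
    _ < φ t := mul_lt_of_lt_one_left (hφ.pos ht) ((div_lt_one ht).2 hst)

lemma IsYoung.surjOn (hφ : IsYoung φ) : SurjOn φ (Ici 0) (Ici 0) := by
  intro y (hy : 0 ≤ y)
  have h1 : 0 < φ 1 := hφ.pos one_pos
  set T : ℝ := 1 + y / φ 1
  have hT : 1 ≤ T := le_add_of_nonneg_right (div_nonneg hy h1.le)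
  have hyT : y ≤ φ T :=
    calc y ≤ T * φ 1 := by rw [add_mul, div_mul_cancel₀ y h1.ne']; linarith
      _ ≤ φ T := by simpa only [mul_one] using hφ.mul_map_le hT zero_le_one
  have hIVT := intermediate_value_Icc (zero_le_one.trans hT) (hφ.1.mono Icc_subset_Ici_self)
  exact image_mono Icc_subset_Ici_self (hIVT ⟨hφ.map_zero.trans_le hy, hyT⟩)

/-- When `φ a` is the mean of `φ ∘ f`, averaging this at `t = f x` gives `⨍ f ≤ 2 * a`: Jensen's
inequality up to a factor `2`, with no measurability of `f` needed. -/
lemma IsYoung.le_add_mul_map (hφ : IsYoung φ) {a t : ℝ} (ha : 0 < a) (ht : 0 ≤ t) :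
    t ≤ a + a / φ a * φ t := by
  have hc : 0 ≤ a / φ a := div_nonneg ha.le (hφ.nonneg ha.le)
  rcases le_total t a with hta | hat
  · exact hta.trans (le_add_of_nonneg_right (mul_nonneg hc (hφ.nonneg ht)))
  · have h := hφ.mul_map_le ((one_le_div ha).2 hat) ha.le
    rw [div_mul_cancel₀ t ha.ne'] at h
    calc t = a / φ a * (t / a * φ a) := by field_simp [(hφ.pos ha).ne']
      _ ≤ a / φ a * φ t := by gcongr
      _ ≤ a + a / φ a * φ t := le_add_of_nonneg_left ha.le

lemma yInv_nonneg (φ : ℝ → ℝ) (y : ℝ) : 0 ≤ yInv φ y :=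
  Real.sInf_nonneg fun _ hs => hs.1

lemma yInv_le {y t : ℝ} (ht : 0 ≤ t) (h : y ≤ φ t) : yInv φ y ≤ t :=
  csInf_le ⟨0, fun _ hs => hs.1⟩ ⟨ht, h⟩

lemma IsYoung.yInv_map (hφ : IsYoung φ) {t : ℝ} (ht : 0 ≤ t) : yInv φ (φ t) = t :=
  (yInv_le ht le_rfl).antisymm <|
    le_csInf ⟨t, ht, le_rfl⟩ fun _ hs => (hφ.strictMonoOn.le_iff_le ht hs.1).1 hs.2

lemma IsYoung.map_yInv (hφ : IsYoung φ) {y : ℝ} (hy : 0 ≤ y) : φ (yInv φ y) = y := by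
  obtain ⟨t, ht, rfl⟩ := hφ.surjOn hy
  rw [hφ.yInv_map ht]

lemma IsYoung.yInv_zero (hφ : IsYoung φ) : yInv φ 0 = 0 := by
  simpa only [hφ.map_zero] using hφ.yInv_map le_rfl

lemma IsYoung.yInv_pos (hφ : IsYoung φ) {y : ℝ} (hy : 0 < y) : 0 < yInv φ y := by
  refine (yInv_nonneg φ y).lt_of_ne fun h => hy.ne ?_
  rw [← hφ.map_yInv hy.le, ← h, hφ.map_zero]

lemma IsYoung.yInv_le_yInv (hφ : IsYoung φ) {y z : ℝ} (hz : 0 ≤ z) (h : y ≤ z) :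
    yInv φ y ≤ yInv φ z :=
  yInv_le (yInv_nonneg φ z) (h.trans_eq (hφ.map_yInv hz).symm)

lemma IsYoung.yInv_mul_le (hφ : IsYoung φ) {c y : ℝ} (hc : 1 ≤ c) (hy : 0 ≤ y) :
    yInv φ (c * y) ≤ c * yInv φ y := by
  refine yInv_le (mul_nonneg (zero_le_one.trans hc) (yInv_nonneg φ y)) ?_
  simpa only [hφ.map_yInv hy] using hφ.mul_map_le hc (yInv_nonneg φ y)

lemma IsYoung.continuousOn_yInv (hφ : IsYoung φ) : ContinuousOn (yInv φ) (Ici 0) := by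
  have hmaps : MapsTo (yInv φ) (Ici 0) (Ici 0) := fun y _ => yInv_nonneg φ y
  have hmono : Monotone (hmaps.restrict (yInv φ) (Ici 0) (Ici 0)) :=
    fun _ z hyz => hφ.yInv_le_yInv z.2 hyz
  have hsurj : Function.Surjective (hmaps.restrict (yInv φ) (Ici 0) (Ici 0)) :=
    fun t => ⟨⟨φ t, hφ.nonneg t.2⟩, Subtype.ext (hφ.yInv_map t.2)⟩
  exact continuousOn_iff_continuous_domRestrict.2
    (continuous_subtype_val.comp (hmono.continuous_of_surjective hsurj))

lemma IsYoung.yInv_inv_mul_le (hφ : IsYoung φ) {K : ℝ} (hK : IsDoubling φ K) {y : ℝ}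
    (hy : 0 < y) : yInv φ (K⁻¹ * y) ≤ yInv φ y / 2 := by
  have hY : 0 < yInv φ y / 2 := half_pos (hφ.yInv_pos hy)
  refine yInv_le hY.le ?_
  have h := hK.2 _ hY
  rwa [mul_div_cancel₀ _ two_ne_zero, hφ.map_yInv hy.le,
    ← inv_mul_le_iff₀ (one_pos.trans hK.1)] at h

lemma IsYoung.yInv_inv_pow_mul_le (hφ : IsYoung φ) {K : ℝ} (hK : IsDoubling φ K) {y : ℝ}
    (hy : 0 < y) (k : ℕ) : yInv φ (K⁻¹ ^ k * y) ≤ yInv φ y / 2 ^ k := by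
  have hK0 : 0 < K := one_pos.trans hK.1
  induction k with
  | zero => simp
  | succ k ih =>
    calc yInv φ (K⁻¹ ^ (k + 1) * y) = yInv φ (K⁻¹ * (K⁻¹ ^ k * y)) := by rw [pow_succ', mul_assoc]
      _ ≤ yInv φ (K⁻¹ ^ k * y) / 2 := hφ.yInv_inv_mul_le hK (by positivity)
      _ ≤ yInv φ y / 2 ^ k / 2 := by gcongr
      _ = yInv φ y / 2 ^ (k + 1) := by rw [div_div, pow_succ]

lemma IsYoung.exists_yInv_rpow_decay (hφ : IsYoung φ) {K : ℝ} (hK : IsDoubling φ K) {γ : ℝ}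
    (hγ : 0 < γ) : ∃ ρ ∈ Ioo (0 : ℝ) 1, ∀ r > 0, ∀ k : ℕ,
      yInv φ ((r * ρ ^ k) ^ γ) ≤ yInv φ (r ^ γ) / 2 ^ k := by
  have hK0 : 0 < K⁻¹ := inv_pos.2 (one_pos.trans hK.1)
  set ρ : ℝ := K⁻¹ ^ γ⁻¹
  have hρ0 : 0 < ρ := Real.rpow_pos_of_pos hK0 _
  have hρ1 : ρ < 1 := Real.rpow_lt_one hK0.le (inv_lt_one_of_one_lt₀ hK.1) (inv_pos.2 hγ)
  refine ⟨ρ, ⟨hρ0, hρ1⟩, fun r hr k => ?_⟩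
  have hpow : (r * ρ ^ k) ^ γ = K⁻¹ ^ k * r ^ γ := by
    rw [Real.mul_rpow hr.le (by positivity), ← Real.rpow_pow_comm hρ0.le,
      Real.rpow_inv_rpow hK0.le hγ.ne', mul_comm]
  rw [hpow]
  exact hφ.yInv_inv_pow_mul_le hK (Real.rpow_pos_of_pos hr γ) k

end Young

/-! ### Averages -/

section Averages

variable {α β : Type*} [MeasurableSpace α] [MeasurableSpace β]

lemma enorm_average_sub_average_le {E : Type*} [NormedAddCommGroup E] [NormedSpace ℝ E]
    [CompleteSpace E] {μ : Measure α} {ν : Measure β} [IsFiniteMeasure μ] [NeZero μ]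
    [IsFiniteMeasure ν] [NeZero ν] {f : α → E} {g : β → E} (hf : Integrable f μ)
    (hg : Integrable g ν) :
    ‖(⨍ x, f x ∂μ) - ⨍ y, g y ∂ν‖ₑ ≤ ⨍⁻ x, ⨍⁻ y, ‖f x - g y‖ₑ ∂ν ∂μ := by
  have hinner (x : α) : f x - ⨍ y, g y ∂ν = ⨍ y, (f x - g y) ∂ν := by
    rw [average_eq' ν fun y => f x - g y, integral_sub (integrable_const _) hg.to_average,
      integral_const, probReal_univ, one_smul, average]
  have houter : (⨍ x, f x ∂μ) - ⨍ y, g y ∂ν = ⨍ x, ⨍ y, (f x - g y) ∂ν ∂μ := by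
    simp_rw [← hinner]
    rw [average_eq' μ fun x => f x - _, integral_sub hf.to_average (integrable_const _),
      integral_const, probReal_univ, one_smul, average]
  rw [houter]
  exact (enorm_integral_le_lintegral_enorm _).trans
    (lintegral_mono fun x => enorm_integral_le_lintegral_enorm _)

lemma laverage_const_add_mul {μ : Measure α} [IsFiniteMeasure μ] [NeZero μ] (a : ℝ≥0∞) {c : ℝ≥0∞}
    (hc : c ≠ ∞) (f : α → ℝ≥0∞) : ⨍⁻ x, (a + c * f x) ∂μ = a + c * ⨍⁻ x, f x ∂μ := by
  simp only [laverage, lintegral_add_left measurable_const, lintegral_const, measure_univ, mul_one,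
    lintegral_const_mul' _ _ hc]

lemma laverage_laverage_le_const_add_mul {μ : Measure α} {ν : Measure β} [IsFiniteMeasure μ]
    [NeZero μ] [IsFiniteMeasure ν] [NeZero ν] {a c : ℝ≥0∞} (hc : c ≠ ∞) {f k : α → β → ℝ≥0∞}
    (h : ∀ᵐ x ∂μ, ∀ᵐ y ∂ν, f x y ≤ a + c * k x y) :
    ⨍⁻ x, ⨍⁻ y, f x y ∂ν ∂μ ≤ a + c * ⨍⁻ x, ⨍⁻ y, k x y ∂ν ∂μ := by
  rw [← laverage_const_add_mul a hc]
  refine laverage_mono_ae (h.mono fun x hx => ?_)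
  exact (laverage_mono_ae hx).trans_eq (laverage_const_add_mul a hc _)

lemma setLAverage_setLAverage_eq {μ : Measure α} {ν : Measure β} {s : Set α} {t : Set β}
    (ht0 : ν t ≠ 0) (ht : ν t ≠ ∞) (f : α → β → ℝ≥0∞) :
    ⨍⁻ x in s, ⨍⁻ y in t, f x y ∂ν ∂μ =
      (∫⁻ x in s, ∫⁻ y in t, f x y ∂ν ∂μ) / (μ s * ν t) := by
  simp_rw [setLAverage_eq, div_eq_mul_inv]
  rw [lintegral_mul_const' _ _ (ENNReal.inv_ne_top.2 ht0), mul_assoc,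
    ENNReal.mul_inv (Or.inr ht) (Or.inr ht0), mul_comm (ν t)⁻¹]

end Averages

/-! ### Extension from a dense subset -/

lemma exists_extension_of_dist_le {X Y : Type*} [PseudoMetricSpace X] [MetricSpace Y]
    [CompleteSpace Y] {s : Set X} (hs : Dense s) {f : X → Y} {ω : ℝ → ℝ}
    (hω : ContinuousOn ω (Ici 0)) (hω0 : ω 0 = 0)
    (hf : ∀ x ∈ s, ∀ y ∈ s, dist (f x) (f y) ≤ ω (dist x y)) :
    ∃ g : X → Y, EqOn g f s ∧ ∀ x y, dist (g x) (g y) ≤ ω (dist x y) := by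
  have hunif : UniformContinuous (s.domRestrict f) := by
    refine Metric.uniformContinuous_iff.2 fun ε hε => ?_
    obtain ⟨δ, hδ, hωδ⟩ := Metric.continuousWithinAt_iff.1 (hω 0 self_mem_Ici) ε hε
    refine ⟨δ, hδ, fun {x y} hxy => (hf x x.2 y y.2).trans_lt ?_⟩
    have hdist : dist (dist x.1 y.1) 0 < δ := by
      rwa [dist_zero_right, Real.norm_of_nonneg dist_nonneg]
    have hω_lt : dist (ω (dist x.1 y.1)) (ω 0) < ε := hωδ (mem_Ici.2 dist_nonneg) hdist
    rw [hω0, Real.dist_0_eq_abs] at hω_lt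
    exact (le_abs_self _).trans_lt hω_lt
  set g := hs.extend (s.domRestrict f)
  have hg : Continuous g := (hs.uniformContinuous_extend hunif).continuous
  have hgf : EqOn g f s := fun x hx => hs.extend_eq hunif.continuous ⟨x, hx⟩
  have hωdist : Continuous fun z : X × X => ω (dist z.1 z.2) :=
    hω.comp_continuous continuous_dist fun _ => dist_nonneg
  have hclosed : IsClosed {z : X × X | dist (g z.1) (g z.2) ≤ ω (dist z.1 z.2)} :=
    isClosed_le (by fun_prop) hωdist
  have hprod : s ×ˢ s ⊆ {z : X × X | dist (g z.1) (g z.2) ≤ ω (dist z.1 z.2)} := by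
    rintro ⟨x, y⟩ ⟨hx, hy⟩
    simpa only [mem_ofPred_eq, hgf hx, hgf hy] using hf x hx y hy
  exact ⟨g, hgf, fun x y => hclosed.closure_subset_iff.2 hprod ((hs.prod hs) (x, y))⟩

/-! ### Oscillation of averages -/

section Oscillation

variable {n : ℕ} {β lam : ℝ} {φ : ℝ → ℝ}

local notation "𝔼" => EuclideanSpace ℝ (Fin n)

lemma IsYoung.abs_sub_le_of_dist_le {X : Type*} [MetricSpace X] (hφ : IsYoung φ) (w : X → ℝ)
    {γ a D : ℝ} (hγ : 0 ≤ γ) (hlam : 0 < lam) (ha : 0 < a) {p q : X} (hD : dist p q ≤ D) :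
    |w p - w q| ≤
      lam * a + lam * (a / φ a) * D ^ γ * (φ (|w p - w q| / lam) / dist p q ^ γ) := by
  have hφa : 0 < φ a := hφ.pos ha
  rcases eq_or_ne p q with rfl | hpq
  · simp only [sub_self, abs_zero, zero_div, hφ.map_zero, mul_zero, add_zero]
    positivity
  have hd : 0 < dist p q ^ γ := Real.rpow_pos_of_pos (dist_pos.2 hpq) γ
  set t := |w p - w q| / lam
  have ht0 : 0 ≤ t := by positivity
  have hφt : φ t ≤ D ^ γ * (φ t / dist p q ^ γ) := by
    rw [mul_div_left_comm]
    exact le_mul_of_one_le_right (hφ.nonneg ht0)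
      ((one_le_div hd).2 (Real.rpow_le_rpow dist_nonneg hD hγ))
  calc |w p - w q| = lam * t := (mul_div_cancel₀ _ hlam.ne').symm
    _ ≤ lam * (a + a / φ a * φ t) := by gcongr; exact hφ.le_add_mul_map ha ht0
    _ ≤ lam * (a + a / φ a * (D ^ γ * (φ t / dist p q ^ γ))) := by gcongr
    _ = lam * a + lam * (a / φ a) * D ^ γ * (φ t / dist p q ^ γ) := by ring

lemma IsYoung.enorm_sub_le_of_dist_le {X : Type*} [MetricSpace X] (hφ : IsYoung φ) (w : X → ℝ)
    {γ a D : ℝ} (hγ : 0 ≤ γ) (hlam : 0 < lam) (ha : 0 < a) {p q : X} (hD : dist p q ≤ D) :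
    ‖w p - w q‖ₑ ≤ ENNReal.ofReal (lam * a) + ENNReal.ofReal (lam * (a / φ a) * D ^ γ) *
      ENNReal.ofReal (φ (|w p - w q| / lam) / dist p q ^ γ) := by
  have hφa : 0 < φ a := hφ.pos ha
  have hD0 : 0 ≤ D := dist_nonneg.trans hD
  have hφw : 0 ≤ φ (|w p - w q| / lam) := hφ.nonneg (by positivity)
  rw [Real.enorm_eq_ofReal_abs, ← ENNReal.ofReal_mul (by positivity),
    ← ENNReal.ofReal_add (by positivity) (by positivity)]
  exact ENNReal.ofReal_le_ofReal (hφ.abs_sub_le_of_dist_le w hγ hlam ha hD)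

lemma setLAverage_fracIntegrand_le {Ω A B : Set 𝔼} {w : 𝔼 → ℝ}
    (hw : fracIntegral n β φ Ω w lam ≤ 1) (hAΩ : A ⊆ Ω) (hBΩ : B ⊆ Ω)
    (hA : 0 < volume.real A) (hB : 0 < volume.real B) :
    ⨍⁻ p in A, ⨍⁻ q in B, ENNReal.ofReal (φ (|w p - w q| / lam) / dist p q ^ ((n : ℝ) + β))
        ∂volume ∂volume ≤ ENNReal.ofReal (volume.real A * volume.real B)⁻¹ := by
  have hA' := (ENNReal.toReal_pos_iff.1 hA).2.ne
  have hB' := ENNReal.toReal_pos_iff.1 hB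
  rw [setLAverage_setLAverage_eq hB'.1.ne' hB'.2.ne, ENNReal.ofReal_inv_of_pos (mul_pos hA hB),
    ENNReal.ofReal_mul hA.le, ofReal_measureReal hA', ofReal_measureReal hB'.2.ne, ← one_div]
  gcongr
  exact ((lintegral_mono fun _ => lintegral_mono_set hBΩ).trans (lintegral_mono_set hAΩ)).trans hw

lemma IsYoung.abs_setAverage_sub_le (hφ : IsYoung φ) (hβ : 0 ≤ (n : ℝ) + β) (hlam : 0 < lam)
    {Ω A B : Set 𝔼} {w : 𝔼 → ℝ} (hw : fracIntegral n β φ Ω w lam ≤ 1)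
    (hA : MeasurableSet A) (hB : MeasurableSet B) (hAΩ : A ⊆ Ω) (hBΩ : B ⊆ Ω)
    (hwA : IntegrableOn w A) (hwB : IntegrableOn w B)
    (hA0 : 0 < volume.real A) (hB0 : 0 < volume.real B)
    {D : ℝ} (hD0 : 0 < D) (hD : ∀ p ∈ A, ∀ q ∈ B, dist p q ≤ D) :
    |(⨍ p in A, w p) - ⨍ q in B, w q| ≤
      2 * lam * yInv φ (D ^ ((n : ℝ) + β) / (volume.real A * volume.real B)) := by
  set m := volume.real A * volume.real B
  have hm : 0 < m := mul_pos hA0 hB0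
  have hy : 0 < D ^ ((n : ℝ) + β) / m := by positivity
  -- `φ a` bounds the mean of `φ (|w p - w q| / lam)` over `A × B`.
  set a := yInv φ (D ^ ((n : ℝ) + β) / m)
  have ha : 0 < a := hφ.yInv_pos hy
  have hcoef : lam * (a / φ a) * D ^ ((n : ℝ) + β) = lam * a * m := by
    rw [hφ.map_yInv hy.le]
    field_simp
  have hpt (p) (hp : p ∈ A) (q) (hq : q ∈ B) :=
    hcoef ▸ hφ.enorm_sub_le_of_dist_le w hβ hlam ha (hD p hp q hq)
  have hA' := ENNReal.toReal_pos_iff.1 hA0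
  have hB' := ENNReal.toReal_pos_iff.1 hB0
  have : Fact (volume A < ∞) := ⟨hA'.2⟩
  have : Fact (volume B < ∞) := ⟨hB'.2⟩
  have : NeZero (volume.restrict A) := ⟨by simpa using hA'.1.ne'⟩
  have : NeZero (volume.restrict B) := ⟨by simpa using hB'.1.ne'⟩
  have hosc := (enorm_average_sub_average_le hwA hwB).trans <|
    laverage_laverage_le_const_add_mul ENNReal.ofReal_ne_top <|
      ae_restrict_of_forall_mem hA fun p hp => ae_restrict_of_forall_mem hB (hpt p hp)
  rw [Real.enorm_eq_ofReal_abs] at hosc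
  refine (ENNReal.ofReal_le_ofReal_iff (by positivity)).1 (hosc.trans ?_)
  calc ENNReal.ofReal (lam * a) + ENNReal.ofReal (lam * a * m) * _
      ≤ ENNReal.ofReal (lam * a) + ENNReal.ofReal (lam * a * m) * ENNReal.ofReal m⁻¹ := by
        gcongr
        exact setLAverage_fracIntegrand_le hw hAΩ hBΩ hA0 hB0
    _ = ENNReal.ofReal (2 * lam * a) := by
        rw [← ENNReal.ofReal_mul (by positivity), mul_inv_cancel_right₀ hm.ne',
          ← ENNReal.ofReal_add (by positivity) (by positivity)]
        congr 1
        ring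

lemma volume_real_closedBall_pos (x : 𝔼) {r : ℝ} (hr : 0 < r) :
    0 < volume.real (closedBall x r) :=
  ENNReal.toReal_pos (measure_closedBall_pos _ _ hr).ne' measure_closedBall_lt_top.ne

lemma pow_mul_volume_real_unitBall_le (x : 𝔼) {R r : ℝ} (hR : 0 ≤ R) (hr : R ≤ r) :
    R ^ n * volume.real (closedBall (0 : 𝔼) 1) ≤ volume.real (closedBall x r) := by
  rw [Measure.addHaar_real_closedBall' volume x (hR.trans hr), finrank_euclideanSpace_fin]
  gcongr

lemma rpow_div_volume_real_closedBall_le {M R r s : ℝ} (hM : 0 < M) (hR : 0 < R) (hr : R ≤ r)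
    (hs : R ≤ s) (x y : 𝔼) :
    (M * R) ^ ((n : ℝ) + β) / (volume.real (closedBall x r) * volume.real (closedBall y s)) ≤
      M ^ ((n : ℝ) + β) / volume.real (closedBall (0 : 𝔼) 1) ^ 2 * R ^ (β - n) := by
  set ω := volume.real (closedBall (0 : 𝔼) 1)
  have hω : 0 < ω := volume_real_closedBall_pos 0 one_pos
  have hpow : R ^ ((n : ℝ) + β) = R ^ n * R ^ n * R ^ (β - n) := by
    rw [← Real.rpow_natCast R n, ← Real.rpow_add hR, ← Real.rpow_add hR]
    congr 1
    ring
  calc (M * R) ^ ((n : ℝ) + β) / (volume.real (closedBall x r) * volume.real (closedBall y s))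
      ≤ (M * R) ^ ((n : ℝ) + β) / (R ^ n * ω * (R ^ n * ω)) := by
        gcongr
        exacts [pow_mul_volume_real_unitBall_le x hR.le hr,
          pow_mul_volume_real_unitBall_le y hR.le hs]
    _ = M ^ ((n : ℝ) + β) / ω ^ 2 * R ^ (β - n) := by
        rw [Real.mul_rpow hM.le hR.le, hpow]
        field_simp

lemma IsYoung.exists_abs_closedBall_average_sub_le (hφ : IsYoung φ) (hβ : 0 ≤ (n : ℝ) + β) {M : ℝ}
    (hM : 0 < M) : ∃ C > 0, ∀ {lam : ℝ} {Ω : Set 𝔼} {w : 𝔼 → ℝ}, 0 < lam →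
      fracIntegral n β φ Ω w lam ≤ 1 → LocallyIntegrableOn w Ω → ∀ {x y : 𝔼} {R r s : ℝ},
      0 < R → R ≤ r → R ≤ s → r + dist x y + s ≤ M * R →
      closedBall x r ⊆ Ω → closedBall y s ⊆ Ω →
        |(⨍ p in closedBall x r, w p) - ⨍ q in closedBall y s, w q| ≤
          C * lam * yInv φ (R ^ (β - n)) := by
  set c := max 1 (M ^ ((n : ℝ) + β) / volume.real (closedBall (0 : 𝔼) 1) ^ 2)
  refine ⟨2 * c, by positivity, fun {lam Ω w} hlam hw hwΩ {x y R r s} hR hr hs hM' hx hy => ?_⟩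
  have hint (z : 𝔼) (t : ℝ) (hz : closedBall z t ⊆ Ω) : IntegrableOn w (closedBall z t) :=
    hwΩ.integrableOn_compact_subset hz (isCompact_closedBall z t)
  have hdist (p) (hp : p ∈ closedBall x r) (q) (hq : q ∈ closedBall y s) : dist p q ≤ M * R := by
    linarith [dist_triangle4 p x y q, mem_closedBall.1 hp, mem_closedBall'.1 hq]
  have hosc := hφ.abs_setAverage_sub_le hβ hlam hw measurableSet_closedBall
    measurableSet_closedBall hx hy (hint x r hx) (hint y s hy)
    (volume_real_closedBall_pos x (hR.trans_le hr)) (volume_real_closedBall_pos y (hR.trans_le hs))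
    (mul_pos hM hR) hdist
  have hvol := rpow_div_volume_real_closedBall_le (β := β) hM hR hr hs x y
  have hRβ : 0 ≤ R ^ (β - n) := by positivity
  calc |(⨍ p in closedBall x r, w p) - ⨍ q in closedBall y s, w q|
      ≤ 2 * lam * yInv φ (c * R ^ (β - n)) := by
        refine hosc.trans ?_
        gcongr
        refine hφ.yInv_le_yInv (by positivity) (hvol.trans ?_)
        gcongr
        exact le_max_right _ _
    _ ≤ 2 * lam * (c * yInv φ (R ^ (β - n))) := by
        gcongr
        exact hφ.yInv_mul_le (le_max_left _ _) hRβ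
    _ = 2 * c * lam * yInv φ (R ^ (β - n)) := by ring

lemma IsYoung.exists_abs_closedBall_average_sub_apply_le (hφ : IsYoung φ) {K : ℝ}
    (hK : IsDoubling φ K) (hβ : (n : ℝ) < β) :
    ∃ C > 0, ∀ {lam : ℝ} {Ω : Set 𝔼} {w : 𝔼 → ℝ}, 0 < lam → fracIntegral n β φ Ω w lam ≤ 1 →
      LocallyIntegrableOn w Ω → ∀ {x : 𝔼} {r : ℝ},
      Tendsto (fun t => ⨍ p in closedBall x t, w p) (𝓝[>] 0) (𝓝 (w x)) → 0 < r →
      closedBall x r ⊆ Ω →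
        |(⨍ p in closedBall x r, w p) - w x| ≤ C * lam * yInv φ (r ^ (β - n)) := by
  obtain ⟨ρ, ⟨hρ0, hρ1⟩, hdecay⟩ := hφ.exists_yInv_rpow_decay hK (sub_pos.2 hβ)
  have hβ0 : 0 ≤ (n : ℝ) + β := add_nonneg n.cast_nonneg (n.cast_nonneg.trans hβ.le)
  obtain ⟨C, hC, hosc⟩ :=
    hφ.exists_abs_closedBall_average_sub_le hβ0 (show 0 < 1 / ρ + 1 by positivity)
  refine ⟨2 * C, by positivity, fun {lam Ω w} hlam hw hwΩ {x r} hlim hr hx => ?_⟩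
  have hrk (k : ℕ) : 0 < r * ρ ^ k := by positivity
  have hanti (k : ℕ) : r * ρ ^ (k + 1) ≤ r * ρ ^ k :=
    mul_le_mul_of_nonneg_left (pow_le_pow_of_le_one hρ0.le hρ1.le k.le_succ) hr.le
  have hball (k : ℕ) : closedBall x (r * ρ ^ k) ⊆ Ω :=
    (closedBall_subset_closedBall (mul_le_of_le_one_right hr.le (pow_le_one₀ hρ0.le hρ1.le))).trans
      hx
  have hsum (k : ℕ) : r * ρ ^ k + dist x x + r * ρ ^ (k + 1) ≤ (1 / ρ + 1) * (r * ρ ^ (k + 1)) := by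
    rw [dist_self, pow_succ]
    exact le_of_eq (by field_simp; ring)
  have hstep (k : ℕ) : dist (⨍ p in closedBall x (r * ρ ^ k), w p)
      (⨍ p in closedBall x (r * ρ ^ (k + 1)), w p) ≤
        2 * C * lam * yInv φ (r ^ (β - n)) / 2 / 2 ^ k :=
    calc _ ≤ C * lam * yInv φ ((r * ρ ^ (k + 1)) ^ (β - n)) :=
          hosc hlam hw hwΩ (hrk (k + 1)) (hanti k) le_rfl (hsum k) (hball k) (hball (k + 1))
      _ ≤ C * lam * yInv φ ((r * ρ ^ k) ^ (β - n)) := by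
          gcongr
          exact hφ.yInv_le_yInv (by positivity)
            (Real.rpow_le_rpow (hrk (k + 1)).le (hanti k) (sub_pos.2 hβ).le)
      _ ≤ C * lam * (yInv φ (r ^ (β - n)) / 2 ^ k) := by gcongr; exact hdecay r hr k
      _ = 2 * C * lam * yInv φ (r ^ (β - n)) / 2 / 2 ^ k := by ring
  have hradii : Tendsto (fun k : ℕ => r * ρ ^ k) atTop (𝓝[>] 0) :=
    tendsto_nhdsWithin_iff.2 ⟨by
      simpa only [mul_zero] using (tendsto_pow_atTop_nhds_zero_of_lt_one hρ0.le hρ1).const_mul r,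
      Eventually.of_forall hrk⟩
  have hbound := dist_le_of_le_geometric_two_of_tendsto₀ hstep (hlim.comp hradii)
  simpa only [Function.comp_apply, pow_zero, mul_one, Real.dist_eq] using hbound

lemma IsYoung.exists_abs_sub_le_of_tendsto_average (hφ : IsYoung φ) {K : ℝ} (hK : IsDoubling φ K)
    (hβ : (n : ℝ) < β) :
    ∃ C > 0, ∀ {lam : ℝ} {w : 𝔼 → ℝ}, 0 < lam → fracIntegral n β φ univ w lam ≤ 1 →
      LocallyIntegrable w → ∀ {x y : 𝔼},
      Tendsto (fun t => ⨍ p in closedBall x t, w p) (𝓝[>] 0) (𝓝 (w x)) →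
      Tendsto (fun t => ⨍ p in closedBall y t, w p) (𝓝[>] 0) (𝓝 (w y)) →
        |w x - w y| ≤ C * yInv φ (dist x y ^ (β - n)) * lam := by
  have hβ0 : 0 ≤ (n : ℝ) + β := add_nonneg n.cast_nonneg (n.cast_nonneg.trans hβ.le)
  obtain ⟨C₁, hC₁, hballs⟩ := hφ.exists_abs_closedBall_average_sub_le hβ0 (show (0 : ℝ) < 3 by simp)
  obtain ⟨C₂, hC₂, hpoint⟩ := hφ.exists_abs_closedBall_average_sub_apply_le hK hβ
  refine ⟨C₁ + 2 * C₂, by positivity, fun {lam w} hlam hw hwloc {x y} hx hy => ?_⟩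
  have hwloc' := hwloc.locallyIntegrableOn univ
  rcases eq_or_ne x y with rfl | hxy
  · rw [sub_self, abs_zero]
    exact mul_nonneg (mul_nonneg (by positivity) (yInv_nonneg _ _)) hlam.le
  have hd : 0 < dist x y := dist_pos.2 hxy
  have hxd := hpoint hlam hw hwloc' hx hd (subset_univ _)
  have hyd := hpoint hlam hw hwloc' hy hd (subset_univ _)
  have hxyd := hballs hlam hw hwloc' (x := x) (y := y) hd le_rfl le_rfl (by linarith)
    (subset_univ _) (subset_univ _)
  rw [← Real.dist_eq] at hxd hyd hxyd ⊢
  rw [dist_comm] at hxd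
  linarith [dist_triangle4 (w x) (⨍ p in closedBall x (dist x y), w p)
    (⨍ p in closedBall y (dist x y), w p) (w y)]

lemma exists_fracIntegral_le_one_of_fracNorm_lt {Ω : Set 𝔼} {w : 𝔼 → ℝ} {c : ℝ≥0∞}
    (h : fracNorm n β φ Ω w < c) :
    ∃ lam > 0, ENNReal.ofReal lam < c ∧ fracIntegral n β φ Ω w lam ≤ 1 := by
  obtain ⟨l, ⟨hl0, hl, hlw⟩, hlc⟩ := sInf_lt_iff.1 h
  exact ⟨l.toReal, ENNReal.toReal_pos hl0.ne' hl, (ENNReal.ofReal_toReal hl).trans_lt hlc, hlw⟩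

lemma le_mul_toReal_fracNorm {Ω : Set 𝔼} {w : 𝔼 → ℝ} (hw : fracNorm n β φ Ω w ≠ ∞) {a b : ℝ}
    (hb : 0 ≤ b) (h : ∀ lam > 0, fracIntegral n β φ Ω w lam ≤ 1 → a ≤ b * lam) :
    a ≤ b * (fracNorm n β φ Ω w).toReal := by
  have hlim : Tendsto (fun c => b * c) (𝓝[>] (fracNorm n β φ Ω w).toReal)
      (𝓝 (b * (fracNorm n β φ Ω w).toReal)) :=
    (tendsto_id.mono_left nhdsWithin_le_nhds).const_mul b
  refine ge_of_tendsto hlim (eventually_mem_nhdsWithin.mono fun c hc => ?_)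
  obtain ⟨lam, hlam, hlamc, hI⟩ :=
    exists_fracIntegral_le_one_of_fracNorm_lt ((ENNReal.lt_ofReal_iff_toReal_lt hw).2 hc)
  exact (h lam hlam hI).trans (by gcongr; exact ((ENNReal.ofReal_lt_ofReal_iff').1 hlamc).1.le)

lemma IsYoung.exists_ae_eq_abs_sub_le (hφ : IsYoung φ) {K : ℝ} (hK : IsDoubling φ K)
    (hβ : (n : ℝ) < β) :
    ∃ C > 0, ∀ w : 𝔼 → ℝ, MemW n β φ univ w → ∃ v : 𝔼 → ℝ, v =ᵐ[volume] w ∧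
      ∀ x y, |v x - v y| ≤
        C * yInv φ (dist x y ^ (β - n)) * (fracNorm n β φ univ w).toReal := by
  obtain ⟨C, hC, hosc⟩ := hφ.exists_abs_sub_le_of_tendsto_average hK hβ
  refine ⟨C, hC, fun w ⟨hwloc, hw⟩ => ?_⟩
  rw [locallyIntegrableOn_univ] at hwloc
  have hleb : ∀ᵐ x, Tendsto (fun t => ⨍ p in closedBall x t, w p) (𝓝[>] 0) (𝓝 (w x)) := by
    filter_upwards [IsUnifLocDoublingMeasure.ae_tendsto_average volume hwloc 1] with x hx
    refine hx (fun _ => x) id tendsto_id (eventually_mem_nhdsWithin.mono fun t ht => ?_)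
    exact mem_closedBall_self (by simpa using ht.le)
  have hβn : 0 < β - n := sub_pos.2 hβ
  have hω : ContinuousOn
      (fun t : ℝ => C * yInv φ (t ^ (β - n)) * (fracNorm n β φ univ w).toReal) (Ici 0) :=
    ((hφ.continuousOn_yInv.comp (Real.continuous_rpow_const hβn.le).continuousOn
      fun t ht => Real.rpow_nonneg ht _).const_mul C).mul_const _
  obtain ⟨v, hvw, hv⟩ := exists_extension_of_dist_le (f := w) (Measure.dense_of_ae hleb) hω
    (by simp only [Real.zero_rpow hβn.ne', hφ.yInv_zero, mul_zero, zero_mul])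
    fun x hx y hy => le_mul_toReal_fracNorm hw (mul_nonneg hC.le (yInv_nonneg _ _))
      fun lam hlam hI => hosc hlam hI hwloc hx hy
  exact ⟨v, hleb.mono hvw, hv⟩

end Oscillation

theorem extension_implies_imbedding_high_general {n : ℕ} {β : ℝ} (hβ : (n : ℝ) < β) {φ : ℝ → ℝ}
    (hφ : IsYoung φ) (hdbl : ∃ K : ℝ, IsDoubling φ K) {Ω : Set (EuclideanSpace ℝ (Fin n))}
    (hE : IsExtensionDomain n β φ Ω) :
    ∃ C > (0 : ℝ), ∀ u : EuclideanSpace ℝ (Fin n) → ℝ, MemW n β φ Ω u →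
      ∃ v : EuclideanSpace ℝ (Fin n) → ℝ,
        (∀ᵐ x ∂(volume.restrict Ω), v x = u x) ∧
        ∀ x y, |v x - v y| ≤
          C * yInv φ (dist x y ^ (β - (n : ℝ))) * (fracNorm n β φ Ω u).toReal := by
  obtain ⟨K, hK⟩ := hdbl
  obtain ⟨C, hC, himb⟩ := hφ.exists_ae_eq_abs_sub_le hK hβ
  obtain ⟨C', hC', E, -, -, hE⟩ := hE
  refine ⟨C * C', by positivity, fun u hu => ?_⟩
  obtain ⟨hEu, hEu_eq, hEu_le⟩ := hE u hu
  obtain ⟨v, hv_eq, hv⟩ := himb (E u) hEu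
  have hnorm : (fracNorm n β φ univ (E u)).toReal ≤ C' * (fracNorm n β φ Ω u).toReal := by
    simpa only [ENNReal.toReal_mul, ENNReal.toReal_ofReal hC'.le] using
      ENNReal.toReal_mono (ENNReal.mul_ne_top ENNReal.ofReal_ne_top hu.2) hEu_le
  refine ⟨v, EventuallyEq.trans (ae_restrict_of_ae hv_eq) hEu_eq, fun x y => ?_⟩
  have hY := yInv_nonneg φ (dist x y ^ (β - (n : ℝ)))
  calc |v x - v y| ≤ C * yInv φ (dist x y ^ (β - n)) * (fracNorm n β φ univ (E u)).toReal := hv x y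
    _ ≤ C * yInv φ (dist x y ^ (β - n)) * (C' * (fracNorm n β φ Ω u).toReal) := by gcongr
    _ = C * C' * yInv φ (dist x y ^ (β - n)) * (fracNorm n β φ Ω u).toReal := by ring

/-- extension domains satisfy the Hölder-type imbedding, `β > n`. -/
theorem extension_implies_imbedding_high
    (n : ℕ) (hn : 1 ≤ n) (β : ℝ) (hβ : (n : ℝ) < β)
    (φ : ℝ → ℝ) (hφ : IsYoung φ) (hdbl : ∃ K : ℝ, IsDoubling φ K)
    (hCβ : CbetaFinite β φ)
    (Ω : Set (EuclideanSpace ℝ (Fin n))) (hΩopen : IsOpen Ω) (hΩconn : IsConnected Ω)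
    (hE : IsExtensionDomain n β φ Ω) :
    ∃ C > (0 : ℝ), ∀ u : EuclideanSpace ℝ (Fin n) → ℝ, MemW n β φ Ω u →
      ∃ v : EuclideanSpace ℝ (Fin n) → ℝ,
        (∀ᵐ x ∂(volume.restrict Ω), v x = u x) ∧
        ∀ x ∈ Ω, ∀ y ∈ Ω,
          |v x - v y| ≤
            C * yInv φ (dist x y ^ (β - (n : ℝ))) * (fracNorm n β φ Ω u).toReal := by
  obtain ⟨C, hC, himb⟩ := extension_implies_imbedding_high_general hβ hφ hdbl hE
  exact ⟨C, hC, fun u hu => (himb u hu).imp fun _ hv => ⟨hv.1, fun x _ y _ => hv.2 x y⟩⟩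
end
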